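/- arXiv:1811.11660 — 9 statements merged into one kernel-verified Lean document; each statement's English description precedes it below -/
import Mathlib

section
/- Let (Q, Σ) be a DFA with n = |Q| satisfying hypothesis (H), and suppose there exists a word w over Σ with |Qw| ≤ n − 3. Then there exists a word w over Σ with |w| ≤ 9 and |Qw| ≤ n − 3. -/
/-- The image of a finite set of states `R` under a word (list of letters),
where each letter `s` acts on states via `act s`. -/
def wordImage {Q A : Type*} [DecidableEq Q] (act : A → Q → Q) (R : Finset Q) :
    List A → Finset Q
  | [] => R
  | s :: w => wordImage act (R.image (act s)) w

section helpers

variable {Q A : Type*} [Fintype Q] [DecidableEq Q] (act : A → Q → Q)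

theorem wordImage_append (R : Finset Q) (w : List A) (s : A) :
    wordImage act R (w ++ [s]) = (wordImage act R w).image (act s) := by
  induction w generalizing R with
  | nil => rfl
  | cons b w ih => exact ih _

/-- State `x` is missing from the image of the word `w`. -/
def Miss (w : List A) (x : Q) : Prop := x ∉ wordImage act Finset.univ w

theorem miss_step {w : List A} {s : A} {y : Q} (h : ∀ z, act s z = y → Miss act w z) :
    Miss act (w ++ [s]) y := by
  unfold Miss at *
  rw [wordImage_append]
  intro hy
  obtain ⟨z, hz, hzy⟩ := Finset.mem_image.1 hy
  exact h z hzy hz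

theorem card_of_miss {w : List A} (M : Finset Q) (h : ∀ x ∈ M, Miss act w x) :
    (wordImage act Finset.univ w).card ≤ Fintype.card Q - M.card := by
  rw [← Finset.card_compl]
  apply Finset.card_le_card
  intro x hx
  rw [Finset.mem_compl]
  exact fun hM => h x hM hx

/-- An invariant of the image, preserved by letters, holds for all words. -/
theorem inv_word (I : Finset Q → Prop) (hs : ∀ R s, I R → I (R.image (act s)))
    (R : Finset Q) (hR : I R) (w : List A) : I (wordImage act R w) := by
  induction w generalizing R with
  | nil => exact hR
  | cons b w ih => exact ih _ (hs _ _ hR)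

/-- `f` misses exactly `x` and collapses exactly the pair `p, q`. -/
structure Defect (f : Q → Q) (x p q : Q) : Prop where
  miss : ∀ z, f z ≠ x
  onto : ∀ y, y ≠ x → ∃ z, f z = y
  ne : p ≠ q
  eq : f p = f q
  inj : ∀ u v, f u = f v → u ≠ v → (u = p ∧ v = q) ∨ (u = q ∧ v = p)

theorem exists_defect (f : Q → Q) (hf : ¬ Function.Injective f)
    (hc : Fintype.card Q - 1 ≤ (Finset.univ.image f).card) : ∃ x p q, Defect f x p q := by
  have hpq : ∃ p q, f p = f q ∧ p ≠ q := by
    simpa [Function.Injective] using hf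
  obtain ⟨p, q, hpq, hne⟩ := hpq
  have himg : ∀ p q, f p = f q → p ≠ q → Finset.univ.image f = (Finset.univ.erase p).image f := by
    intro p q hpq hne
    ext y
    simp only [Finset.mem_image, Finset.mem_univ, true_and, Finset.mem_erase, and_true]
    constructor
    · rintro ⟨z, rfl⟩
      by_cases hz : z = p
      · exact ⟨q, hne.symm, by rw [hz, hpq]⟩
      · exact ⟨z, hz, rfl⟩
    · rintro ⟨z, _, rfl⟩
      exact ⟨z, rfl⟩
  have hinj : ∀ p q, f p = f q → p ≠ q → ∀ u v, u ≠ p → v ≠ p → f u = f v → u = v := by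
    intro p q hpq hne u v hu hv huv
    have h1 : ((Finset.univ.erase p).image f).card = (Finset.univ.erase p).card := by
      apply le_antisymm Finset.card_image_le
      rw [← himg p q hpq hne, Finset.card_erase_of_mem (Finset.mem_univ _), Finset.card_univ]
      exact hc
    have h2 := Finset.card_image_iff.1 h1
    exact h2 (by simp [hu]) (by simp [hv]) huv
  have hx : ∃ x, ∀ z, f z ≠ x := by
    by_contra hcon
    push Not at hcon
    exact hf (Finite.injective_iff_surjective.2 hcon)
  obtain ⟨x, hx⟩ := hx
  refine ⟨x, p, q, hx, ?_, hne, hpq, ?_⟩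
  · intro y hy
    by_contra hcon
    push Not at hcon
    have h1 : (Finset.univ.image f).card ≤ (({x, y} : Finset Q)ᶜ).card := by
      apply Finset.card_le_card
      intro z hz
      obtain ⟨u, _, rfl⟩ := Finset.mem_image.1 hz
      simp [hx u, hcon u]
    rw [Finset.card_compl, Finset.card_pair (Ne.symm hy)] at h1
    have h2 : 2 ≤ Fintype.card Q := by
      rw [← Finset.card_pair hne]; exact Finset.card_le_univ _
    omega
  · intro u v huv huvne
    have h1 := hinj p q hpq hne u v
    have h2 := hinj q p hpq.symm hne.symm u v
    by_cases a1 : u = p <;> by_cases a2 : v = p <;> by_cases a3 : u = q <;>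
      by_cases a4 : v = q <;> simp_all

/-- If all letters preserve `S` and permute its complement, then few states get lost. -/
theorem stuck (S : Finset Q) (hS : S.Nonempty) (h1 : ∀ s, ∀ z ∈ S, act s z ∈ S)
    (h2 : ∀ s, ∀ z, z ∉ S → act s z ∉ S)
    (h3 : ∀ s, ∀ u v, u ∉ S → v ∉ S → act s u = act s v → u = v) (w : List A) :
    Fintype.card Q - S.card + 1 ≤ (wordImage act Finset.univ w).card := by
  have hI : Sᶜ ⊆ wordImage act Finset.univ w ∧ ∃ z ∈ S, z ∈ wordImage act Finset.univ w := by
    apply inv_word act (fun R => Sᶜ ⊆ R ∧ ∃ z ∈ S, z ∈ R)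
    · rintro R s ⟨hR, z, hz, hzR⟩
      refine ⟨?_, act s z, h1 s z hz, Finset.mem_image_of_mem _ hzR⟩
      have hsub : Sᶜ.image (act s) ⊆ Sᶜ := by
        intro y hy
        obtain ⟨u, hu, rfl⟩ := Finset.mem_image.1 hy
        exact Finset.mem_compl.2 (h2 s u (Finset.mem_compl.1 hu))
      have hcard : (Sᶜ.image (act s)).card = Sᶜ.card := by
        apply Finset.card_image_of_injOn
        intro u hu v hv huv
        exact h3 s u v (by simpa using hu) (by simpa using hv) huv
      have := Finset.eq_of_subset_of_card_le hsub hcard.ge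
      rw [← this]
      exact Finset.image_subset_image hR
    · obtain ⟨z, hz⟩ := hS
      exact ⟨Finset.subset_univ _, z, hz, Finset.mem_univ _⟩
  obtain ⟨hsub, z, hz, hzR⟩ := hI
  have : (insert z Sᶜ).card ≤ (wordImage act Finset.univ w).card :=
    Finset.card_le_card (Finset.insert_subset hzR hsub)
  rw [Finset.card_insert_of_notMem (by simpa using hz), Finset.card_compl] at this
  exact this

/-- If the missing state always stays in `M`, the rank does not drop below `n - 1`. -/
theorem stuck_one (M : Q → Prop)
    (hperm : ∀ s, Function.Injective (act s) → ∀ x, M x → M (act s x))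
    (hdef : ∀ s, ¬ Function.Injective (act s) → ∃ x p q, Defect (act s) x p q ∧ M x ∧
      ∀ y, M y → y = p ∨ y = q) (w : List A) :
    Fintype.card Q - 1 ≤ (wordImage act Finset.univ w).card := by
  have hI : (∀ z, z ∈ wordImage act Finset.univ w) ∨
      ∃ x, M x ∧ ∀ z, z ≠ x → z ∈ wordImage act Finset.univ w := by
    apply inv_word act (fun R => (∀ z, z ∈ R) ∨ ∃ x, M x ∧ ∀ z, z ≠ x → z ∈ R)
    · intro R s hR
      simp only [Finset.mem_image]
      by_cases hs : Function.Injective (act s)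
      · have hsur := Finite.injective_iff_surjective.1 hs
        rcases hR with hR | ⟨x, hx, hR⟩
        · left
          intro z
          obtain ⟨u, hu⟩ := hsur z
          exact ⟨u, hR u, hu⟩
        · right
          refine ⟨act s x, hperm s hs x hx, ?_⟩
          intro z hz
          obtain ⟨u, hu⟩ := hsur z
          refine ⟨u, hR u ?_, hu⟩
          rintro rfl
          exact hz hu.symm
      · obtain ⟨x, p, q, hd, hx, hM⟩ := hdef s hs
        right
        refine ⟨x, hx, ?_⟩
        intro z hz
        obtain ⟨u, hu⟩ := hd.onto z hz
        rcases hR with hR | ⟨y, hy, hR⟩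
        · exact ⟨u, hR u, hu⟩
        · by_cases huy : u = y
          · rcases hM y hy with h | h
            · exact ⟨q, hR q (by rw [h]; exact hd.ne.symm), by rw [← hd.eq, ← h, ← huy, hu]⟩
            · exact ⟨p, hR p (by rw [h]; exact hd.ne), by rw [hd.eq, ← h, ← huy, hu]⟩
          · exact ⟨u, hR u huy, hu⟩
    · left; simp
  rcases hI with h | ⟨x, -, h⟩
  · have : wordImage act Finset.univ w = Finset.univ := Finset.eq_univ_of_forall h
    rw [this, Finset.card_univ]; omega
  · have : (Finset.univ.erase x).card ≤ (wordImage act Finset.univ w).card :=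
      Finset.card_le_card (fun z hz => h z (Finset.mem_erase.1 hz).1)
    rwa [Finset.card_erase_of_mem (Finset.mem_univ _), Finset.card_univ] at this

/-- The structure forced by hypothesis (H). -/
theorem structure_H (h4 : 4 ≤ Fintype.card Q)
    (hH1 : ∃ w : List A, (wordImage act Finset.univ w).card ≤ Fintype.card Q - 2)
    (hH2 : ∀ w : List A, w.length ≤ 3 →
      Fintype.card Q - 2 < (wordImage act Finset.univ w).card) :
    ∃ p q : Q, p ≠ q ∧
      (∀ s, ¬ Function.Injective (act s) → Defect (act s) p p q) ∧
      (∀ s, Function.Injective (act s) → act s p = p ∨ act s p = q) ∧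
      (∃ s, ¬ Function.Injective (act s)) ∧
      (∃ s, Function.Injective (act s) ∧ act s p = q) ∧
      (∃ s, Function.Injective (act s) ∧ act s q ≠ p ∧ act s q ≠ q) := by
  have hno : ∀ w : List A, w.length ≤ 3 → ∀ x y, Miss act w x → Miss act w y → x = y := by
    intro w hw x y hx hy
    by_contra hne
    have h1 := card_of_miss act (w := w) {x, y} (by simp [hx, hy])
    rw [Finset.card_pair hne] at h1
    have := hH2 w hw
    omega
  have hdef : ∀ s, ¬ Function.Injective (act s) → ∃ x p q, Defect (act s) x p q := by
    intro s hs
    apply exists_defect _ hs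
    have h1 := hH2 [s] (by simp)
    have h2 : wordImage act Finset.univ [s] = Finset.univ.image (act s) := rfl
    rw [h2] at h1
    omega
  have hpair : ∀ w : List A, w.length ≤ 2 → ∀ y, Miss act w y → ∀ s x p q,
      Defect (act s) x p q → y = p ∨ y = q := by
    intro w hw y hy s x p q hd
    by_contra hcon
    push Not at hcon
    have h1 : Miss act (w ++ [s]) x := miss_step act (fun z hz => absurd hz (hd.miss z))
    have h2 : Miss act (w ++ [s]) (act s y) := by
      apply miss_step act
      intro z hz
      by_cases hzy : z = y
      · rwa [hzy]
      · rcases hd.inj z y hz hzy with h | h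
        · exact absurd h.2 hcon.2
        · exact absurd h.2 hcon.1
    exact hd.miss y (hno _ (by simp; omega) _ _ h2 h1)
  have hmiss1 : ∀ s x p q, Defect (act s) x p q → Miss act [s] x := by
    intro s x p q hd
    exact miss_step act (w := []) (fun z hz => absurd hz (hd.miss z))
  have hmissP : ∀ (w : List A) y s, Miss act w y → Function.Injective (act s) →
      Miss act (w ++ [s]) (act s y) := by
    intro w y s hy hs
    apply miss_step act
    intro z hz
    rwa [hs hz]
  obtain ⟨w0, hw0⟩ := hH1
  let M : Q → Prop := fun x => ∃ s p q, Defect (act s) x p q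
  have hMpair : ∀ y, M y → ∀ s x p q, Defect (act s) x p q → y = p ∨ y = q := by
    rintro y ⟨s', p', q', hd'⟩
    exact hpair [s'] (by simp) y (hmiss1 _ _ _ _ hd')
  have hMpair2 : ∀ y, M y → ∀ t, Function.Injective (act t) → ∀ s x p q,
      Defect (act s) x p q → act t y = p ∨ act t y = q := by
    rintro y ⟨s', p', q', hd'⟩ t ht
    exact hpair ([s'] ++ [t]) (by simp) _ (hmissP _ _ _ (hmiss1 _ _ _ _ hd') ht)
  have hex : ∃ p t, M p ∧ Function.Injective (act t) ∧ ¬ M (act t p) := by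
    by_contra hcon
    push Not at hcon
    have := stuck_one act M (fun s hs x hx => hcon x s hx hs) (fun s hs => by
      obtain ⟨x, p, q, hd⟩ := hdef s hs
      exact ⟨x, p, q, hd, ⟨s, p, q, hd⟩, fun y hy => hMpair y hy s x p q hd⟩) w0
    omega
  obtain ⟨p, t, hp, ht, hq⟩ := hex
  have hpq : p ≠ act t p := by
    intro h
    rw [← h] at hq
    exact hq hp
  generalize hqd : act t p = q at *
  have hall : ∀ s x u v, Defect (act s) x u v → Defect (act s) p p q := by
    intro s x u v hd
    have h1 := hMpair p hp s x u v hd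
    have h2 := hMpair2 p hp t ht s x u v hd
    rw [hqd] at h2
    have hd' : Defect (act s) x p q := by
      rcases h1 with h1 | h1 <;> rcases h2 with h2 | h2
      · exact absurd (h1.trans h2.symm) hpq
      · rw [h1, h2]; exact hd
      · rw [h1, h2]
        exact ⟨hd.miss, hd.onto, hd.ne.symm, hd.eq.symm,
          fun a b hab hne => (hd.inj a b hab hne).symm⟩
      · exact absurd (h1.trans h2.symm) hpq
    have hMx : M x := ⟨s, p, q, hd'⟩
    rcases hMpair x hMx s x p q hd' with h | h
    · rw [h] at hd'; exact hd'
    · rw [h] at hMx; exact absurd hMx hq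
  have hdef' : ∀ s, ¬ Function.Injective (act s) → Defect (act s) p p q := by
    intro s hs
    obtain ⟨x, u, v, hd⟩ := hdef s hs
    exact hall s x u v hd
  obtain ⟨s0, u0, v0, hd0⟩ := id hp
  have hs0 : ¬ Function.Injective (act s0) := fun h => hd0.ne (h hd0.eq)
  have hP : ∀ s, Function.Injective (act s) → act s p = p ∨ act s p = q :=
    fun s hs => hMpair2 p hp s hs s0 p p q (hdef' s0 hs0)
  refine ⟨p, q, hpq, hdef', hP, ⟨s0, hs0⟩, ⟨t, ht, hqd⟩, ?_⟩
  by_contra hcon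
  push Not at hcon
  have := stuck_one act (fun x => x = p ∨ x = q) (fun s hs x hx => by
      rcases hx with rfl | rfl
      · exact hP s hs
      · by_cases h : act s x = p
        · exact Or.inl h
        · exact Or.inr (hcon s hs h))
    (fun s hs => ⟨p, p, q, hdef' s hs, Or.inl rfl, fun y hy => hy⟩) w0
  omega

/-- Two distinct states `x, y` are missed by a word of length at most `k`. -/
def PairMiss (k : ℕ) (x y : Q) : Prop :=
  ∃ w : List A, w.length ≤ k ∧ x ≠ y ∧ Miss act w x ∧ Miss act w y

/-- The combinatorial core, with `P k p t` standing for: p and t are missed together. -/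
theorem core (h4 : 4 ≤ Fintype.card Q)
    (h3 : ∃ w : List A, (wordImage act Finset.univ w).card ≤ Fintype.card Q - 3)
    (p q : Q) (hpq : p ≠ q)
    (hA : ∀ s, ¬ Function.Injective (act s) → Defect (act s) p p q)
    (hP : ∀ s, Function.Injective (act s) → act s p = p ∨ act s p = q)
    (hexA : ∃ s, ¬ Function.Injective (act s))
    (hexP : ∃ s, Function.Injective (act s) ∧ act s p = q)
    (hexS : ∃ s, Function.Injective (act s) ∧ act s q ≠ p ∧ act s q ≠ q)
    (P : ℕ → Q → Q → Prop)
    (hne : ∀ k x y, P k x y → x ≠ y)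
    (hsymm : ∀ k x y, P k x y → P k y x)
    (hmono : ∀ k x y, P k x y → P (k + 1) x y)
    (hPA : ∀ k x t s, P k x t → (x = p ∨ x = q) → ¬ Function.Injective (act s) →
      P (k + 1) p (act s t))
    (hPP : ∀ k x y s, P k x y → Function.Injective (act s) → P (k + 1) (act s x) (act s y))
    (hwin : ∀ x y, P 8 x y → x = p ∨ x = q ∨ y = p ∨ y = q)
    (hstart : ∀ s a, Function.Injective (act s) → act s q ≠ p → act s q ≠ q →
      ¬ Function.Injective (act a) → P 4 p (act a (act s q)))
    (hstart' : ∀ s r a, Function.Injective (act s) → act s q ≠ p → act s q ≠ q →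
      Function.Injective (act r) → act r (act s q) ≠ p → act r (act s q) ≠ q →
      ¬ Function.Injective (act a) → P 5 p (act a (act r (act s q)))) : False := by
  obtain ⟨a0, ha0⟩ := hexA
  obtain ⟨π, hπ, hπp⟩ := hexP
  obtain ⟨σ, hσ, hσp, hσq⟩ := hexS
  obtain ⟨w3, hw3⟩ := h3
  -- bad elements
  have hbad : ∀ t, P 6 p t → ∀ π' σ', Function.Injective (act π') → act π' p = q →
      Function.Injective (act σ') → act σ' q ≠ p → act σ' q ≠ q →
      act σ' (act π' t) = p ∨ act σ' (act π' t) = q := by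
    intro t ht π' σ' h1 h2 h3 h4 h5
    have h6 := hPP _ _ _ σ' (hPP _ _ _ π' ht h1) h3
    rw [h2] at h6
    rcases hwin _ _ h6 with h | h | h | h
    · exact absurd h h4
    · exact absurd h h5
    · exact Or.inl h
    · exact Or.inr h
  have htwo : ∀ x y z, P 6 p x → P 6 p y → P 6 p z → x = y ∨ x = z ∨ y = z := by
    intro x y z hx hy hz
    have h1 := hbad x hx π σ hπ hπp hσ hσp hσq
    have h2 := hbad y hy π σ hπ hπp hσ hσp hσq
    have h3 := hbad z hz π σ hπ hπp hσ hσp hσq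
    have hi : ∀ u v, act σ (act π u) = act σ (act π v) → u = v := fun u v h => hπ (hσ h)
    rcases h1 with h1 | h1 <;> rcases h2 with h2 | h2 <;> rcases h3 with h3 | h3 <;>
      first
      | exact Or.inl (hi _ _ (h1.trans h2.symm))
      | exact Or.inr (Or.inl (hi _ _ (h1.trans h3.symm)))
      | exact Or.inr (Or.inr (hi _ _ (h2.trans h3.symm)))
  have h45 : ∀ t, P 4 p t → P 5 p t := fun t h => hmono _ _ _ h
  have h56 : ∀ t, P 5 p t → P 6 p t := fun t h => hmono _ _ _ h
  have hclosed : ∀ g : Q → Q, (∀ k t, P k p t → P (k + 1) p (g t)) →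
      ∀ t, P 5 p t → P 5 p (g t) := by
    intro g hg t ht
    by_contra hcon
    have h0 := hstart σ a0 hσ hσp hσq ha0
    have ht4 : ¬ P 4 p t := fun h => hcon (hg _ _ h)
    rcases htwo _ _ _ (h56 _ (h45 _ h0)) (h56 _ ht) (hg _ _ ht) with h | h | h
    · rw [h] at h0; exact ht4 h0
    · rw [← h] at hcon; exact hcon (h45 _ h0)
    · rw [← h] at hcon; exact hcon ht
  have hclA : ∀ a, ¬ Function.Injective (act a) → ∀ t, P 5 p t → P 5 p (act a t) :=
    fun a ha => hclosed _ (fun k t h => hPA k p t a h (Or.inl rfl) ha)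
  have hclF : ∀ f, Function.Injective (act f) → act f p = p → ∀ t, P 5 p t → P 5 p (act f t) := by
    intro f hf hfp
    refine hclosed _ (fun k t h => ?_)
    have := hPP k p t f h hf
    rwa [hfp] at this
  have hT3 : ∀ s, Function.Injective (act s) → act s q ≠ p → act s q ≠ q → P 5 p (act s q) := by
    intro s hs h1 h2
    by_contra hcon
    have hd := hA a0 ha0
    have u5 := h45 _ (hstart s a0 hs h1 h2 ha0)
    have v5 := hclA a0 ha0 _ u5
    have w5 := hclA a0 ha0 _ v5
    have hup := hne _ _ _ u5
    have hvp := hne _ _ _ v5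
    have hi := hd.inj
    rcases htwo _ _ _ (h56 _ u5) (h56 _ v5) (h56 _ w5) with h | h | h
    · have := hi _ _ h; grind
    · have := hi _ _ h; grind
    · have h' := hi _ _ h
      have : act a0 (act s q) = act a0 (act a0 (act s q)) := by grind
      have := hi _ _ this
      grind
  -- the final trap
  have htrap : ∀ r, r ≠ p → r ≠ q →
      (∀ s, Function.Injective (act s) → (act s q = p ∨ act s q = q ∨ act s q = r) ∧
        (act s r = p ∨ act s r = q ∨ act s r = r)) →
      (∀ s, ¬ Function.Injective (act s) → (act s q = q ∨ act s q = r) ∧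
        (act s r = q ∨ act s r = r)) → False := by
    intro r hrp hrq h1 h2
    have hcard : ({p, q, r} : Finset Q).card = 3 := by
      rw [Finset.card_eq_three]
      exact ⟨p, q, r, hpq, hrp.symm, hrq.symm, rfl⟩
    have := stuck act {p, q, r} ⟨p, by simp⟩ ?_ ?_ ?_ w3
    · rw [hcard] at this; omega
    · intro s z hz
      simp only [Finset.mem_insert, Finset.mem_singleton] at hz ⊢
      by_cases hs : Function.Injective (act s)
      · have := h1 s hs
        have := hP s hs
        grind
      · have := h2 s hs
        have := (hA s hs).eq
        grind
    · intro s z hz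
      simp only [Finset.mem_insert, Finset.mem_singleton] at hz ⊢
      by_cases hs : Function.Injective (act s)
      · have e1 := h1 s hs
        have e2 := hP s hs
        have i1 : act s z ≠ act s p := fun h => hz (Or.inl (hs h))
        have i2 : act s z ≠ act s q := fun h => hz (Or.inr (Or.inl (hs h)))
        have i3 : act s z ≠ act s r := fun h => hz (Or.inr (Or.inr (hs h)))
        have j1 : act s p ≠ act s q := fun h => hpq (hs h)
        have j2 : act s p ≠ act s r := fun h => hrp (hs h).symm
        have j3 : act s q ≠ act s r := fun h => hrq (hs h).symm
        grind
      · have e1 := h2 s hs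
        have hd := hA s hs
        have e2 := hd.miss z
        have i1 := hd.inj z q
        have i2 := hd.inj z r
        have i3 := hd.inj q r
        grind
    · intro s u v hu hv huv
      simp only [Finset.mem_insert, Finset.mem_singleton] at hu hv
      by_cases hs : Function.Injective (act s)
      · exact hs huv
      · by_contra hne'
        have := (hA s hs).inj u v huv hne'
        grind
  have h3T := hT3 σ hσ hσp hσq
  generalize hr : act σ q = r at *
  have hrp : r ≠ p := hσp
  have hrq : r ≠ q := hσq
  by_cases hX : ∃ t, P 5 p t ∧ t ≠ r
  · obtain ⟨t, ht, htr⟩ := hX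
    have hT : ∀ x, P 5 p x → x = t ∨ x = r := by
      intro x hx
      have := htwo _ _ _ (h56 _ hx) (h56 _ ht) (h56 _ h3T)
      grind
    have htp := (hne _ _ _ ht).symm
    by_cases htq : t = q
    · subst htq
      apply htrap r hrp hrq
      · intro s hs
        rcases hP s hs with hsp | hsp
        · have e1 := hT _ (hclF s hs hsp _ ht)
          have e2 := hT _ (hclF s hs hsp _ h3T)
          exact ⟨Or.inr e1, Or.inr e2⟩
        · have b1 := hbad t (h56 _ ht) s σ hs hsp hσ (by rw [hr]; exact hrp) (by rw [hr]; exact hrq)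
          have b2 := hbad r (h56 _ h3T) s σ hs hsp hσ (by rw [hr]; exact hrp)
            (by rw [hr]; exact hrq)
          rcases hP σ hσ with hp' | hp'
          · have e2 := hT _ (hclF σ hσ hp' _ h3T)
            have e3 : act σ r = t := by
              rcases e2 with e2 | e2
              · exact e2
              · exact absurd (hσ (e2.trans hr.symm)) hrq
            have k : ∀ x, act σ x = p ∨ act σ x = t → x = p ∨ x = r := by
              rintro x (hx | hx)
              · exact Or.inl (hσ (hx.trans hp'.symm))
              · exact Or.inr (hσ (hx.trans e3.symm))
            have := k _ b1
            have := k _ b2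
            grind
          · have b3 := hbad t (h56 _ ht) σ σ hσ hp' hσ (by rw [hr]; exact hrp)
              (by rw [hr]; exact hrq)
            rw [hr] at b3
            have e3 : act σ r = p := by
              rcases b3 with e2 | e2
              · exact e2
              · exact absurd (hσ (e2.trans hp'.symm)) hrp
            have k : ∀ x, act σ x = p ∨ act σ x = t → x = p ∨ x = r := by
              rintro x (hx | hx)
              · exact Or.inr (hσ (hx.trans e3.symm))
              · exact Or.inl (hσ (hx.trans hp'.symm))
            have := k _ b1
            have := k _ b2
            grind
      · intro s hs
        exact ⟨hT _ (hclA s hs _ ht), hT _ (hclA s hs _ h3T)⟩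
    · rcases hP σ hσ with hp' | hp'
      · have e1 := hT _ (hclF σ hσ hp' _ ht)
        have e2 := hT _ (hclF σ hσ hp' _ h3T)
        have i1 : act σ t ≠ act σ q := fun h => htq (hσ h)
        have i2 : act σ r ≠ act σ q := fun h => hrq (hσ h)
        have i3 : act σ r ≠ act σ t := fun h => htr (hσ h).symm
        grind
      · have b1 := hbad t (h56 _ ht) σ σ hσ hp' hσ (by rw [hr]; exact hrp) (by rw [hr]; exact hrq)
        have b2 := hbad r (h56 _ h3T) σ σ hσ hp' hσ (by rw [hr]; exact hrp) (by rw [hr]; exact hrq)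
        have hi : ∀ x y, act σ x = act σ y → x = y := fun x y h => hσ h
        have i3 : act σ r ≠ act σ t := fun h => htr (hσ h).symm
        have i4 : act σ (act σ r) ≠ act σ (act σ t) := fun h => i3 (hσ h)
        have key : act σ r = t ∧ act σ t = p := by
          rcases b1 with b1 | b1
          · have b2' : act σ (act σ r) = q := by grind
            have c1 : act σ r = p := hi _ _ (b2'.trans hp'.symm)
            have c2 : act σ t = r := hi _ _ (b1.trans c1.symm)
            exact absurd (hi _ _ (c2.trans hr.symm)) htq
          · have b2' : act σ (act σ r) = p := by grind
            have c1 : act σ t = p := hi _ _ (b1.trans hp'.symm)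
            exact ⟨hi _ _ (b2'.trans c1.symm), c1⟩
        have g1 := hPP _ _ _ σ ht hσ
        have g2 := hPP _ _ _ σ g1 hσ
        have g3 := hPP _ _ _ σ g2 hσ
        rw [hp', key.2, hp', hr, key.1] at g3
        have := hwin _ _ g3
        grind
  · push Not at hX
    have hra : ∀ a, ¬ Function.Injective (act a) → act a r = r :=
      fun a ha => hX _ (hclA a ha _ h3T)
    have hrf : ∀ f, Function.Injective (act f) → act f p = p → act f r = r :=
      fun f hf hfp => hX _ (hclF f hf hfp _ h3T)
    have hqr : ∀ s, Function.Injective (act s) → act s q = p ∨ act s q = q ∨ act s q = r := by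
      intro s hs
      by_cases h1 : act s q = p
      · exact Or.inl h1
      · by_cases h2 : act s q = q
        · exact Or.inr (Or.inl h2)
        · exact Or.inr (Or.inr (hX _ (hT3 s hs h1 h2)))
    have hp' : act σ p = q := by
      rcases hP σ hσ with h | h
      · exact absurd (hσ ((hrf σ hσ h).trans hr.symm)) hrq
      · exact h
    have hr4 : P 4 p r := by
      have := hstart σ a0 hσ (by rw [hr]; exact hrp) (by rw [hr]; exact hrq) ha0
      rwa [hr, hra a0 ha0] at this
    have hσr : act σ r = p := by
      by_contra hcon
      have h1 : act σ r ≠ q := fun h => hrp (hσ (h.trans hp'.symm))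
      have h2 := hstart' σ σ a0 hσ (by rw [hr]; exact hrp) (by rw [hr]; exact hrq) hσ
        (by rw [hr]; exact hcon) (by rw [hr]; exact h1) ha0
      rw [hr] at h2
      have h3 := hX _ h2
      have h5 : act σ r ≠ r := fun h => hrq (hσ (h.trans hr.symm))
      have := (hA a0 ha0).inj _ _ (h3.trans (hra a0 ha0).symm) h5
      grind
    have k : ∀ x, act σ x = p ∨ act σ x = q → x = p ∨ x = r := by
      rintro x (hx | hx)
      · exact Or.inr (hσ (hx.trans hσr.symm))
      · exact Or.inl (hσ (hx.trans hp'.symm))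
    apply htrap r hrp hrq
    · intro s hs
      refine ⟨hqr s hs, ?_⟩
      rcases hP s hs with h | h
      · exact Or.inr (Or.inr (hrf s hs h))
      · have := k _ (hbad r (h56 _ h3T) s σ hs h hσ (by rw [hr]; exact hrp) (by rw [hr]; exact hrq))
        tauto
    · intro s hs
      refine ⟨?_, Or.inr (hra s hs)⟩
      have g1 := hPP _ _ _ σ hr4 hσ
      rw [hp', hσr] at g1
      have g2 := hPA _ _ _ s g1 (Or.inr rfl) hs
      have b := hbad _ g2 σ σ hσ hp' hσ (by rw [hr]; exact hrp) (by rw [hr]; exact hrq)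
      have k1 := k _ b
      rw [← (hA s hs).eq]
      rcases k1 with k1 | k1
      · exact Or.inr (hσ (k1.trans hσr.symm))
      · exact Or.inl (hσ (k1.trans hr.symm))

end helpers

theorem stmt_9 {Q A : Type*} [Fintype Q] [DecidableEq Q] (act : A → Q → Q)
    (hH1 : ∃ w : List A, (wordImage act Finset.univ w).card ≤ Fintype.card Q - 2)
    (hH2 : ∀ w : List A, w.length ≤ 3 →
      Fintype.card Q - 2 < (wordImage act Finset.univ w).card)
    (h3 : ∃ w : List A, (wordImage act Finset.univ w).card ≤ Fintype.card Q - 3) :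
    ∃ w : List A, w.length ≤ 9 ∧
      (wordImage act Finset.univ w).card ≤ Fintype.card Q - 3 := by
  have h4 : 4 ≤ Fintype.card Q := by
    obtain ⟨w, hw⟩ := h3
    have h0 : 0 < (Finset.univ : Finset Q).card := lt_of_le_of_lt (Nat.zero_le _) (hH2 [] (by simp))
    have h1 : (wordImage act Finset.univ w).Nonempty :=
      inv_word act (fun R => R.Nonempty) (fun R s hR => hR.image _) _ (Finset.card_pos.1 h0) w
    have := h1.card_pos
    omega
  obtain ⟨p, q, hpq, hA, hP, hexA, hexP, hexS⟩ := structure_H act h4 hH1 hH2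
  by_contra hcon
  push Not at hcon
  obtain ⟨π, hπ, hπp⟩ := id hexP
  obtain ⟨a0, ha0⟩ := id hexA
  have hinj : ∀ (w : List A) y s, Miss act w y → Function.Injective (act s) →
      Miss act (w ++ [s]) (act s y) := by
    intro w y s hy hs
    apply miss_step act
    intro z hz
    rwa [hs hz]
  have hmp : ∀ (w : List A) a, ¬ Function.Injective (act a) → Miss act (w ++ [a]) p :=
    fun w a ha => miss_step act (fun z hz => absurd hz ((hA a ha).miss z))
  have hout : ∀ (w : List A) y a, Miss act w y → ¬ Function.Injective (act a) → y ≠ p → y ≠ q →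
      Miss act (w ++ [a]) (act a y) := by
    intro w y a hy ha h1 h2
    apply miss_step act
    intro z hz
    by_cases hzy : z = y
    · rwa [hzy]
    · have := (hA a ha).inj z y hz hzy
      grind
  have hm3 : ∀ s, Function.Injective (act s) → Miss act ([a0] ++ [π] ++ [s]) (act s q) := by
    intro s hs
    have := hinj _ _ s (hinj _ _ π (hmp [] a0 ha0) hπ) hs
    rwa [hπp] at this
  refine core act h4 h3 p q hpq hA hP hexA hexP hexS (PairMiss act) ?_ ?_ ?_ ?_ ?_ ?_ ?_ ?_
  · rintro k x y ⟨w, _, h, _⟩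
    exact h
  · rintro k x y ⟨w, h1, h2, h3, h4⟩
    exact ⟨w, h1, h2.symm, h4, h3⟩
  · rintro k x y ⟨w, h1, h2⟩
    exact ⟨w, by omega, h2⟩
  · rintro k x t s ⟨w, h1, h2, h3, h4⟩ hx hs
    refine ⟨w ++ [s], by simpa using h1, ((hA s hs).miss t).symm, hmp _ _ hs, ?_⟩
    apply miss_step act
    intro z hz
    by_cases hzt : z = t
    · rwa [hzt]
    · have := (hA s hs).inj z t hz hzt
      have hzx : z = x := by grind
      rwa [hzx]
  · rintro k x y s ⟨w, h1, h2, h3, h4⟩ hs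
    exact ⟨w ++ [s], by simpa using h1, fun h => h2 (hs h), hinj _ _ _ h3 hs, hinj _ _ _ h4 hs⟩
  · rintro x y ⟨w, h1, h2, h3, h4⟩
    by_contra hc
    push Not at hc
    obtain ⟨c1, c2, c3, c4⟩ := hc
    have m1 := hmp w a0 ha0
    have m2 := hout w x a0 h3 ha0 c1 c2
    have m3 := hout w y a0 h4 ha0 c3 c4
    have hd := hA a0 ha0
    have hxy : act a0 x ≠ act a0 y := by
      intro h
      have := hd.inj _ _ h h2
      grind
    have hcard : ({p, act a0 x, act a0 y} : Finset Q).card = 3 := by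
      rw [Finset.card_eq_three]
      exact ⟨_, _, _, (hd.miss x).symm, (hd.miss y).symm, hxy, rfl⟩
    have h5 := card_of_miss act (w := w ++ [a0]) {p, act a0 x, act a0 y} (by simp [m1, m2, m3])
    have h6 := hcon (w ++ [a0]) (by simp; omega)
    omega
  · intro s a hs h1 h2 ha
    exact ⟨_, by simp, ((hA a ha).miss _).symm, hmp _ a ha, hout _ _ a (hm3 s hs) ha h1 h2⟩
  · intro s r a hs h1 h2 hr h5 h6 ha
    exact ⟨_, by simp, ((hA a ha).miss _).symm, hmp _ a ha,
      hout _ _ a (hinj _ _ r (hm3 s hs) hr) ha h5 h6⟩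
end

section
/- Let (Q, Σ) be a DFA with n = |Q| satisfying hypothesis (H). Then there exist distinct states p₁, p₂ ∈ Q such that some letter b ∈ Σ satisfies Qb = Q∖{p₁} and p₁b = p₂b, some letter a ∈ Σ satisfies Qa = Q and p₁a = p₂, and every letter s ∈ Σ satisfies one of the following two conditions: (1) Qs = Q and p₁s ∈ {p₁, p₂}; (2) Qs = Q∖{p₁} and p₁s = p₂s. -/
section Helpers
variable {Q A : Type*} [Fintype Q] [DecidableEq Q]

/-- `p` shares its image under `f` with another state. -/
def Dup (f : Q → Q) (p : Q) : Prop := ∃ q, q ≠ p ∧ f q = f p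

theorem image_compl_dup (f : Q → Q) (p : Q) (h : Dup f p) :
    (Finset.univ \ {p}).image f = Finset.univ.image f := by
  obtain ⟨q, hq, hqp⟩ := h
  apply Finset.Subset.antisymm
  · exact Finset.image_subset_image (Finset.subset_univ _)
  · intro y hy
    obtain ⟨z, -, rfl⟩ := Finset.mem_image.1 hy
    by_cases hz : z = p
    · subst hz
      exact Finset.mem_image.2 ⟨q, by simp [hq], hqp⟩
    · exact Finset.mem_image.2 ⟨z, by simp [hz], rfl⟩

theorem image_compl_perm (f : Q → Q) (p : Q) (h : Finset.univ.image f = Finset.univ) :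
    (Finset.univ \ {p}).image f = Finset.univ \ {f p} := by
  have hs : Function.Surjective f := by
    intro y
    have : y ∈ Finset.univ.image f := by simp [h]
    simpa using this
  have hi : Function.Injective f := Finite.injective_iff_surjective.2 hs
  ext y
  obtain ⟨z, rfl⟩ := hs y
  simp [hi.eq_iff]

theorem dup_of_card (f : Q → Q) (p m : Q) (hf : Finset.univ.image f = Finset.univ \ {m})
    (h : Fintype.card Q - 2 < ((Finset.univ \ {p}).image f).card) : Dup f p := by
  have hsub : (Finset.univ \ {p}).image f ⊆ Finset.univ.image f :=
    Finset.image_subset_image (Finset.subset_univ _)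
  have hc : (Finset.univ.image f).card = Fintype.card Q - 1 := by
    rw [hf, Finset.card_sdiff]; simp
  have he := Finset.eq_of_subset_of_card_le hsub (by omega)
  have : f p ∈ (Finset.univ \ {p}).image f := by rw [he]; simp
  obtain ⟨q, hq, hqp⟩ := Finset.mem_image.1 this
  exact ⟨q, by simpa using hq, hqp⟩

theorem no_two (f : Q → Q) (p q p' q' : Q)
    (h : Fintype.card Q - 2 < (Finset.univ.image f).card) (hpq : p ≠ q)
    (h1 : p' ≠ p) (h2 : p' ≠ q) (h3 : q' ≠ p) (h4 : q' ≠ q)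
    (e1 : f p' = f p) (e2 : f q' = f q) : False := by
  have hsub : Finset.univ.image f ⊆ (Finset.univ \ {p, q}).image f := by
    intro y hy
    obtain ⟨z, -, rfl⟩ := Finset.mem_image.1 hy
    by_cases hz : z = p
    · subst hz
      exact Finset.mem_image.2 ⟨p', by simp [h1, h2], e1⟩
    · by_cases hz' : z = q
      · subst hz'
        exact Finset.mem_image.2 ⟨q', by simp [h3, h4], e2⟩
      · exact Finset.mem_image.2 ⟨z, by simp [hz, hz'], rfl⟩
  have hc : (Finset.univ \ {p, q} : Finset Q).card = Fintype.card Q - 2 := by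
    rw [Finset.card_sdiff]; simp [hpq]
  have := Finset.card_le_card hsub
  have := Finset.card_image_le (s := (Finset.univ \ {p, q} : Finset Q)) (f := f)
  omega

theorem dup_two (f : Q → Q) (p q : Q)
    (h : Fintype.card Q - 2 < (Finset.univ.image f).card) (hpq : p ≠ q)
    (hp : Dup f p) (hq : Dup f q) : f p = f q := by
  obtain ⟨p', h1, e1⟩ := hp
  obtain ⟨q', h2, e2⟩ := hq
  by_cases a : p' = q
  · rw [← a, e1]
  by_cases b : q' = p
  · rw [← b, e2]
  exact (no_two f p q p' q' h hpq h1 a b h2 e1 e2).elim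

theorem dup_three (f : Q → Q) (p q r : Q)
    (h : Fintype.card Q - 2 < (Finset.univ.image f).card) (hpq : p ≠ q)
    (hp : Dup f p) (hq : Dup f q) (hr : Dup f r) : r = p ∨ r = q := by
  by_contra hc
  push Not at hc
  exact no_two f p q r r h hpq hc.1 hc.2 hc.1 hc.2
    (dup_two f r p h hc.1 hr hp) (dup_two f r q h hc.2 hr hq)

theorem inv_word_s10 (act : A → Q → Q) (P : Q → Prop)
    (hA : ∀ s, Finset.univ.image (act s) = Finset.univ ∨
      ∃ p, Finset.univ.image (act s) = Finset.univ \ {p})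
    (h1 : ∀ s p, Finset.univ.image (act s) = Finset.univ \ {p} → P p)
    (h2 : ∀ s p, Finset.univ.image (act s) = Finset.univ → P p → P (act s p))
    (h3 : ∀ s m p, Finset.univ.image (act s) = Finset.univ \ {m} → P p → Dup (act s) p)
    (w : List A) : ∀ R : Finset Q, (R = Finset.univ ∨ ∃ p, P p ∧ R = Finset.univ \ {p}) →
      Fintype.card Q - 1 ≤ (wordImage act R w).card := by
  induction w with
  | nil =>
    rintro R (rfl | ⟨p, -, rfl⟩)
    · simp [wordImage]
    · simp [wordImage, Finset.card_sdiff]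
  | cons s w ih =>
    intro R hR
    rw [wordImage]
    apply ih
    rcases hR with rfl | ⟨p, hp, rfl⟩
    · rcases hA s with h | ⟨m, h⟩
      · exact Or.inl h
      · exact Or.inr ⟨m, h1 s m h, h⟩
    · rcases hA s with h | ⟨m, h⟩
      · exact Or.inr ⟨_, h2 s p h hp, image_compl_perm _ _ h⟩
      · exact Or.inr ⟨m, h1 s m h, by rw [image_compl_dup _ _ (h3 s m p h hp), h]⟩

end Helpers

theorem stmt_10 {Q A : Type*} [Fintype Q] [DecidableEq Q] (act : A → Q → Q)
    (hH1 : ∃ w : List A, (wordImage act Finset.univ w).card ≤ Fintype.card Q - 2)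
    (hH2 : ∀ w : List A, w.length ≤ 3 →
      Fintype.card Q - 2 < (wordImage act Finset.univ w).card) :
    ∃ p₁ p₂ : Q, p₁ ≠ p₂ ∧
      (∃ b : A, Finset.univ.image (act b) = Finset.univ \ {p₁} ∧
        act b p₁ = act b p₂) ∧
      (∃ a : A, Finset.univ.image (act a) = Finset.univ ∧ act a p₁ = p₂) ∧
      ∀ s : A,
        (Finset.univ.image (act s) = Finset.univ ∧ act s p₁ ∈ ({p₁, p₂} : Set Q)) ∨
        (Finset.univ.image (act s) = Finset.univ \ {p₁} ∧ act s p₁ = act s p₂) := by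
  obtain ⟨w, hw⟩ := hH1
  have hn : 2 ≤ Fintype.card Q := by
    have h0 := hH2 [] (by simp)
    simp only [wordImage, Finset.card_univ] at h0
    by_contra hlt
    have h1 : Fintype.card Q = 1 := by omega
    have hne : ∀ (w : List A) (R : Finset Q), R.Nonempty → (wordImage act R w).Nonempty := by
      intro w
      induction w with
      | nil => intro R h; exact h
      | cons s w ih => intro R h; exact ih _ (h.image _)
    have : Nonempty Q := Fintype.card_pos_iff.1 (by omega)
    have := (hne w Finset.univ Finset.univ_nonempty).card_pos
    omega
  have hcard : ∀ s, Fintype.card Q - 2 < (Finset.univ.image (act s)).card := fun s => by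
    simpa [wordImage] using hH2 [s] (by simp)
  have hA : ∀ s, Finset.univ.image (act s) = Finset.univ ∨
      ∃ p, Finset.univ.image (act s) = Finset.univ \ {p} := by
    intro s
    by_cases h : Finset.univ.image (act s) = Finset.univ
    · exact Or.inl h
    right
    obtain ⟨p, hp⟩ : ∃ p, p ∉ Finset.univ.image (act s) := by
      by_contra hc
      push Not at hc
      exact h (Finset.eq_univ_iff_forall.2 hc)
    refine ⟨p, Finset.eq_of_subset_of_card_le ?_ ?_⟩
    · intro y hy
      simp only [Finset.mem_sdiff, Finset.mem_univ, Finset.mem_singleton, true_and]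
      rintro rfl
      exact hp hy
    · have := hcard s
      rw [Finset.card_sdiff]
      simp
      omega
  have hB : ∀ b p c q, Finset.univ.image (act b) = Finset.univ \ {p} →
      Finset.univ.image (act c) = Finset.univ \ {q} → Dup (act c) p := by
    intro b p c q hb hc
    apply dup_of_card _ _ _ hc
    have := hH2 [b, c] (by simp)
    simpa only [wordImage, hb] using this
  have hC : ∀ b p a c q, Finset.univ.image (act b) = Finset.univ \ {p} →
      Finset.univ.image (act a) = Finset.univ →
      Finset.univ.image (act c) = Finset.univ \ {q} → Dup (act c) (act a p) := by
    intro b p a c q hb ha hc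
    apply dup_of_card _ _ _ hc
    have := hH2 [b, a, c] (by simp)
    simpa only [wordImage, hb, image_compl_perm _ _ ha] using this
  have key : ∃ b p a, Finset.univ.image (act b) = Finset.univ \ {p} ∧
      Finset.univ.image (act a) = Finset.univ ∧ act a p ≠ p := by
    by_contra hno
    push Not at hno
    have := inv_word_s10 act (fun p => ∃ b, Finset.univ.image (act b) = Finset.univ \ {p}) hA
      (fun s p h => ⟨s, h⟩)
      (fun s p h hp => by
        obtain ⟨b, hb⟩ := hp
        rw [hno b p s hb h]
        exact ⟨b, hb⟩)
      (fun s m p h hp => by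
        obtain ⟨b, hb⟩ := hp
        exact hB b p s m hb h) w Finset.univ (Or.inl rfl)
    omega
  obtain ⟨b, p, a, hb, ha, hap⟩ := key
  have d1 : ∀ c q, Finset.univ.image (act c) = Finset.univ \ {q} → Dup (act c) p :=
    fun c q h => hB b p c q hb h
  have d2 : ∀ c q, Finset.univ.image (act c) = Finset.univ \ {q} → Dup (act c) (act a p) :=
    fun c q h => hC b p a c q hb ha h
  have hM : ∀ c q, Finset.univ.image (act c) = Finset.univ \ {q} → q = p ∨ q = act a p :=
    fun c q h => dup_three (act b) p (act a p) q (hcard b) hap.symm (d1 b p hb) (d2 b p hb)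
      (hB c q b p h hb)
  have hP : ∀ c q s, Finset.univ.image (act c) = Finset.univ \ {q} →
      Finset.univ.image (act s) = Finset.univ → act s q = p ∨ act s q = act a p :=
    fun c q s h hs => dup_three (act b) p (act a p) (act s q) (hcard b) hap.symm
      (d1 b p hb) (d2 b p hb) (hC c q s b p h hs hb)
  have hno : ∀ c, Finset.univ.image (act c) ≠ Finset.univ \ {act a p} := by
    intro c hc
    have := inv_word_s10 act (fun x => x = p ∨ x = act a p) hA hM
      (fun s x h hx => by
        rcases hx with rfl | rfl
        · exact hP b _ s hb h
        · exact hP c _ s hc h)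
      (fun s m x h hx => by
        rcases hx with rfl | rfl
        · exact d1 s m h
        · exact d2 s m h) w Finset.univ (Or.inl rfl)
    omega
  refine ⟨p, act a p, hap.symm, ⟨b, hb, ?_⟩, ⟨a, ha, rfl⟩, ?_⟩
  · exact dup_two _ _ _ (hcard b) hap.symm (d1 b p hb) (d2 b p hb)
  · intro s
    rcases hA s with h | ⟨m, h⟩
    · left
      exact ⟨h, by simpa using hP b p s hb h⟩
    · right
      have hm : m = p := by
        rcases hM s m h with h' | h'
        · exact h'
        · subst h'
          exact (hno s h).elim
      subst hm
      exact ⟨h, dup_two _ _ _ (hcard s) hap.symm (d1 s _ h) (d2 s _ h)⟩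
end

section
/- Let (Q, Σ) be a DFA with n = |Q|. Suppose there exist distinct states p₁, p₂ ∈ Q such that every letter s ∈ Σ satisfies one of the following two conditions: (1) Qs = Q and p₁s ∈ {p₁, p₂}; (2) Qs = Q∖{p₁} and p₁s = p₂s. Then every word w over Σ with |w| ≤ 3 satisfies |Qw| > n − 2. -/
theorem inj_step {Q : Type*} [Fintype Q] [DecidableEq Q] (f : Q → Q)
    (h : Finset.univ.image f = Finset.univ) (q : Q) :
    (Finset.univ \ {q}).image f = Finset.univ \ {f q} := by
  have hsurj : Function.Surjective f := by
    intro y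
    have : y ∈ Finset.univ.image f := by rw [h]; exact Finset.mem_univ y
    simpa using this
  have hinj := Finite.injective_iff_surjective.mpr hsurj
  rw [Finset.image_sdiff _ _ hinj, h, Finset.image_singleton]

theorem merge_step {Q : Type*} [Fintype Q] [DecidableEq Q] (f : Q → Q) (a b : Q)
    (hab : a ≠ b) (h : f a = f b) :
    (Finset.univ \ {a}).image f = Finset.univ.image f := by
  ext y
  simp only [Finset.mem_image, Finset.mem_sdiff, Finset.mem_univ, true_and,
    Finset.mem_singleton]
  constructor
  · rintro ⟨x, -, rfl⟩
    exact ⟨x, rfl⟩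
  · rintro ⟨x, rfl⟩
    by_cases hx : x = a
    · exact ⟨b, fun e => hab e.symm, by rw [hx, h]⟩
    · exact ⟨x, hx, rfl⟩

theorem stmt_11 {Q A : Type*} [Fintype Q] [DecidableEq Q] (act : A → Q → Q)
    (p₁ p₂ : Q) (hp : p₁ ≠ p₂)
    (hs : ∀ s : A,
      (Finset.univ.image (act s) = Finset.univ ∧ act s p₁ ∈ ({p₁, p₂} : Set Q)) ∨
      (Finset.univ.image (act s) = Finset.univ \ {p₁} ∧ act s p₁ = act s p₂)) :
    ∀ w : List A, w.length ≤ 3 →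
      Fintype.card Q - 2 < (wordImage act Finset.univ w).card := by
  have s0 : ∀ s, Finset.univ.image (act s) = Finset.univ ∨
      Finset.univ.image (act s) = Finset.univ \ {p₁} := by
    intro s
    rcases hs s with h | h
    · exact Or.inl h.1
    · exact Or.inr h.1
  have s1 : ∀ s, (Finset.univ \ {p₁}).image (act s) = Finset.univ \ {p₁} ∨
      (Finset.univ \ {p₁}).image (act s) = Finset.univ \ {p₂} := by
    intro s
    rcases hs s with ⟨h, h'⟩ | ⟨h, h'⟩
    · rw [inj_step _ h]
      rcases h' with h' | h'
      · left; rw [h']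
      · right; rw [Set.mem_singleton_iff.mp h']
    · left; rw [merge_step _ _ _ hp h', h]
  have s2 : ∀ s, ∃ q, (Finset.univ \ {p₂}).image (act s) = Finset.univ \ {q} := by
    intro s
    rcases hs s with ⟨h, h'⟩ | ⟨h, h'⟩
    · exact ⟨_, inj_step _ h _⟩
    · exact ⟨p₁, by rw [merge_step _ _ _ hp.symm h'.symm, h]⟩
  have hn : 2 ≤ Fintype.card Q := Fintype.one_lt_card_iff.mpr ⟨p₁, p₂, hp⟩
  have c0 : Fintype.card Q - 2 < (Finset.univ : Finset Q).card := by
    rw [Finset.card_univ]; omega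
  have c1 : ∀ q : Q, Fintype.card Q - 2 < (Finset.univ \ {q}).card := by
    intro q
    rw [Finset.card_sdiff_of_subset (Finset.subset_univ _), Finset.card_univ,
      Finset.card_singleton]
    omega
  -- words of length at most one from the complement of `p₂`
  have w2 : ∀ w : List A, w.length ≤ 1 →
      Fintype.card Q - 2 < (wordImage act (Finset.univ \ {p₂}) w).card := by
    intro w hw
    match w, hw with
    | [], _ => exact c1 _
    | [s], _ =>
      obtain ⟨q, hq⟩ := s2 s
      simp only [wordImage, hq]
      exact c1 q
  -- words of length at most two from the complement of `p₁`
  have w1 : ∀ w : List A, w.length ≤ 2 →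
      Fintype.card Q - 2 < (wordImage act (Finset.univ \ {p₁}) w).card := by
    intro w
    induction w with
    | nil => intro _; exact c1 _
    | cons s w ih =>
      intro hw
      simp only [List.length_cons] at hw
      rcases s1 s with h | h
      · simp only [wordImage, h]; exact ih (by omega)
      · simp only [wordImage, h]; exact w2 w (by omega)
  intro w
  induction w with
  | nil => intro _; exact c0
  | cons s w ih =>
    intro hw
    simp only [List.length_cons] at hw
    rcases s0 s with h | h
    · simp only [wordImage, h]; exact ih (by omega)
    · simp only [wordImage, h]; exact w1 w (by omega)
end

section
/- Let (Q, Σ) be a DFA with n = |Q| such that some word w over Σ satisfies |w| ≤ 9 and |Qw| = n − 3. Suppose there exist four pairwise distinct states q₁, q₂, q₃, q₄ ∈ Q such that every letter s ∈ Σ satisfies one of the following: (I) Qs = Q and qᵢs = qᵢ for i = 1,2,3,4; (A) Qs = Q and q₁s = q₂, q₂s = q₃, q₃s = q₄, q₄s = q₁; (B) Qs = Q∖{q₁}, q₁s = q₂s, q₃s = q₃, q₄s = q₄. Then every word w = w₁w₂⋯w_k over Σ with k ≤ 9 and |Qw| = n − 3 satisfies k = 9, |Q(w₁⋯wᵢ)|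 = n − 1 for i = 1,2,3,4, and |Q(w₁⋯wᵢ)| = n − 2 for i = 5,6,7,8. -/
/-- Abstract states: which states are missing from the current image. -/
inductive St
  | e | s1 | s2 | s3 | s4 | p12 | p13 | p14 | p23 | p24 | p34 | o1 | o2 | oo | top

/-- Earliest time at which an abstract state can occur. -/
def St.early : St → ℕ
  | .e => 0 | .s1 => 1 | .s2 => 2 | .s3 => 3 | .s4 => 4
  | .p12 => 6 | .p13 => 4 | .p14 => 5 | .p23 => 7 | .p24 => 5 | .p34 => 8
  | .o1 => 7 | .o2 => 8 | .oo => 9 | .top => 9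

/-- Lower bound for the number of letters needed to reach `top`. -/
def St.dist : St → ℕ
  | .e => 9 | .s1 => 8 | .s2 => 7 | .s3 => 6 | .s4 => 5
  | .p12 => 3 | .p13 => 6 | .p14 => 4 | .p23 => 2 | .p24 => 5 | .p34 => 1
  | .o1 => 3 | .o2 => 2 | .oo => 1 | .top => 0

/-- The concrete meaning of an abstract state. -/
def St.Rel {Q : Type*} [Fintype Q] [DecidableEq Q] (q₁ q₂ q₃ q₄ : Q) (R : Finset Q) : St → Prop
  | .e => R = Finset.univ \ ∅
  | .s1 => R = Finset.univ \ {q₁}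
  | .s2 => R = Finset.univ \ {q₂}
  | .s3 => R = Finset.univ \ {q₃}
  | .s4 => R = Finset.univ \ {q₄}
  | .p12 => R = Finset.univ \ {q₁, q₂}
  | .p13 => R = Finset.univ \ {q₁, q₃}
  | .p14 => R = Finset.univ \ {q₁, q₄}
  | .p23 => R = Finset.univ \ {q₂, q₃}
  | .p24 => R = Finset.univ \ {q₂, q₄}
  | .p34 => R = Finset.univ \ {q₃, q₄}
  | .o1 => q₁ ∉ R ∧ R.card = Fintype.card Q - 2
  | .o2 => q₂ ∉ R ∧ R.card = Fintype.card Q - 2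
  | .oo => R.card = Fintype.card Q - 2
  | .top => True

theorem image_bij {Q : Type*} [Fintype Q] [DecidableEq Q] (f : Q → Q)
    (hf : Function.Injective f) (S : Finset Q) :
    (Finset.univ \ S).image f = Finset.univ \ S.image f := by
  rw [Finset.image_sdiff _ _ hf, Finset.image_univ_of_surjective (Finite.surjective_of_injective hf)]

theorem inj_of_image {Q : Type*} [Fintype Q] [DecidableEq Q] (f : Q → Q)
    (h : Finset.univ.image f = Finset.univ) : Function.Injective f := by
  apply Finite.injective_iff_surjective.2
  intro y
  have : y ∈ Finset.univ.image f := by rw [h]; simp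
  simpa using this

theorem kerB {Q : Type*} [Fintype Q] [DecidableEq Q] (f : Q → Q) (q₁ q₂ : Q) (h12 : q₁ ≠ q₂)
    (h : Finset.univ.image f = Finset.univ \ {q₁}) (hf : f q₁ = f q₂) (a b : Q) (hab : f a = f b) :
    a = b ∨ (a = q₁ ∧ b = q₂) ∨ (a = q₂ ∧ b = q₁) := by
  have h1 : (Finset.univ \ {q₁}).image f = Finset.univ \ {q₁} := by
    refine Eq.trans ?_ h
    ext y
    simp only [Finset.mem_image, Finset.mem_sdiff, Finset.mem_univ, Finset.mem_singleton, true_and]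
    constructor
    · rintro ⟨x, -, rfl⟩; exact ⟨x, rfl⟩
    · rintro ⟨x, rfl⟩
      by_cases hx : x = q₁
      · exact ⟨q₂, h12.symm, by rw [hx, hf]⟩
      · exact ⟨x, hx, rfl⟩
  have h2 : Set.InjOn f ((Finset.univ \ {q₁} : Finset Q) : Set Q) :=
    Finset.card_image_iff.1 (by rw [h1])
  have h3 : ∀ a b, a ≠ q₁ → b ≠ q₁ → f a = f b → a = b := fun a b ha hb hab =>
    h2 (by simpa using ha) (by simpa using hb) hab
  by_cases ha : a = q₁ <;> by_cases hb : b = q₁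
  · exact Or.inl (ha.trans hb.symm)
  · exact Or.inr (Or.inl ⟨ha, h3 _ _ hb h12.symm (by rw [← hab, ha, hf])⟩)
  · exact Or.inr (Or.inr ⟨h3 _ _ ha h12.symm (by rw [hab, hb, hf]), hb⟩)
  · exact Or.inl (h3 a b ha hb hab)

theorem imageB {Q : Type*} [Fintype Q] [DecidableEq Q] (f : Q → Q) (q₁ q₂ : Q) (h12 : q₁ ≠ q₂)
    (h : Finset.univ.image f = Finset.univ \ {q₁}) (hf : f q₁ = f q₂) (S : Finset Q)
    (hS : ¬ (q₁ ∈ S ∧ q₂ ∈ S)) :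
    (Finset.univ \ S).image f = Finset.univ \ (insert q₁ ((S \ {q₁, q₂}).image f)) := by
  have hk := kerB f q₁ q₂ h12 h hf
  have h1 : ∀ y, (∃ x, f x = y) ↔ y ≠ q₁ := by
    intro y
    have := congrArg (fun T => y ∈ T) h
    simpa using this
  ext y
  simp only [Finset.mem_image, Finset.mem_sdiff, Finset.mem_univ, Finset.mem_insert,
    Finset.mem_singleton, true_and, not_or, not_exists, not_and]
  constructor
  · rintro ⟨x, hx, rfl⟩
    refine ⟨(h1 _).1 ⟨x, rfl⟩, ?_⟩
    intro z hz hzx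
    have := hk z x hzx
    grind
  · rintro ⟨hy, hz⟩
    obtain ⟨x, rfl⟩ := (h1 y).2 hy
    by_cases hx : x ∈ S
    · grind
    · exact ⟨x, hx, rfl⟩

theorem cardB {Q : Type*} [Fintype Q] [DecidableEq Q] (f : Q → Q) (q₁ q₂ : Q) (h12 : q₁ ≠ q₂)
    (h : Finset.univ.image f = Finset.univ \ {q₁}) (hf : f q₁ = f q₂) (R : Finset Q)
    (hR : q₁ ∉ R ∨ q₂ ∉ R) : q₁ ∉ R.image f ∧ (R.image f).card = R.card := by
  have hk := kerB f q₁ q₂ h12 h hf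
  constructor
  · intro hm
    have : q₁ ∈ Finset.univ.image f := Finset.image_subset_image (Finset.subset_univ R) hm
    rw [h] at this
    simp at this
  · apply Finset.card_image_of_injOn
    intro a ha b hb hab
    have := hk a b hab
    simp only [Finset.mem_coe] at ha hb
    grind

/-- One letter changes the abstract state in a controlled way. -/
theorem stepSt {Q : Type*} [Fintype Q] [DecidableEq Q] (f : Q → Q) (q₁ q₂ q₃ q₄ : Q)
    (hq : q₁ ≠ q₂ ∧ q₁ ≠ q₃ ∧ q₁ ≠ q₄ ∧ q₂ ≠ q₃ ∧ q₂ ≠ q₄ ∧ q₃ ≠ q₄)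
    (hs : (Finset.univ.image f = Finset.univ ∧
        f q₁ = q₁ ∧ f q₂ = q₂ ∧ f q₃ = q₃ ∧ f q₄ = q₄) ∨
      (Finset.univ.image f = Finset.univ ∧
        f q₁ = q₂ ∧ f q₂ = q₃ ∧ f q₃ = q₄ ∧ f q₄ = q₁) ∨
      (Finset.univ.image f = Finset.univ \ {q₁} ∧
        f q₁ = f q₂ ∧ f q₃ = q₃ ∧ f q₄ = q₄)) (R : Finset Q) (a : St)
    (ha : a.Rel q₁ q₂ q₃ q₄ R) :
    ∃ b : St, b.Rel q₁ q₂ q₃ q₄ (R.image f) ∧ b.early ≤ a.early + 1 ∧ a.dist ≤ b.dist + 1 := by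
  obtain ⟨h12, h13, h14, h23, h24, h34⟩ := hq
  rcases hs with ⟨h, e1, e2, e3, e4⟩ | ⟨h, e1, e2, e3, e4⟩ | ⟨h, e1, e3, e4⟩
  · have hi := inj_of_image f h
    refine ⟨a, ?_, by omega, by omega⟩
    cases a <;> simp only [St.Rel] at ha ⊢
    case o1 => exact ⟨by grind [Function.Injective], by rw [Finset.card_image_of_injective _ hi]; exact ha.2⟩
    case o2 => exact ⟨by grind [Function.Injective], by rw [Finset.card_image_of_injective _ hi]; exact ha.2⟩
    case oo => rw [Finset.card_image_of_injective _ hi]; exact ha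
    all_goals
      subst ha
      rw [image_bij f hi]
      simp [Finset.image_insert, e1, e2, e3, e4]
  · have hi := inj_of_image f h
    have hc := Finset.card_image_of_injective R hi
    refine ⟨match a with
      | .e => .e | .s1 => .s2 | .s2 => .s3 | .s3 => .s4 | .s4 => .s1
      | .p12 => .p23 | .p13 => .p24 | .p14 => .p12 | .p23 => .p34 | .p24 => .p13 | .p34 => .p14
      | .o1 => .o2 | .o2 => .oo | .oo => .top | .top => .top, ?_, ?_, ?_⟩
    · cases a <;> simp only [St.Rel] at ha ⊢
      case o1 => exact ⟨by grind [Function.Injective], by rw [hc]; exact ha.2⟩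
      case o2 => rw [hc]; exact ha.2
      all_goals
        subst ha
        rw [image_bij f hi]
        simp [Finset.image_insert, e1, e2, e3, e4, Finset.pair_comm]
    · cases a <;> simp [St.early]
    · cases a <;> simp [St.dist]
  · have hc := cardB f q₁ q₂ h12 h e1 R
    refine ⟨match a with
      | .e => .s1 | .s1 => .s1 | .s2 => .s1 | .s3 => .p13 | .s4 => .p14
      | .p12 => .o1 | .p13 => .p13 | .p14 => .p14 | .p23 => .p13 | .p24 => .p14 | .p34 => .top
      | .o1 => .o1 | .o2 => .o1 | .oo => .top | .top => .top, ?_, ?_, ?_⟩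
    · cases a <;> simp only [St.Rel] at ha ⊢
      case o1 => exact ⟨(hc (Or.inl ha.1)).1, (hc (Or.inl ha.1)).2.trans ha.2⟩
      case o2 => exact ⟨(hc (Or.inr ha.1)).1, (hc (Or.inr ha.1)).2.trans ha.2⟩
      case p12 =>
        have hn : q₁ ∉ R := by subst ha; simp
        refine ⟨(hc (Or.inl hn)).1, (hc (Or.inl hn)).2.trans ?_⟩
        subst ha
        rw [Finset.card_sdiff_of_subset (Finset.subset_univ _), Finset.card_pair h12, Finset.card_univ]
      all_goals
        subst ha
        rw [imageB f q₁ q₂ h12 h e1 _ (by simp [h12, h13, h14, h23, h24, h12.symm])]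
        congr 1
        ext y
        simp only [Finset.mem_image, Finset.mem_sdiff, Finset.mem_insert, Finset.mem_singleton, Finset.notMem_empty]
        grind
    · cases a <;> simp [St.early]
    · cases a <;> simp [St.dist]

theorem cardRel {Q : Type*} [Fintype Q] [DecidableEq Q] (q₁ q₂ q₃ q₄ : Q)
    (hq : q₁ ≠ q₂ ∧ q₁ ≠ q₃ ∧ q₁ ≠ q₄ ∧ q₂ ≠ q₃ ∧ q₂ ≠ q₄ ∧ q₃ ≠ q₄) (R : Finset Q) (a : St)
    (ha : a.Rel q₁ q₂ q₃ q₄ R) :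
    (a.early = 0 ∧ R.card = Fintype.card Q) ∨
    (5 ≤ a.dist ∧ a.early + a.dist = 9 ∧ R.card = Fintype.card Q - 1) ∨
    (4 ≤ a.early ∧ 9 ≤ a.early + a.dist ∧ a.dist ≠ 0 ∧
      (a.dist ≤ 4 ∨ 10 ≤ a.early + a.dist) ∧ R.card = Fintype.card Q - 2) ∨
    (a = .top) := by
  obtain ⟨h12, h13, h14, h23, h24, h34⟩ := hq
  cases a <;> simp only [St.Rel] at ha <;> simp only [St.early, St.dist]
  case o1 => simp [ha.2]
  case o2 => simp [ha.2]
  case oo => simp [ha]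
  case top => simp
  all_goals
    subst ha
    rw [Finset.card_sdiff_of_subset (Finset.subset_univ _), Finset.card_univ]
    simp [Finset.card_pair, *]

theorem runSt {Q A : Type*} [Fintype Q] [DecidableEq Q] (act : A → Q → Q)
    (q₁ q₂ q₃ q₄ : Q)
    (hq : q₁ ≠ q₂ ∧ q₁ ≠ q₃ ∧ q₁ ≠ q₄ ∧ q₂ ≠ q₃ ∧ q₂ ≠ q₄ ∧ q₃ ≠ q₄)
    (hn : 4 ≤ Fintype.card Q)
    (hstep : ∀ (s : A) (R : Finset Q) (a : St), a.Rel q₁ q₂ q₃ q₄ R →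
      ∃ b : St, b.Rel q₁ q₂ q₃ q₄ (R.image (act s)) ∧ b.early ≤ a.early + 1 ∧
        a.dist ≤ b.dist + 1) (w : List A) :
    ∀ (R : Finset Q) (a : St) (t : ℕ), a.Rel q₁ q₂ q₃ q₄ R → a.early ≤ t →
      (wordImage act R w).card = Fintype.card Q - 3 →
      9 ≤ t + w.length ∧ a.dist ≤ w.length ∧
      ∀ i ≤ w.length, ∃ b : St, b.Rel q₁ q₂ q₃ q₄ (wordImage act R (w.take i)) ∧
        b.early ≤ t + i ∧ b.dist + i ≤ w.length := by
  induction w with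
  | nil =>
    intro R a t ha ht hw
    simp only [wordImage] at hw
    have hat : a = .top := by
      rcases cardRel q₁ q₂ q₃ q₄ hq R a ha with h | h | h | h
      · omega
      · omega
      · omega
      · exact h
    subst hat
    refine ⟨by simpa [St.early] using ht, by simp [St.dist], ?_⟩
    intro i hi
    exact ⟨.top, by simp [St.Rel], by omega, by simpa [St.dist] using hi⟩
  | cons s w ih =>
    intro R a t ha ht hw
    obtain ⟨b, hb, hb1, hb2⟩ := hstep s R a ha
    obtain ⟨h1, h2, h3⟩ := ih _ b (t + 1) hb (by omega) hw
    refine ⟨by simp only [List.length_cons]; omega, by simp only [List.length_cons]; omega, ?_⟩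
    intro i hi
    cases i with
    | zero => exact ⟨a, by simpa [wordImage] using ha, by omega, by simp only [List.length_cons]; omega⟩
    | succ i =>
      simp only [List.length_cons] at hi ⊢
      obtain ⟨c, hc, hc1, hc2⟩ := h3 i (by omega)
      exact ⟨c, by simpa [wordImage] using hc, by omega, by omega⟩

theorem stmt_12 {Q A : Type*} [Fintype Q] [DecidableEq Q] (act : A → Q → Q)
    (h : ∃ w : List A, w.length ≤ 9 ∧
      (wordImage act Finset.univ w).card = Fintype.card Q - 3)
    (q₁ q₂ q₃ q₄ : Q)
    (hq : q₁ ≠ q₂ ∧ q₁ ≠ q₃ ∧ q₁ ≠ q₄ ∧ q₂ ≠ q₃ ∧ q₂ ≠ q₄ ∧ q₃ ≠ q₄)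
    (hs : ∀ s : A,
      (Finset.univ.image (act s) = Finset.univ ∧
        act s q₁ = q₁ ∧ act s q₂ = q₂ ∧ act s q₃ = q₃ ∧ act s q₄ = q₄) ∨
      (Finset.univ.image (act s) = Finset.univ ∧
        act s q₁ = q₂ ∧ act s q₂ = q₃ ∧ act s q₃ = q₄ ∧ act s q₄ = q₁) ∨
      (Finset.univ.image (act s) = Finset.univ \ {q₁} ∧
        act s q₁ = act s q₂ ∧ act s q₃ = q₃ ∧ act s q₄ = q₄)) :
    ∀ w : List A, w.length ≤ 9 →
      (wordImage act Finset.univ w).card = Fintype.card Q - 3 →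
      w.length = 9 ∧
      (∀ i : ℕ, 1 ≤ i → i ≤ 4 →
        (wordImage act Finset.univ (w.take i)).card = Fintype.card Q - 1) ∧
      (∀ i : ℕ, 5 ≤ i → i ≤ 8 →
        (wordImage act Finset.univ (w.take i)).card = Fintype.card Q - 2) := by
  intro w hw hcard
  have hn : 4 ≤ Fintype.card Q := by
    obtain ⟨h12, h13, h14, h23, h24, h34⟩ := hq
    have : ({q₁, q₂, q₃, q₄} : Finset Q).card = 4 := by
      simp [*]
    rw [← this]
    exact Finset.card_le_univ _
  obtain ⟨h1, -, h3⟩ := runSt act q₁ q₂ q₃ q₄ hq hn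
    (fun s R a ha => stepSt (act s) q₁ q₂ q₃ q₄ hq (hs s) R a ha) w Finset.univ .e 0
    (by simp [St.Rel]) (by simp [St.early]) hcard
  have hl : w.length = 9 := by omega
  refine ⟨hl, ?_, ?_⟩
  · intro i hi1 hi2
    obtain ⟨b, hb, hb1, hb2⟩ := h3 i (by omega)
    rcases cardRel q₁ q₂ q₃ q₄ hq _ b hb with h | h | h | h
    · exfalso; revert hb2 h; cases b <;> simp [St.early, St.dist] <;> omega
    · exact h.2.2
    · omega
    · subst h; simp [St.early] at hb1; omega
  · intro i hi1 hi2
    obtain ⟨b, hb, hb1, hb2⟩ := h3 i (by omega)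
    rcases cardRel q₁ q₂ q₃ q₄ hq _ b hb with h | h | h | h
    · exfalso; revert hb2 h; cases b <;> simp [St.early, St.dist] <;> omega
    · omega
    · exact h.2.2.2.2
    · subst h; simp [St.early] at hb1; omega
end

section
/- Let (Q, Σ) be a DFA with n = |Q| such that some word w over Σ satisfies |w| ≤ 9 and |Qw| = n − 3. Then the following two statements are equivalent: (1) every word w = w₁w₂⋯w_k over Σ with k ≤ 9 and |Qw| = n − 3 satisfies k ≥ 4 and |Q(w₁w₂w₃w₄)| > n − 2; (2) every word w = w₁w₂⋯w_k over Σ with k ≤ 9 and |Qw| = n − 3 satisfies k = 9, |Q(w₁⋯wᵢ)| = n − 1 for i = 1,2,3,4, and |Q(w₁⋯wᵢ)| = n − 2 for i = 5,6,7,8. -/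
namespace S14

set_option linter.unusedSectionVars false

variable {Q A : Type*} [Fintype Q] [DecidableEq Q]

def run (act : A → Q → Q) (w : List A) (q : Q) : Q := w.foldl (fun q s => act s q) q

/-- the set missed by the image of the complement of `D` under `w` -/
def St (act : A → Q → Q) (w : List A) (D : Finset Q) : Finset Q := (Dᶜ.image (run act w))ᶜ

theorem run_append (act : A → Q → Q) (u v : List A) (q : Q) :
    run act (u ++ v) q = run act v (run act u q) := by
  simp [run, List.foldl_append]

theorem mem_St (act : A → Q → Q) (w : List A) (D : Finset Q) (q : Q) :
    q ∈ St act w D ↔ ∀ x, run act w x = q → x ∈ D := by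
  simp only [St, Finset.mem_compl, Finset.mem_image, not_exists, not_and]
  constructor
  · intro h x hx
    by_contra hc
    exact h x hc hx
  · intro h x hx e
    exact hx (h x e)

theorem mem_st (act : A → Q → Q) (s : A) (D : Finset Q) (q : Q) :
    q ∈ St act [s] D ↔ ∀ x, act s x = q → x ∈ D := by
  rw [mem_St]; rfl

theorem St_nil (act : A → Q → Q) (D : Finset Q) : St act [] D = D := by
  ext q; rw [mem_St]; simp [run]

theorem St_append (act : A → Q → Q) (u v : List A) (D : Finset Q) :
    St act (u ++ v) D = St act v (St act u D) := by
  ext q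
  simp only [mem_St, run_append]
  constructor
  · rintro h x hx y rfl
    exact h y hx
  · intro h x hx
    exact h _ hx x rfl

theorem St_cons (act : A → Q → Q) (s : A) (v : List A) (D : Finset Q) :
    St act (s :: v) D = St act v (St act [s] D) := St_append act [s] v D

theorem St_mono (act : A → Q → Q) (w : List A) {D E : Finset Q} (h : D ⊆ E) :
    St act w D ⊆ St act w E := by
  intro q; simp only [mem_St]
  intro hq x hx; exact h (hq x hx)

theorem card_le_St (act : A → Q → Q) (w : List A) (D : Finset Q) :
    D.card ≤ (St act w D).card := by
  have h1 : (Dᶜ.image (run act w)).card ≤ Dᶜ.card := Finset.card_image_le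
  have h2 := Finset.card_compl (Dᶜ.image (run act w))
  have h3 := Finset.card_compl D
  have h4 := Finset.card_le_univ D
  unfold St
  omega

theorem card_St_append (act : A → Q → Q) (u v : List A) (D : Finset Q) :
    (St act u D).card ≤ (St act (u ++ v) D).card := by
  rw [St_append]; exact card_le_St _ _ _

theorem St_suffix (act : A → Q → Q) (u v : List A) (D : Finset Q) :
    St act v ∅ ⊆ St act (u ++ v) D := by
  rw [St_append]; exact St_mono _ _ (Finset.empty_subset _)

theorem card_lt_St (act : A → Q → Q) (w : List A) (D : Finset Q) {x y : Q} (hx : x ∉ D)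
    (hy : y ∉ D) (hxy : x ≠ y) (h : run act w x = run act w y) :
    D.card < (St act w D).card := by
  have h1 : (Dᶜ.image (run act w)).card < Dᶜ.card := by
    refine lt_of_le_of_ne Finset.card_image_le ?_
    intro hc
    rw [Finset.card_image_iff] at hc
    exact hxy (hc (by simpa using hx) (by simpa using hy) h)
  have h2 := Finset.card_compl (Dᶜ.image (run act w))
  have h3 := Finset.card_compl D
  have h4 := Finset.card_le_univ D
  unfold St
  omega

theorem exists_merge (act : A → Q → Q) (w : List A) (D : Finset Q)
    (h : D.card < (St act w D).card) :
    ∃ x y, x ∉ D ∧ y ∉ D ∧ x ≠ y ∧ run act w x = run act w y := by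
  by_contra hc
  push Not at hc
  have h1 : (Dᶜ.image (run act w)).card = Dᶜ.card := by
    rw [Finset.card_image_iff]
    intro x hx y hy e
    by_contra hne
    exact hc x y (by simpa using hx) (by simpa using hy) hne e
  have h2 := Finset.card_compl (Dᶜ.image (run act w))
  have h3 := Finset.card_compl D
  have h4 := Finset.card_le_univ D
  unfold St at h
  omega

theorem wordImage_eq (act : A → Q → Q) (w : List A) (R : Finset Q) :
    wordImage act R w = R.image (run act w) := by
  induction w generalizing R with
  | nil => ext q; simp [wordImage, run]
  | cons s w ih =>
    rw [wordImage, ih, Finset.image_image]; rfl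

theorem card_wordImage (act : A → Q → Q) (w : List A) :
    (wordImage act Finset.univ w).card + (St act w ∅).card = Fintype.card Q := by
  rw [wordImage_eq, St, Finset.compl_empty]
  exact Finset.card_add_card_compl _

theorem st_subset (act : A → Q → Q) (s : A) (D : Finset Q) :
    St act [s] D ⊆ St act [s] ∅ ∪ D.image (act s) := by
  intro q hq
  rw [mem_st] at hq
  simp only [Finset.mem_union, mem_st, Finset.mem_image]
  by_cases h : ∃ x, act s x = q
  · obtain ⟨x, hx⟩ := h
    exact Or.inr ⟨x, hq x hx, hx⟩
  · left; intro x hx; exact absurd ⟨x, hx⟩ h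

theorem card_St_compl (act : A → Q → Q) (s : A) (D : Finset Q) :
    (St act [s] D).card ≤ D.card + (St act [s] ∅).card := by
  have h := Finset.card_le_card (st_subset act s D)
  have h2 := Finset.card_union_le (St act [s] ∅) (D.image (act s))
  have h3 : (D.image (act s)).card ≤ D.card := Finset.card_image_le
  omega

/-! skew Bollobas for pairs -/

theorem bollobas (D : Fin 7 → Finset Q) (x y : Fin 7 → Q) (hD : ∀ i, (D i).card = 2)
    (hd : ∀ i, x i ∉ D i ∧ y i ∉ D i) (ho : ∀ i j, j < i → x i ∈ D j ∨ y i ∈ D j) : False := by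
  classical
  have hd2 : ∀ i, ∃ p q, p ≠ q ∧ D i = {p, q} := fun i => Finset.card_eq_two.1 (hD i)
  choose p q _ hpq using hd2
  let φ : Q → ℚ := fun z => ((Fintype.equivFin Q z : ℕ) : ℚ)
  have hφ : Function.Injective φ := by
    intro a b h
    have : ((Fintype.equivFin Q a : ℕ)) = (Fintype.equivFin Q b : ℕ) := by
      have h' : ((Fintype.equivFin Q a : ℕ) : ℚ) = ((Fintype.equivFin Q b : ℕ) : ℚ) := h
      exact_mod_cast h'
    exact (Fintype.equivFin Q).injective (Fin.ext this)
  let X : Fin 7 → ℚ := fun i => φ (x i)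
  let Y : Fin 7 → ℚ := fun i => φ (y i)
  let S : Fin 7 → ℚ := fun i => φ (p i) + φ (q i)
  let T : Fin 7 → ℚ := fun i => φ (p i) * φ (q i)
  let M1 : Matrix (Fin 7) (Fin 6) ℚ := Matrix.of fun i =>
    ![(X i * Y i) ^ 2, X i * Y i * (X i + Y i), (X i) ^ 2 + (Y i) ^ 2, X i * Y i, X i + Y i, 1]
  let M2 : Matrix (Fin 6) (Fin 7) ℚ := Matrix.of fun k j =>
    ![1, - S j, T j, (S j) ^ 2, - (S j * T j), (T j) ^ 2] k
  have key : ∀ i j, (M1 * M2) i j =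
      (φ (x i) - φ (p j)) * (φ (x i) - φ (q j)) * ((φ (y i) - φ (p j)) * (φ (y i) - φ (q j))) := by
    intro i j
    simp only [Matrix.mul_apply, Fin.sum_univ_six, M1, M2, Matrix.of_apply]
    simp [X, Y, S, T]
    ring
  have hz : ∀ i j, j < i → (M1 * M2) i j = 0 := by
    intro i j hij
    rw [key]
    rcases ho i j hij with h | h <;> rw [hpq] at h <;> simp at h <;> rcases h with h | h <;>
      simp [h]
  have hnz : ∀ i, (M1 * M2) i i ≠ 0 := by
    intro i
    rw [key]
    obtain ⟨h1, h2⟩ := hd i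
    rw [hpq] at h1 h2
    simp only [Finset.mem_insert, Finset.mem_singleton, not_or] at h1 h2
    simp only [ne_eq, mul_eq_zero, sub_eq_zero, hφ.eq_iff]
    tauto
  have hdet : (M1 * M2).det ≠ 0 := by
    rw [Matrix.det_of_isUpperTriangular (M := M1 * M2) (fun i j h => hz i j h)]
    exact Finset.prod_ne_zero_iff.2 fun i _ => hnz i
  have hrank : (M1 * M2).rank = 7 := by
    rw [Matrix.rank_of_isUnit]
    · simp
    · rw [Matrix.isUnit_iff_isUnit_det]; exact hdet.isUnit
  have h1 := Matrix.rank_mul_le_left M1 M2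
  have h2 := Matrix.rank_le_width M1
  omega

theorem frankl (act : A → Q → Q) (P : A → Prop)
    (hP : ∀ s, P s → (St act [s] ∅).card ≤ 1) (D : Finset Q) (hD : D.card = 2)
    (hex : ∃ v : List A, (∀ s ∈ v, P s) ∧ 3 ≤ (St act v D).card) :
    ∃ v : List A, v.length ≤ 6 ∧ (∀ s ∈ v, P s) ∧ (St act v D).card = 3 := by
  classical
  have hex' : ∃ l, ∃ v : List A, v.length = l ∧ (∀ s ∈ v, P s) ∧ 3 ≤ (St act v D).card := by
    obtain ⟨v, hv⟩ := hex
    exact ⟨_, v, rfl, hv⟩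
  obtain ⟨v, hl, hvP, hv3⟩ := Nat.find_spec hex'
  have hmin : ∀ u : List A, u.length < v.length → (∀ s ∈ u, P s) → (St act u D).card ≤ 2 := by
    intro u hu huP
    by_contra hc
    exact Nat.find_min hex' (m := u.length) (by omega) ⟨u, rfl, huP, by omega⟩
  refine ⟨v, ?_, hvP, ?_⟩
  · by_contra hlen
    push Not at hlen
    have hDi : ∀ i : Fin 7, (St act (v.take i) D).card = 2 := by
      intro i
      apply le_antisymm
      · apply hmin
        · have := i.2; simp; omega
        · intro s hs; exact hvP s (List.mem_of_mem_take hs)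
      · rw [← hD]; exact card_le_St _ _ _
    have hm : ∀ i : Fin 7, ∃ x y, x ∉ St act (v.take i) D ∧ y ∉ St act (v.take i) D ∧ x ≠ y ∧
        run act (v.drop i) x = run act (v.drop i) y := by
      intro i
      apply exists_merge
      rw [hDi, ← St_append, List.take_append_drop]
      omega
    choose x y hx hy hxy hr using hm
    apply bollobas (fun i : Fin 7 => St act (v.take i) D) x y hDi (fun i => ⟨hx i, hy i⟩)
    intro i j hij
    by_contra hc
    push Not at hc
    have h1 := card_lt_St act (v.drop i) _ hc.1 hc.2 (hxy i) (hr i)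
    rw [hDi, ← St_append] at h1
    have h2 := hmin (v.take j ++ v.drop i) (by
      have := i.2; have := j.2; have : (j : ℕ) < i := hij
      simp; omega) (by
      intro s hs
      rw [List.mem_append] at hs
      rcases hs with hs | hs
      · exact hvP s (List.mem_of_mem_take hs)
      · exact hvP s (List.mem_of_mem_drop hs))
    omega
  · rcases List.eq_nil_or_concat v with rfl | ⟨v', s, rfl⟩
    · rw [St_nil] at hv3; omega
    · have h1 := hmin v' (by simp) (fun t ht => hvP t (by simp [ht]))
      have h2 := card_St_compl act s (St act v' D)
      have h3 := hP s (hvP s (by simp))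
      simp only [List.concat_eq_append] at hv3 ⊢
      rw [St_append] at hv3 ⊢
      omega

/-- abstract data for the main case -/
structure Core (Q : Type*) where
  PM : (Q → Q) → Prop
  R : ℕ → Q → Q → Prop
  b : Q → Q
  k1 : Q
  k2 : Q
  hk : k1 ≠ k2
  inj : ∀ p, PM p → ∀ x y, p x = p y → x = y
  hk1 : ∀ p, PM p → p k1 = k1 ∨ p k1 = k2
  hb1 : ∀ q, b q ≠ k1
  hbk : b k1 = b k2
  binj : ∀ x y, b x = b y → x = y ∨ ((x = k1 ∨ x = k2) ∧ (y = k1 ∨ y = k2))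
  hp : ∀ l x z p, PM p → R l x z → R (l + 1) (p x) (p z)
  hR : ∀ l x z, (x = k1 ∨ x = k2) → x ≠ z → R l x z → R (l + 1) k1 (b z)
  h8 : ∀ l x z, l ≤ 8 → x ≠ z → R l x z → (x = k1 ∨ x = k2) ∨ (z = k1 ∨ z = k2)

theorem Core.hp' {Q : Type*} (C : Core Q) {l m : ℕ} {x z x' z' : Q} {p : Q → Q} (h : C.PM p)
    (hr : C.R l x z) (hx : p x = x') (hz : p z = z') (hm : l + 1 = m) : C.R m x' z' := by
  subst hx hz hm; exact C.hp _ _ _ _ h hr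

theorem Core.InT {Q : Type*} (C : Core Q) {l : ℕ} {z g : Q} {u1 u2 : Q → Q} (h1 : C.PM u1)
    (h2 : C.PM u2) (hu1 : u1 C.k1 = C.k2) (hu2 : u2 C.k2 = g) (hg1 : g ≠ C.k1) (hg2 : g ≠ C.k2)
    (hl : l ≤ 6) (hz : z ≠ C.k1) (hr : C.R l C.k1 z) :
    u2 (u1 z) = C.k1 ∨ u2 (u1 z) = C.k2 := by
  have h3 := C.hp _ _ _ _ h2 (C.hp _ _ _ _ h1 hr)
  rw [hu1, hu2] at h3
  have h4 : g ≠ u2 (u1 z) := by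
    intro hc
    have := C.inj _ h2 C.k2 (u1 z) (by rw [hu2, hc])
    have := C.inj _ h1 C.k1 z (by rw [hu1, this])
    exact hz this.symm
  have := C.h8 _ _ _ (by omega) h4 h3
  tauto

theorem Core.InB {Q : Type*} (C : Core Q) {l : ℕ} {z g : Q} {u1 u2 p : Q → Q} (h1 : C.PM u1)
    (h2 : C.PM u2) (hu1 : u1 C.k1 = C.k2) (hu2 : u2 C.k2 = g) (hg1 : g ≠ C.k1) (hg2 : g ≠ C.k2)
    (hl : l ≤ 4) (hz : z ≠ C.k1) (hr : C.R l C.k1 z) (hp : C.PM p) :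
    u2 (u1 (C.b (p z))) = C.k1 ∨ u2 (u1 (C.b (p z))) = C.k2 := by
  apply C.InT (l := l + 1 + 1) h1 h2 hu1 hu2 hg1 hg2 (by omega) (C.hb1 _)
  apply C.hR _ _ _ (C.hk1 _ hp) _ (C.hp _ _ _ _ hp hr)
  intro hc
  exact hz (C.inj _ hp _ _ hc).symm

set_option maxHeartbeats 2000000 in
theorem core4 {Q : Type*} (C : Core Q) (e3 e4 g : Q) (p4 u1 u2 : Q → Q)
    (hp4 : C.PM p4) (h1 : C.PM u1) (h2 : C.PM u2)
    (h31 : e3 ≠ C.k1) (h32 : e3 ≠ C.k2) (h41 : e4 ≠ C.k1) (h42 : e4 ≠ C.k2) (h43 : e4 ≠ e3)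
    (hp34 : p4 e3 = e4)
    (hu1 : u1 C.k1 = C.k2) (hu2 : u2 C.k2 = g) (hg1 : g ≠ C.k1) (hg2 : g ≠ C.k2)
    (hr3 : C.R 4 C.k1 (C.b e3)) (hrg : C.R 4 C.k1 (C.b g))
    (hy1 : u2 (u1 (C.b e4)) ≠ C.k1) (hy2 : u2 (u1 (C.b e4)) ≠ C.k2) : False := by
  have hk := C.hk
  let T : Q → Prop := fun z => u2 (u1 z) = C.k1 ∨ u2 (u1 z) = C.k2
  have hTd : ∀ z, T z ↔ (u2 (u1 z) = C.k1 ∨ u2 (u1 z) = C.k2) := fun z => Iff.rfl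
  have hT : ∀ l z, l ≤ 6 → z ≠ C.k1 → C.R l C.k1 z → T z := fun l z hl hz hr =>
    C.InT h1 h2 hu1 hu2 hg1 hg2 hl hz hr
  have hB : ∀ l z p, l ≤ 4 → z ≠ C.k1 → C.R l C.k1 z → C.PM p → T (C.b (p z)) :=
    fun l z p hl hz hr hp => C.InB h1 h2 hu1 hu2 hg1 hg2 hl hz hr hp
  have uinj : ∀ x y, u2 (u1 x) = u2 (u1 y) → x = y := fun x y h =>
    C.inj _ h1 _ _ (C.inj _ h2 _ _ h)
  have T3 : ∀ x y z, T x → T y → T z → x = y ∨ y = z ∨ x = z := by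
    intro x y z hx hy hz
    have a1 := uinj x y
    have a2 := uinj y z
    have a3 := uinj x z
    rw [hTd] at hx hy hz
    grind
  have hn4 : ¬ T (C.b e4) := by rw [hTd]; grind
  clear_value T
  have i1 := C.inj _ h1
  have i2 := C.inj _ h2
  have i4 := C.inj _ hp4
  have hzk : C.b e3 ≠ C.k1 := C.hb1 _
  have hTz : T (C.b e3) := hT 4 _ (by omega) hzk hr3
  have hTg : T (C.b g) := hT 4 _ (by omega) (C.hb1 _) hrg
  have hBz : ∀ p, C.PM p → T (C.b (p (C.b e3))) := fun p hp => hB 4 _ p (by omega) hzk hr3 hp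
  have hrz : C.R 5 C.k1 (C.b (C.b e3)) := C.hR 4 _ _ (Or.inl rfl) hzk.symm hr3
  have hrzz : C.R 6 C.k1 (C.b (C.b (C.b e3))) := C.hR 5 _ _ (Or.inl rfl) (C.hb1 _).symm hrz
  have hTbz := hT 5 _ (by omega) (C.hb1 _) hrz
  have hTbbz := hT 6 _ (by omega) (C.hb1 _) hrzz
  have hz3 : C.b e3 ≠ e3 := by
    intro hc
    have := hBz p4 hp4
    rw [hc, hp34] at this
    exact hn4 this
  generalize hz : C.b e3 = z at *
  have h8 : ∀ l x z, l ≤ 8 → x ≠ z → C.R l x z → x ≠ C.k1 → x ≠ C.k2 → z = C.k1 ∨ z = C.k2 := by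
    intro l x z hl hxz hr a1 a2
    have := C.h8 l x z hl hxz hr
    grind
  have b3 : ∀ x y z, T (C.b x) → T (C.b y) → T (C.b z) → x ≠ y → y ≠ z → x ≠ z →
      ((x = C.k1 ∨ x = C.k2) ∧ (y = C.k1 ∨ y = C.k2)) ∨
      ((y = C.k1 ∨ y = C.k2) ∧ (z = C.k1 ∨ z = C.k2)) ∨
      ((x = C.k1 ∨ x = C.k2) ∧ (z = C.k1 ∨ z = C.k2)) := by
    intro x y z hx hy hz n1 n2 n3
    have := T3 _ _ _ hx hy hz
    have := C.binj x y
    have := C.binj y z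
    have := C.binj x z
    grind
  have hk1u2 := C.hk1 _ h2
  have hk1p4 := C.hk1 _ hp4
  by_cases hc : T (C.b C.k1)
  · -- second case
    have hc2 : T (C.b C.k2) := by rw [← C.hbk]; exact hc
    have hall : ∀ q, T (C.b q) → q = C.k1 ∨ q = C.k2 ∨ q = e3 := by
      intro q hq
      by_contra hcc
      push Not at hcc
      have := b3 C.k1 e3 q hc (by rw [hz]; exact hTz) hq h31.symm (by grind) (by grind)
      grind
    have hz2 : z = C.k2 := by
      have := hall z hTbz
      grind
    have hg3 : g = e3 := by
      have := hall g hTg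
      grind
    rw [hz2] at hr3 hrz hBz hz hTz hTbz hTbbz hrzz
    have hbq : C.b C.k2 = e3 := by
      have a1 := hall _ hTbbz
      have a2 := C.hb1 C.k2
      have a3 : C.b C.k2 ≠ C.k2 := by
        intro hh
        have := C.binj C.k2 e3 (by rw [hz, hh])
        grind
      grind
    rw [hbq] at hrz hTbz hc2
    have hT4 : ¬ T e4 := by
      intro hh
      have := T3 _ _ _ hh hTz hTbz
      grind
    have hk2p4 := hall _ (hBz p4 hp4)
    have hk2u1 := hall _ (hBz u1 h1)
    have r4 : C.R 5 (p4 C.k1) (p4 C.k2) := C.hp 4 _ _ _ hp4 hr3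
    have r5 : C.R 6 (p4 C.k1) e4 := C.hp' hp4 hrz rfl hp34 rfl
    rcases hk1p4 with hq | hq
    · rw [hq] at r5
      exact hT4 (hT 6 _ (by omega) h41 r5)
    · rw [hq] at r5
      rcases hk2p4 with hq2 | hq2 | hq2
      · -- swap
        have a1 : C.R 7 g (u2 e4) := C.hp' h2 r5 hu2 rfl rfl
        have a2 := h8 7 _ _ (by omega) (by intro hh; rw [← hu2] at hh; exact h42 (i2 _ _ hh).symm) a1 hg1 hg2
        -- u1 swaps and e3 -> e4
        have a3 := (hTd _).1 hTz
        have a4 := (hTd _).1 hTbz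
        have a5 : u1 C.k2 = C.k1 := by
          rcases hk2u1 with h | h | h
          · exact h
          · exact absurd (i1 _ _ (h.trans hu1.symm)).symm hk
          · exfalso
            rw [h] at a3
            have b1 := i2 e3 e4
            have b2 := i2 e3 C.k1
            have b3 := i2 e4 C.k1
            grind
        have a6 : u1 e3 = e4 := by
          have b0 := i1 e3 C.k2
          have b1 := i2 (u1 e3) e4
          have b2 := i2 (u1 e3) C.k1
          have b3 := i2 e4 C.k1
          grind
        have a7 : C.R 5 (u2 C.k1) e3 := C.hp' h2 hr3 rfl (hu2.trans hg3) rfl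
        have a8 : u2 C.k1 = C.k1 := by
          rcases hk1u2 with h | h
          · exact h
          · exfalso
            rw [h] at a7
            have : C.R 6 C.k1 e4 := C.hp' h1 a7 a5 a6 rfl
            exact hT4 (hT 6 _ (by omega) h41 this)
        have a9 : C.R 6 C.k1 (u2 e3) := C.hp' h2 hrz a8 rfl rfl
        have a10 := hT 6 _ (by omega) (by intro hh; rw [← a8] at hh; exact h31 (i2 _ _ hh)) a9
        have a11 := T3 _ _ _ a10 hTz hTbz
        have b1 := i2 e3 e4
        have b2 := i2 e3 C.k1
        have b3 := i2 e4 C.k1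
        have b4 := i2 e3 C.k2
        grind
      · exact absurd (i4 _ _ (hq.trans hq2.symm)) hk
      · rw [hq, hq2] at r4
        have a1 : C.R 6 e3 e4 := C.hp' hp4 r4 hq2 hp34 rfl
        have := C.h8 6 _ _ (by omega) h43.symm a1
        grind
  · have hc2 : ¬ T (C.b C.k2) := by rw [← C.hbk]; exact hc
    have hTbe3 : T (C.b e3) := by rw [hz]; exact hTz
    have hall : ∀ q, T (C.b q) → q = e3 ∨ q = z := by
      intro q hq
      by_contra hcc
      push Not at hcc
      have := b3 z e3 q hTbz hTbe3 hq hz3 (by grind) (by grind)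
      grind
    have hzk2 : z ≠ C.k2 := by intro hh; rw [hh] at hTbz; exact hc2 hTbz
    have h4z : e4 ≠ z := by intro hh; rw [hh] at hn4; exact hn4 hTbz
    have m1 := hall _ (hBz u1 h1)
    have m2 := hall _ (hBz u2 h2)
    have m4 := hall _ (hBz p4 hp4)
    have mg := hall _ hTg
    have t1 := (hTd _).1 hTz
    have u1z : u1 z = e3 := by
      rcases m1 with h | h
      · exact h
      · rw [h] at t1; grind
    rw [u1z] at t1
    have bz : C.b z = e3 := by
      have a1 := hall _ hTbbz
      rcases a1 with h | h
      · exact h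
      · exfalso
        have := C.binj z e3 (by rw [h, hz])
        grind
    rw [bz] at hTbz
    have hT4 : ¬ T e4 := by
      intro hh
      have := T3 _ _ _ hh hTz hTbz
      grind
    have r1 : C.R 5 (p4 C.k1) (p4 z) := C.hp 4 _ _ _ hp4 hr3
    rcases m4 with hq | hq
    · rw [hq] at r1
      have r2 : C.R 6 (p4 (p4 C.k1)) e4 := C.hp' hp4 r1 rfl hp34 rfl
      have r3 : p4 (p4 C.k1) = C.k1 := by
        rcases hk1p4 with h | h
        · rw [h, h]
        · rw [h] at r2 ⊢
          have := C.h8 6 _ _ (by omega) (by intro hh; rw [← hp34] at hh; exact h32 (i4 _ _ hh).symm) r2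
          have := i4 C.k1 C.k2
          grind
      rw [r3] at r2
      exact hT4 (hT 6 _ (by omega) h41 r2)
    · rw [hq] at r1
      rcases hk1p4 with h | h
      · have r2 : C.R 5 C.k2 e3 := C.hp' h1 hr3 hu1 u1z rfl
        have r3 : C.R 6 (p4 C.k2) e4 := C.hp' hp4 r2 rfl hp34 rfl
        have r4 := C.h8 6 _ _ (by omega) (by intro hh; rw [← hp34] at hh; exact h32 (i4 _ _ hh).symm) r3
        have r5 : p4 C.k2 = C.k2 := by
          have := i4 C.k1 C.k2
          grind
        rw [r5] at r3
        have a1 : C.R 7 g (u2 e4) := C.hp' h2 r3 hu2 rfl rfl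
        have a2 := h8 7 _ _ (by omega) (by intro hh; rw [← hu2] at hh; exact h42 (i2 _ _ hh).symm) a1 hg1 hg2
        have b1 := i2 e3 e4
        have b2 := i2 e3 C.k1
        have b3 := i2 e4 C.k1
        grind
      · rw [h] at r1
        have a1 : C.R 6 g (u2 z) := C.hp' h2 r1 hu2 rfl rfl
        have a2 := h8 6 _ _ (by omega) (by intro hh; rw [← hu2] at hh; exact hzk2 (i2 _ _ hh).symm) a1 hg1 hg2
        grind

set_option maxHeartbeats 2000000 in
theorem core5 {Q : Type*} (C : Core Q) (e3 e4 e5 g : Q) (p5 u1 u2 : Q → Q)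
    (hp5 : C.PM p5) (h1 : C.PM u1) (h2 : C.PM u2)
    (h31 : e3 ≠ C.k1) (h32 : e3 ≠ C.k2) (h41 : e4 ≠ C.k1) (h42 : e4 ≠ C.k2) (h43 : e4 ≠ e3)
    (h51 : e5 ≠ C.k1) (h52 : e5 ≠ C.k2) (h53 : e5 ≠ e3) (h54 : e5 ≠ e4)
    (hp45 : p5 e4 = e5)
    (hu1 : u1 C.k1 = C.k2) (hu2 : u2 C.k2 = g) (hg1 : g ≠ C.k1) (hg2 : g ≠ C.k2)
    (hr3 : C.R 4 C.k1 (C.b e3)) (hrg : C.R 4 C.k1 (C.b g))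
    (hy4 : u2 (u1 (C.b e4)) = C.k1 ∨ u2 (u1 (C.b e4)) = C.k2)
    (hy1 : u2 (u1 (C.b e5)) ≠ C.k1) (hy2 : u2 (u1 (C.b e5)) ≠ C.k2) : False := by
  have hk := C.hk
  let T : Q → Prop := fun z => u2 (u1 z) = C.k1 ∨ u2 (u1 z) = C.k2
  have hTd : ∀ z, T z ↔ (u2 (u1 z) = C.k1 ∨ u2 (u1 z) = C.k2) := fun z => Iff.rfl
  have hT : ∀ l z, l ≤ 6 → z ≠ C.k1 → C.R l C.k1 z → T z := fun l z hl hz hr =>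
    C.InT h1 h2 hu1 hu2 hg1 hg2 hl hz hr
  have hB : ∀ l z p, l ≤ 4 → z ≠ C.k1 → C.R l C.k1 z → C.PM p → T (C.b (p z)) :=
    fun l z p hl hz hr hp => C.InB h1 h2 hu1 hu2 hg1 hg2 hl hz hr hp
  have uinj : ∀ x y, u2 (u1 x) = u2 (u1 y) → x = y := fun x y h =>
    C.inj _ h1 _ _ (C.inj _ h2 _ _ h)
  have T3 : ∀ x y z, T x → T y → T z → x = y ∨ y = z ∨ x = z := by
    intro x y z hx hy hz
    have a1 := uinj x y
    have a2 := uinj y z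
    have a3 := uinj x z
    rw [hTd] at hx hy hz
    grind
  have hn5 : ¬ T (C.b e5) := by rw [hTd]; grind
  have hT4 : T (C.b e4) := hy4
  clear_value T
  have i1 := C.inj _ h1
  have i2 := C.inj _ h2
  have i5 := C.inj _ hp5
  have hTz : T (C.b e3) := hT 4 _ (by omega) (C.hb1 _) hr3
  have hTg : T (C.b g) := hT 4 _ (by omega) (C.hb1 _) hrg
  have hrz : C.R 5 C.k1 (C.b (C.b e3)) := C.hR 4 _ _ (Or.inl rfl) (C.hb1 _).symm hr3
  have hTbz := hT 5 _ (by omega) (C.hb1 _) hrz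
  have hall : ∀ q, T (C.b q) → q = e3 ∨ q = e4 := by
    intro q hq
    have := T3 _ _ _ hq hTz hT4
    have := C.binj q e3
    have := C.binj q e4
    have := C.binj e3 e4
    grind
  have hz3 : C.b e3 = e3 := by
    rcases hall _ hTbz with h | h
    · exact h
    · exfalso
      have := hB 4 _ p5 (by omega) (C.hb1 _) hr3 hp5
      rw [h, hp45] at this
      exact hn5 this
  rw [hz3] at hr3 hTz
  have hB3 : ∀ p, C.PM p → p e3 = e3 ∨ p e3 = e4 := fun p hp =>
    hall _ (hB 4 _ p (by omega) h31 hr3 hp)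
  have m1 := hB3 _ h1
  have m2 := hB3 _ h2
  have m5 := hB3 _ hp5
  have mg := hall _ hTg
  have t3 := (hTd _).1 hTz
  have u13 : u1 e3 = e4 := by
    rcases m1 with h | h
    · rw [h] at t3; grind
    · exact h
  rw [u13] at t3
  have hk1u2 := C.hk1 _ h2
  have hk1p5 := C.hk1 _ hp5
  have h8 : ∀ l x z, l ≤ 8 → x ≠ z → C.R l x z → x ≠ C.k1 → x ≠ C.k2 → z = C.k1 ∨ z = C.k2 := by
    intro l x z hl hxz hr a1 a2
    have := C.h8 l x z hl hxz hr
    grind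
  have n1 := i2 e4 C.k1
  -- {k2, e4} at 5
  have r1 : C.R 5 C.k2 e4 := C.hp' h1 hr3 hu1 u13 rfl
  have r2 : C.R 6 (p5 C.k2) e5 := C.hp' hp5 r1 rfl hp45 rfl
  have hne : p5 C.k2 ≠ e5 := by
    intro hh; rw [← hp45] at hh; exact h42 (i5 _ _ hh).symm
  have r3 := C.h8 6 _ _ (by omega) hne r2
  have hp52 : p5 C.k2 = C.k1 := by
    by_contra hcc
    have r4 : p5 C.k2 = C.k2 := by grind
    rw [r4] at r2
    have a1 : C.R 7 g (u2 e5) := C.hp' h2 r2 hu2 rfl rfl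
    have a2 := h8 7 _ _ (by omega) (by intro hh; rw [← hu2] at hh; exact h52 (i2 _ _ hh).symm) a1 hg1 hg2
    have b1 := i2 e5 e4
    have b3 := i2 e5 C.k1
    grind
  have hp51 : p5 C.k1 = C.k2 := by
    have := i5 C.k1 C.k2
    grind
  rw [hp52] at r2
  have hT5 := hT 6 _ (by omega) h51 r2
  rcases m5 with h | h
  · have a0 : C.R 5 C.k2 e3 := C.hp' hp5 hr3 hp51 h rfl
    have a1 : C.R 6 g (u2 e3) := C.hp' h2 a0 hu2 rfl rfl
    have a2 := h8 6 _ _ (by omega) (by intro hh; rw [← hu2] at hh; exact h32 (i2 _ _ hh).symm) a1 hg1 hg2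
    grind
  · have a1 : C.R 7 C.k2 (p5 e5) := C.hp' hp5 r2 hp51 rfl rfl
    have a2 : C.R 8 g (u2 (p5 e5)) := C.hp' h2 a1 hu2 rfl rfl
    have hne2 : p5 e5 ≠ C.k2 := by
      intro hh; rw [← hp51] at hh; exact h51 (i5 _ _ hh)
    have a3 := h8 8 _ _ (by omega) (by intro hh; rw [← hu2] at hh; exact hne2 (i2 _ _ hh).symm) a2 hg1 hg2
    have b1 := i2 (p5 e5) e4
    have b2 := i2 (p5 e5) C.k1
    have b3 := i5 e5 e3
    have b4 := i5 e5 C.k2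
    grind

theorem perm_letter (act : A → Q → Q) (s : A) (h : St act [s] ∅ = ∅) :
    Function.Injective (act s) ∧ ∀ D, St act [s] D = D.image (act s) := by
  have hs : Function.Surjective (act s) := by
    intro q
    by_contra hc
    push Not at hc
    have : q ∈ St act [s] ∅ := by
      rw [mem_st]; intro x hx; exact absurd hx (hc x)
    rw [h] at this
    simp at this
  have hi := Finite.injective_iff_surjective.2 hs
  refine ⟨hi, fun D => ?_⟩
  ext q
  rw [mem_st, Finset.mem_image]
  constructor
  · intro hq
    obtain ⟨x, hx⟩ := hs q
    exact ⟨x, hq x hx, hx⟩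
  · rintro ⟨x, hx, rfl⟩ y hy
    rw [hi hy]; exact hx

theorem perm_word (act : A → Q → Q) (v : List A) (h : ∀ s ∈ v, St act [s] ∅ = ∅) (D : Finset Q) :
    St act v D = D.image (run act v) := by
  induction v generalizing D with
  | nil => rw [St_nil]; ext q; simp [run]
  | cons s v ih =>
    rw [St_cons, (perm_letter act s (h s (by simp))).2, ih (fun t ht => h t (by simp [ht])),
      Finset.image_image]
    rfl

theorem simple_letter (act : A → Q → Q) (s : A) (h : (St act [s] ∅).card = 1) :
    ∃ f x y, x ≠ y ∧ act s x = act s y ∧ St act [s] ∅ = {f} ∧ (∀ q, act s q ≠ f) ∧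
      ∀ u v, act s u = act s v → u = v ∨ ((u = x ∨ u = y) ∧ (v = x ∨ v = y)) := by
  obtain ⟨f, hf⟩ := Finset.card_eq_one.1 h
  obtain ⟨x, y, -, -, hxy, hr⟩ := exists_merge act [s] ∅ (by rw [h]; simp)
  have hr' : act s x = act s y := hr
  have himg : ((Finset.univ.erase x).image (act s)) = Finset.univ.image (act s) := by
    ext q
    simp only [Finset.mem_image, Finset.mem_erase, Finset.mem_univ, and_true, true_and]
    constructor
    · rintro ⟨z, -, hz⟩; exact ⟨z, hz⟩
    · rintro ⟨z, hz⟩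
      by_cases hzx : z = x
      · exact ⟨y, hxy.symm, by rw [← hz, hzx, hr']⟩
      · exact ⟨z, hzx, hz⟩
  have hcard : (Finset.univ.image (act s)).card + 1 = Fintype.card Q := by
    have h1 := Finset.card_add_card_compl (Finset.univ.image (act s))
    have h2 : (Finset.univ.image (act s))ᶜ = St act [s] ∅ := by
      rw [St, Finset.compl_empty]; rfl
    rw [h2, h] at h1
    exact h1
  have hinj : Set.InjOn (act s) (Finset.univ.erase x : Finset Q) := by
    rw [← Finset.card_image_iff, himg, Finset.card_erase_of_mem (Finset.mem_univ _),
      Finset.card_univ]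
    omega
  refine ⟨f, x, y, hxy, hr', hf, ?_, ?_⟩
  · intro q hq
    have : f ∈ St act [s] ∅ := by rw [hf]; simp
    rw [mem_st] at this
    simpa using this q hq
  · intro u v huv
    have hi : ∀ u v, u ≠ x → v ≠ x → act s u = act s v → u = v := by
      intro u v hu hv e
      exact hinj (by simpa using hu) (by simpa using hv) e
    by_cases hu : u = x <;> by_cases hv : v = x
    · left; rw [hu, hv]
    · right
      exact ⟨Or.inl hu, Or.inr (hi v y hv hxy.symm (by rw [← huv, hu, hr']))⟩
    · right
      exact ⟨Or.inr (hi u y hu hxy.symm (by rw [huv, hv, hr'])), Or.inl hv⟩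
    · left; exact hi u v hu hv huv

/-- non-injective part of a letter -/
def EE (act : A → Q → Q) (d : A) (q : Q) : Prop := ∃ q', q' ≠ q ∧ act d q' = act d q

theorem d_notE (act : A → Q → Q) (d : A) {q : Q} {D : Finset Q} (hq : q ∈ D)
    (h2 : (St act [d] ∅).card = 2) (hE : ¬ EE act d q) :
    3 ≤ (St act [d] D).card := by
  have hsub : insert (act d q) (St act [d] ∅) ⊆ St act [d] D := by
    intro r hr
    rw [Finset.mem_insert] at hr
    rcases hr with rfl | hr
    · rw [mem_st]
      intro x hx
      by_cases hxq : x = q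
      · rw [hxq]; exact hq
      · exact absurd ⟨x, hxq, hx⟩ hE
    · exact St_mono _ _ (Finset.empty_subset _) hr
  have hn : act d q ∉ St act [d] ∅ := by
    rw [mem_st]; intro h; simpa using h q rfl
  have := Finset.card_le_card hsub
  rw [Finset.card_insert_of_notMem hn] at this
  omega

theorem d_E (act : A → Q → Q) (d : A) {q : Q} (h2 : (St act [d] ∅).card = 2)
    (hE : EE act d q) : (St act [d] {q}).card = 2 := by
  rw [← h2]
  congr 1
  apply Finset.Subset.antisymm _ (St_mono _ _ (Finset.empty_subset _))
  intro r hr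
  rw [mem_st] at hr ⊢
  intro x hx
  exfalso
  have := hr x hx
  rw [Finset.mem_singleton] at this
  subst this
  obtain ⟨y, hy, e⟩ := hE
  exact hy (by simpa using hr y (by rw [e, hx]))

theorem d_one (act : A → Q → Q) (d : A) {x z : Q} (h2 : (St act [d] ∅).card = 2)
    (hx : EE act d x) (hz : ¬ EE act d z) : (St act [d] {x, z}).card = 3 := by
  apply le_antisymm
  · have hsub : St act [d] {x, z} ⊆ insert (act d z) (St act [d] ∅) := by
      intro r hr
      rw [Finset.mem_insert]
      by_contra hc
      push Not at hc
      obtain ⟨c1, c2⟩ := hc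
      rw [mem_st] at hr c2
      push Not at c2
      obtain ⟨y, hy, -⟩ := c2
      have h1 := hr y hy
      simp only [Finset.mem_insert, Finset.mem_singleton] at h1
      rcases h1 with rfl | rfl
      · obtain ⟨y', hy', e⟩ := hx
        have h3 := hr y' (by rw [e, hy])
        simp only [Finset.mem_insert, Finset.mem_singleton] at h3
        rcases h3 with h3 | h3
        · exact hy' h3
        · subst h3
          exact hz ⟨y, hy'.symm, e.symm⟩
      · exact c1 hy.symm
    have := Finset.card_le_card hsub
    have := Finset.card_insert_le (act d z) (St act [d] ∅)
    omega
  · exact d_notE act d (by simp) h2 hz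

theorem E_four (act : A → Q → Q) (d : A) (h2 : (St act [d] ∅).card = 2) (S : Finset Q)
    (hS : ∀ q ∈ S, EE act d q) : S.card ≤ 4 := by
  classical
  let T : Finset Q := Finset.univ.filter (EE act d)
  have hST : S ⊆ T := by
    intro q hq; simp [T, hS q hq]
  have h1 : (T.image (act d)).card * 2 ≤ T.card := by
    rw [Finset.card_eq_sum_card_image (act d) T]
    rw [← smul_eq_mul]
    apply Finset.card_nsmul_le_sum
    intro r hr
    rw [Finset.mem_image] at hr
    obtain ⟨q, hq, rfl⟩ := hr
    have hq' : EE act d q := by simpa [T] using hq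
    obtain ⟨q', hne, e⟩ := hq'
    have hq'2 : q' ∈ T := by
      simp only [T, Finset.mem_filter, Finset.mem_univ, true_and]
      exact ⟨q, hne.symm, e.symm⟩
    have : ({q, q'} : Finset Q) ⊆ T.filter (fun x => act d x = act d q) := by
      intro x hx
      simp only [Finset.mem_insert, Finset.mem_singleton] at hx
      rcases hx with rfl | rfl <;> simp [hq, hq'2, e]
    have h3 := Finset.card_le_card this
    rwa [Finset.card_pair hne.symm] at h3
  have hcard : (Finset.univ.image (act d)).card + 2 = Fintype.card Q := by
    have h1 := Finset.card_add_card_compl (Finset.univ.image (act d))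
    have h2' : (Finset.univ.image (act d))ᶜ = St act [d] ∅ := by
      rw [St, Finset.compl_empty]; rfl
    rw [h2', h2] at h1
    exact h1
  have h3 : (Finset.univ.image (act d)).card ≤ (T.image (act d)).card + (Tᶜ.image (act d)).card := by
    rw [← Finset.union_compl T, Finset.image_union]
    exact Finset.card_union_le _ _
  have h4 : (Tᶜ.image (act d)).card ≤ Tᶜ.card := Finset.card_image_le
  have h5 := Finset.card_add_card_compl T
  have h6 := Finset.card_le_card hST
  omega

theorem E_five (act : A → Q → Q) (d : A) (h2 : (St act [d] ∅).card = 2) {a b c e f : Q}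
    (ha : EE act d a) (hb : EE act d b) (hc : EE act d c) (he : EE act d e) (hf : EE act d f)
    (hn : [a, b, c, e, f].Nodup) : False := by
  have h := E_four act d h2 [a, b, c, e, f].toFinset (by
    intro q hq
    simp only [List.mem_toFinset, List.mem_cons, List.not_mem_nil, or_false] at hq
    rcases hq with rfl | rfl | rfl | rfl | rfl <;> assumption)
  rw [List.toFinset_card_of_nodup hn] at h
  simp at h

theorem cross (act : A → Q → Q) (w : List A) (h : 2 ≤ (St act w ∅).card) :
    ∃ v s v', w = v ++ s :: v' ∧ (St act v ∅).card ≤ 1 ∧ 2 ≤ (St act (v ++ [s]) ∅).card := by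
  induction w using List.reverseRecOn with
  | nil => rw [St_nil] at h; simp at h
  | append_singleton w s ih =>
    by_cases hw : 2 ≤ (St act w ∅).card
    · obtain ⟨v, t, v', e, h1, h2⟩ := ih hw
      exact ⟨v, t, v' ++ [s], by rw [e]; simp, h1, h2⟩
    · exact ⟨w, s, [], rfl, by omega, h⟩

/-- consequence of the hypothesis -/
def HH (act : A → Q → Q) : Prop := ∀ w1 w2 : List A, w1.length ≤ 4 →
  2 ≤ (St act w1 ∅).card → w1.length + w2.length ≤ 9 → (St act (w1 ++ w2) ∅).card ≠ 3

theorem decomp (act : A → Q → Q) (H : HH act) (w : List A) (hl : w.length ≤ 9)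
    (h3 : (St act w ∅).card = 3)
    (hmin : ∀ w' : List A, (St act w' ∅).card = 3 → w.length ≤ w'.length) :
    ∃ a p2 p3 p4 P b U, w = a :: p2 :: p3 :: p4 :: (P ++ b :: U) ∧ (St act [a] ∅).card = 1 ∧
      (St act (a :: p2 :: p3 :: p4 :: P) ∅).card = 1 ∧
      2 ≤ (St act (a :: p2 :: p3 :: p4 :: (P ++ [b])) ∅).card ∧
      (∀ p ∈ p2 :: p3 :: p4 :: P, St act [p] ∅ = ∅) := by
  obtain ⟨v, s, v', e, h1, h2⟩ := cross act w (by omega)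
  have hv : 4 ≤ v.length := by
    by_contra hc
    refine H (v ++ [s]) v' (by simp; omega) h2 ?_ ?_
    · rw [e] at hl; simp at hl ⊢; omega
    · rw [← h3, e]; simp
  match v, hv with
  | a :: p2 :: p3 :: p4 :: P, _ =>
    have ha : 1 ≤ (St act [a] ∅).card := by
      by_contra hc
      have h0 : St act [a] ∅ = ∅ := by rw [← Finset.card_eq_zero]; omega
      have := hmin (p2 :: p3 :: p4 :: P ++ s :: v') (by
        rw [← h3, e]
        simp only [List.cons_append]
        rw [St_cons act a, h0])
      rw [e] at this
      simp at this
    have hm : (St act [a] ∅).card ≤ (St act (a :: p2 :: p3 :: p4 :: P) ∅).card :=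
      card_St_append act [a] _ ∅
    refine ⟨a, p2, p3, p4, P, s, v', e, by omega, by omega, h2, ?_⟩
    intro p hp
    by_contra hne
    obtain ⟨x, y, hxy⟩ := List.append_of_mem hp
    have c1 : 1 ≤ (St act [p] ∅).card := Finset.card_pos.2 (Finset.nonempty_iff_ne_empty.2 hne)
    have c2 : St act [p] ∅ ⊆ St act (a :: x ++ [p]) ∅ := St_suffix act (a :: x) [p] ∅
    have c3 : a :: p2 :: p3 :: p4 :: P = (a :: x ++ [p]) ++ y := by
      rw [hxy]; simp
    have c4 : (St act (a :: x ++ [p]) ∅).card ≤ 1 := by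
      refine le_trans (card_St_append act _ y ∅) ?_
      rw [← c3]; exact h1
    have c5 : St act [p] ∅ = St act (a :: x ++ [p]) ∅ :=
      Finset.eq_of_subset_of_card_le c2 (by omega)
    have := hmin ([p] ++ (y ++ s :: v')) (by
      rw [← h3, e, c3, St_append, c5, ← St_append]; simp)
    rw [e, c3] at this
    simp at this
    omega

theorem nodrop (act : A → Q → Q) (H : HH act) (d : A) (hd : (St act [d] ∅).card = 2)
    (v : List A) (hv : ∀ s ∈ v, (St act [s] ∅).card ≤ 1) :
    (St act ([d] ++ v) ∅).card = 2 := by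
  apply le_antisymm
  · by_contra hc
    rw [St_append] at hc
    obtain ⟨u, hu, -, h3⟩ := frankl act (fun s => (St act [s] ∅).card ≤ 1) (fun s h => h)
      (St act [d] ∅) hd ⟨v, hv, by omega⟩
    refine H [d] u (by simp) (by omega) (by simp; omega) ?_
    rw [St_append]; exact h3
  · rw [← hd]; exact card_St_append _ _ _ _

/-- last letter has defect two and is applied right after the first drop: impossible -/
theorem caseB0 (act : A → Q → Q) (H : HH act) (a p2 p3 p4 d : A) (P : List A)
    (hl : (a :: p2 :: p3 :: p4 :: (P ++ [d])).length ≤ 9)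
    (h3 : (St act (a :: p2 :: p3 :: p4 :: (P ++ [d])) ∅).card = 3)
    (hmin : ∀ w' : List A, (St act w' ∅).card = 3 →
      (a :: p2 :: p3 :: p4 :: (P ++ [d])).length ≤ w'.length)
    (hdis : ∀ x y z : List A, p2 :: p3 :: p4 :: P = x ++ y ++ z → y ≠ [] →
      ∀ e, St act [a] ∅ = {e} → run act x e ≠ run act (x ++ y) e)
    (ha : (St act [a] ∅).card = 1) (hd : (St act [d] ∅).card = 2)
    (hP : ∀ p ∈ p2 :: p3 :: p4 :: P, St act [p] ∅ = ∅) : False := by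
  obtain ⟨e, he⟩ := Finset.card_eq_one.1 ha
  have hdis' := fun x y z h1 h2 => hdis x y z h1 h2 e he
  have hword : ∀ q : List A, (∀ p ∈ q, St act [p] ∅ = ∅) →
      St act (a :: q) ∅ = {run act q e} := by
    intro q hq
    rw [St_cons, he, perm_word act q hq, Finset.image_singleton]
  have hshort : ∀ q : List A, (∀ p ∈ q, St act [p] ∅ = ∅) → q.length < P.length + 3 →
      EE act d (run act q e) := by
    intro q hq hlq
    by_contra hE
    have h1 : 3 ≤ (St act (a :: q ++ [d]) ∅).card := by
      rw [St_append, hword q hq]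
      exact d_notE act d (by simp) hd hE
    have h2 : (St act (a :: q ++ [d]) ∅).card ≤ 3 := by
      rw [St_append, hword q hq]
      have := card_St_compl act d {run act q e}
      simp at this
      omega
    have := hmin _ (le_antisymm h2 h1)
    simp at this
    omega
  have hlast : ¬ EE act d (run act (p2 :: p3 :: p4 :: P) e) := by
    intro hE
    have h1 := d_E act d hd hE
    rw [← hword _ hP, ← St_append] at h1
    simp only [List.cons_append] at h1
    omega
  -- the companion state
  have hc2 : (St act [d, a] ∅).card = 2 := nodrop act H d hd [a] (by simp [ha])
  have hmem : e ∈ St act [d, a] ∅ := by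
    apply St_suffix act [d] [a]
    rw [he]; simp
  obtain ⟨t, ht, hda⟩ : ∃ t, e ≠ t ∧ St act [d, a] ∅ = {e, t} := by
    obtain ⟨x, y, hxy, h⟩ := Finset.card_eq_two.1 hc2
    rw [h] at hmem
    simp only [Finset.mem_insert, Finset.mem_singleton] at hmem
    rcases hmem with rfl | rfl
    · exact ⟨y, hxy, h⟩
    · exact ⟨x, hxy.symm, by rw [h, Finset.pair_comm]⟩
  have hiff : ∀ q : List A, (∀ p ∈ q, St act [p] ∅ = ∅) → q.length ≤ 6 →
      (EE act d (run act q e) ↔ EE act d (run act q t)) := by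
    intro q hq hlq
    have h1 : St act ([d] ++ (a :: q)) ∅ = {run act q e, run act q t} := by
      have : [d] ++ (a :: q) = [d, a] ++ q := by simp
      rw [this, St_append, hda, perm_word act q hq, Finset.image_insert, Finset.image_singleton]
    have h2 : (St act [d] {run act q e, run act q t}).card ≠ 3 := by
      have := H [d] (a :: q ++ [d]) (by simp) (by omega) (by simp; omega)
      rw [← List.append_assoc, St_append, h1] at this
      exact this
    constructor
    · intro h
      by_contra hc
      exact h2 (d_one act d hd h hc)
    · intro h
      by_contra hc
      rw [Finset.pair_comm] at h2
      exact h2 (d_one act d hd h hc)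
  have hinj : ∀ p ∈ p2 :: p3 :: p4 :: P, Function.Injective (act p) := fun p hp =>
    (perm_letter act p (hP p hp)).1
  have m2 : St act [p2] ∅ = ∅ := hP p2 (by simp)
  have m3 : St act [p3] ∅ = ∅ := hP p3 (by simp)
  have m4 : St act [p4] ∅ = ∅ := hP p4 (by simp)
  match P with
  | [] =>
    simp only [List.length_nil] at hshort
    have d12 := hdis' [] [p2] [p3, p4] (by simp) (by simp)
    have d13 := hdis' [] [p2, p3] [p4] (by simp) (by simp)
    have d23 := hdis' [p2] [p3] [p4] (by simp) (by simp)
    have E1 := hshort [] (by simp) (by simp)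
    have E2 := hshort [p2] (by simp [m2]) (by simp)
    have E3 := hshort [p2, p3] (by simp [m2, m3]) (by simp)
    have E14 := hshort [p4] (by simp [m4]) (by simp)
    have E24 := hshort [p2, p4] (by simp [m2, m4]) (by simp)
    have E34 := hshort [p3, p4] (by simp [m3, m4]) (by simp)
    have T1 := (hiff [] (by simp) (by simp)).1 E1
    have T2 := (hiff [p2] (by simp [m2]) (by simp)).1 E2
    have T3 := (hiff [p2, p3] (by simp [m2, m3]) (by simp)).1 E3
    have T14 := (hiff [p4] (by simp [m4]) (by simp)).1 E14
    have T24 := (hiff [p2, p4] (by simp [m2, m4]) (by simp)).1 E24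
    have T4 := mt (hiff [p2, p3, p4] (by simp [m2, m3, m4]) (by simp)).2 hlast
    simp only [run, List.foldl, List.append_eq, List.nil_append, List.cons_append] at *
    have i2 := hinj p2 (by simp)
    have i3 := hinj p3 (by simp)
    have n2 : act p2 e ≠ act p2 t := fun h => ht (i2 h)
    have n3 : act p3 (act p2 e) ≠ act p3 (act p2 t) := fun h => n2 (i3 h)
    have five := fun q (hq : EE act d q) => E_five act d hd E1 E2 E3 T3 hq
    have a1 : act p3 (act p2 t) ≠ e := by intro h; rw [h] at T4; exact T4 E14
    have a2 : act p3 (act p2 t) ≠ act p2 e := by intro h; rw [h] at T4; exact T4 E24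
    have mem : ∀ q, EE act d q → q = e ∨ q = act p2 e ∨ q = act p3 (act p2 e) ∨
        q = act p3 (act p2 t) := by
      intro q hq
      by_contra hc
      push Not at hc
      apply five q hq
      simp
      grind
    have b1 : t = act p2 e := by
      have c1 : t ≠ act p3 (act p2 e) := by intro h; rw [h] at T14; exact hlast T14
      have c2 : t ≠ act p3 (act p2 t) := by intro h; rw [h] at T14; rw [← h] at T4; grind
      have := mem _ T1
      grind
    have b2 : act p2 t = e := by
      have c1 : act p2 t ≠ act p3 (act p2 e) := by intro h; rw [h] at T24; exact hlast T24
      have c2 : act p2 t ≠ act p3 (act p2 t) := by intro h; rw [← h] at T4; exact T4 T24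
      have := mem _ T2
      grind
    rw [b2] at T4
    exact T4 E34
  | [p5] =>
    have m5 : St act [p5] ∅ = ∅ := hP p5 (by simp)
    simp only [List.length_cons, List.length_nil] at hshort
    have d12 := hdis' [] [p2] [p3, p4, p5] (by simp) (by simp)
    have d13 := hdis' [] [p2, p3] [p4, p5] (by simp) (by simp)
    have d23 := hdis' [p2] [p3] [p4, p5] (by simp) (by simp)
    have d14 := hdis' [] [p2, p3, p4] [p5] (by simp) (by simp)
    have d24 := hdis' [p2] [p3, p4] [p5] (by simp) (by simp)
    have d34 := hdis' [p2, p3] [p4] [p5] (by simp) (by simp)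
    have E1 := hshort [] (by simp) (by simp)
    have E2 := hshort [p2] (by simp [m2]) (by simp)
    have E3 := hshort [p2, p3] (by simp [m2, m3]) (by simp)
    have E4 := hshort [p2, p3, p4] (by simp [m2, m3, m4]) (by simp)
    have E15 := hshort [p5] (by simp [m5]) (by simp)
    have E25 := hshort [p2, p5] (by simp [m2, m5]) (by simp)
    have E35 := hshort [p2, p3, p5] (by simp [m2, m3, m5]) (by simp)
    have T4 := (hiff [p2, p3, p4] (by simp [m2, m3, m4]) (by simp)).1 E4
    have T5 := mt (hiff [p2, p3, p4, p5] (by simp [m2, m3, m4, m5]) (by simp)).2 hlast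
    simp only [run, List.foldl, List.append_eq, List.nil_append, List.cons_append] at *
    have i2 := hinj p2 (by simp)
    have i3 := hinj p3 (by simp)
    have i4 := hinj p4 (by simp)
    have n4 : act p4 (act p3 (act p2 e)) ≠ act p4 (act p3 (act p2 t)) :=
      fun h => ht (i2 (i3 (i4 h)))
    apply E_five act d hd E1 E2 E3 E4 T4
    have a1 : act p4 (act p3 (act p2 t)) ≠ e := by intro h; rw [h] at T5; exact T5 E15
    have a2 : act p4 (act p3 (act p2 t)) ≠ act p2 e := by intro h; rw [h] at T5; exact T5 E25
    have a3 : act p4 (act p3 (act p2 t)) ≠ act p3 (act p2 e) := by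
      intro h; rw [h] at T5; exact T5 E35
    simp
    grind
  | p5 :: p6 :: P' =>
    have m5 : St act [p5] ∅ = ∅ := hP p5 (by simp)
    simp only [List.length_cons] at hshort
    have d12 := hdis' [] [p2] (p3 :: p4 :: p5 :: p6 :: P') (by simp) (by simp)
    have d13 := hdis' [] [p2, p3] (p4 :: p5 :: p6 :: P') (by simp) (by simp)
    have d23 := hdis' [p2] [p3] (p4 :: p5 :: p6 :: P') (by simp) (by simp)
    have d14 := hdis' [] [p2, p3, p4] (p5 :: p6 :: P') (by simp) (by simp)
    have d24 := hdis' [p2] [p3, p4] (p5 :: p6 :: P') (by simp) (by simp)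
    have d34 := hdis' [p2, p3] [p4] (p5 :: p6 :: P') (by simp) (by simp)
    have d15 := hdis' [] [p2, p3, p4, p5] (p6 :: P') (by simp) (by simp)
    have d25 := hdis' [p2] [p3, p4, p5] (p6 :: P') (by simp) (by simp)
    have d35 := hdis' [p2, p3] [p4, p5] (p6 :: P') (by simp) (by simp)
    have d45 := hdis' [p2, p3, p4] [p5] (p6 :: P') (by simp) (by simp)
    have E1 := hshort [] (by simp) (by simp)
    have E2 := hshort [p2] (by simp [m2]) (by simp)
    have E3 := hshort [p2, p3] (by simp [m2, m3]) (by simp)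
    have E4 := hshort [p2, p3, p4] (by simp [m2, m3, m4]) (by simp)
    have E5 := hshort [p2, p3, p4, p5] (by simp [m2, m3, m4, m5]) (by simp)
    simp only [run, List.foldl, List.append_eq, List.nil_append, List.cons_append] at *
    apply E_five act d hd E1 E2 E3 E4 E5
    simp
    grind

/-- last letter has defect two, after a letter of defect one -/
theorem caseB1 (act : A → Q → Q) (H : HH act) (a p2 p3 p4 b d : A) (P U : List A)
    (hl : (a :: p2 :: p3 :: p4 :: (P ++ b :: (U ++ [d]))).length ≤ 9) (hU : U.length ≤ 2)
    (h3 : (St act (a :: p2 :: p3 :: p4 :: (P ++ b :: (U ++ [d]))) ∅).card = 3)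
    (hmin : ∀ w' : List A, (St act w' ∅).card = 3 →
      (a :: p2 :: p3 :: p4 :: (P ++ b :: (U ++ [d]))).length ≤ w'.length)
    (hdis : ∀ x y z : List A, p2 :: p3 :: p4 :: P = x ++ y ++ z → y ≠ [] →
      ∀ e, St act [a] ∅ = {e} → run act x e ≠ run act (x ++ y) e)
    (ha : (St act [a] ∅).card = 1) (hd : (St act [d] ∅).card = 2)
    (hb : 2 ≤ (St act (a :: p2 :: p3 :: p4 :: (P ++ [b])) ∅).card)
    (hletters : ∀ s ∈ a :: p2 :: p3 :: p4 :: (P ++ b :: U), (St act [s] ∅).card ≤ 1)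
    (hP : ∀ p ∈ p2 :: p3 :: p4 :: P, St act [p] ∅ = ∅) : False := by
  obtain ⟨e, he⟩ := Finset.card_eq_one.1 ha
  have hdis' := fun x y z h1 h2 => hdis x y z h1 h2 e he
  have hword : ∀ q : List A, (∀ p ∈ q, St act [p] ∅ = ∅) →
      St act (a :: q) ∅ = {run act q e} := by
    intro q hq
    rw [St_cons, he, perm_word act q hq, Finset.image_singleton]
  have hshort : ∀ q : List A, (∀ p ∈ q, St act [p] ∅ = ∅) → q.length ≤ P.length + 3 →
      EE act d (run act q e) := by
    intro q hq hlq
    by_contra hE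
    have h1 : 3 ≤ (St act (a :: q ++ [d]) ∅).card := by
      rw [St_append, hword q hq]
      exact d_notE act d (by simp) hd hE
    have h2 : (St act (a :: q ++ [d]) ∅).card ≤ 3 := by
      rw [St_append, hword q hq]
      have := card_St_compl act d {run act q e}
      simp at this
      omega
    have := hmin _ (le_antisymm h2 h1)
    simp at this
    omega
  match P with
  | [] =>
    have c1 := nodrop act H d hd (a :: p2 :: p3 :: p4 :: ([] ++ b :: U)) hletters
    have c2 := St_suffix act [d] (a :: p2 :: p3 :: p4 :: ([] ++ b :: U)) ∅
    have c3 : 2 ≤ (St act (a :: p2 :: p3 :: p4 :: ([] ++ b :: U)) ∅).card :=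
      le_trans hb (card_St_append act (a :: p2 :: p3 :: p4 :: ([] ++ [b])) U ∅)
    have c4 := Finset.eq_of_subset_of_card_le c2 (by omega)
    refine H [d] ((a :: p2 :: p3 :: p4 :: ([] ++ b :: U)) ++ [d]) (by simp) (by omega)
      (by simp; omega) ?_
    rw [← List.append_assoc, St_append, ← c4, ← St_append, ← h3]
    simp
  | p5 :: P' =>
    have m2 : St act [p2] ∅ = ∅ := hP p2 (by simp)
    have m3 : St act [p3] ∅ = ∅ := hP p3 (by simp)
    have m4 : St act [p4] ∅ = ∅ := hP p4 (by simp)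
    have m5 : St act [p5] ∅ = ∅ := hP p5 (by simp)
    simp only [List.length_cons] at hshort
    have d12 := hdis' [] [p2] (p3 :: p4 :: p5 :: P') (by simp) (by simp)
    have d13 := hdis' [] [p2, p3] (p4 :: p5 :: P') (by simp) (by simp)
    have d23 := hdis' [p2] [p3] (p4 :: p5 :: P') (by simp) (by simp)
    have d14 := hdis' [] [p2, p3, p4] (p5 :: P') (by simp) (by simp)
    have d24 := hdis' [p2] [p3, p4] (p5 :: P') (by simp) (by simp)
    have d34 := hdis' [p2, p3] [p4] (p5 :: P') (by simp) (by simp)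
    have d15 := hdis' [] [p2, p3, p4, p5] P' (by simp) (by simp)
    have d25 := hdis' [p2] [p3, p4, p5] P' (by simp) (by simp)
    have d35 := hdis' [p2, p3] [p4, p5] P' (by simp) (by simp)
    have d45 := hdis' [p2, p3, p4] [p5] P' (by simp) (by simp)
    have E1 := hshort [] (by simp) (by simp)
    have E2 := hshort [p2] (by simp [m2]) (by simp)
    have E3 := hshort [p2, p3] (by simp [m2, m3]) (by simp)
    have E4 := hshort [p2, p3, p4] (by simp [m2, m3, m4]) (by simp)
    have E5 := hshort [p2, p3, p4, p5] (by simp [m2, m3, m4, m5]) (by simp)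
    simp only [run, List.foldl, List.append_eq, List.nil_append, List.cons_append] at *
    apply E_five act d hd E1 E2 E3 E4 E5
    simp
    grind

/-- reachable missing sets (through an early drop) -/
def Reach (act : A → Q → Q) (l : ℕ) (D : Finset Q) : Prop :=
  ∃ w1 w2 : List A, w1.length ≤ 4 ∧ 2 ≤ (St act w1 ∅).card ∧ w1.length + w2.length ≤ l ∧
    St act (w1 ++ w2) ∅ = D

theorem Reach.step {act : A → Q → Q} {l : ℕ} {D : Finset Q} (h : Reach act l D) (s : A) :
    Reach act (l + 1) (St act [s] D) := by
  obtain ⟨w1, w2, h1, h2, h3, h4⟩ := h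
  exact ⟨w1, w2 ++ [s], h1, h2, by simp; omega, by rw [← List.append_assoc, St_append, h4]⟩

theorem Reach.ne3 {act : A → Q → Q} (H : HH act) {l : ℕ} {D : Finset Q} (h : Reach act l D)
    (hl : l ≤ 9) : D.card ≠ 3 := by
  obtain ⟨w1, w2, h1, h2, h3, h4⟩ := h
  rw [← h4]
  exact H w1 w2 h1 h2 (by omega)

/-- `c` is a letter of defect one missing `k1` and merging `k1` and `k2` -/
def Sim (act : A → Q → Q) (k1 k2 : Q) (c : A) : Prop :=
  St act [c] ∅ = {k1} ∧ (∀ q, act c q ≠ k1) ∧ act c k1 = act c k2 ∧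
    ∀ u v, act c u = act c v → u = v ∨ ((u = k1 ∨ u = k2) ∧ (v = k1 ∨ v = k2))

theorem Sim.pair {act : A → Q → Q} {k1 k2 : Q} {c : A} (h : Sim act k1 k2 c) (hk : k1 ≠ k2)
    {x z : Q} (hx : x = k1 ∨ x = k2) (hxz : x ≠ z) :
    St act [c] {x, z} = {k1, act c z} := by
  obtain ⟨s1, s2, s3, s4⟩ := h
  ext r
  rw [mem_st]
  simp only [Finset.mem_insert, Finset.mem_singleton]
  constructor
  · intro hr
    by_cases hq : ∃ q, act c q = r
    · obtain ⟨q, hq⟩ := hq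
      rcases hr q hq with h | h
      · subst h
        rcases hx with rfl | rfl
        · have := hr k2 (by rw [← s3, hq])
          grind
        · have := hr k1 (by rw [s3, hq])
          grind
      · right; rw [← hq, h]
    · left
      have : r ∈ St act [c] ∅ := by
        rw [mem_st]; intro y hy; exact absurd ⟨y, hy⟩ hq
      rw [s1] at this
      simpa using this
  · rintro (h | h) q hq
    · exact absurd (hq.trans h) (s2 q)
    · have := s4 q z (hq.trans h)
      grind

theorem Sim.single {act : A → Q → Q} {k1 k2 : Q} {c : A} (h : Sim act k1 k2 c)
    {z : Q} (h1 : z ≠ k1) (h2 : z ≠ k2) :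
    St act [c] {z} = {k1, act c z} := by
  obtain ⟨s1, s2, s3, s4⟩ := h
  ext r
  rw [mem_st]
  simp only [Finset.mem_insert, Finset.mem_singleton]
  constructor
  · intro hr
    by_cases hq : ∃ q, act c q = r
    · obtain ⟨q, hq⟩ := hq
      right; rw [← hq, hr q hq]
    · left
      have : r ∈ St act [c] ∅ := by
        rw [mem_st]; intro y hy; exact absurd ⟨y, hy⟩ hq
      rw [s1] at this
      simpa using this
  · rintro (h | h) q hq
    · exact absurd (hq.trans h) (s2 q)
    · have := s4 q z (hq.trans h)
      grind

theorem Sim.drop {act : A → Q → Q} {k1 k2 : Q} {c : A} (h : Sim act k1 k2 c) (hk : k1 ≠ k2)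
    {x z : Q} (hx1 : x ≠ k1) (hx2 : x ≠ k2) (hz1 : z ≠ k1) (hz2 : z ≠ k2) (hxz : x ≠ z) :
    (St act [c] {x, z}).card = 3 := by
  have c1 := card_lt_St act [c] {x, z} (x := k1) (y := k2) (by simp; grind) (by simp; grind) hk
    h.2.2.1
  have c2 := card_St_compl act c {x, z}
  rw [h.1, Finset.card_pair hxz, Finset.card_singleton] at c2
  rw [Finset.card_pair hxz] at c1
  omega

theorem perm_pair (act : A → Q → Q) (p : A) (h : St act [p] ∅ = ∅) (x z : Q) :
    St act [p] {x, z} = {act p x, act p z} := by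
  rw [(perm_letter act p h).2, Finset.image_insert, Finset.image_singleton]

theorem simple_single (act : A → Q → Q) (c : A) {z x y : Q}
    (hxy : x ≠ y) (hr : act c x = act c y) (hc : (St act [c] ∅).card = 1)
    (h1 : z ≠ x) (h2 : z ≠ y) :
    (St act [c] {z}).card = 2 := by
  have c1 := card_lt_St act [c] {z} (x := x) (y := y) (by simp; grind) (by simp; grind) hxy hr
  have c2 := card_St_compl act c {z}
  rw [Finset.card_singleton] at c1 c2
  omega

theorem caseA (act : A → Q → Q) (H : HH act) (a p2 p3 p4 b : A) (P U : List A)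
    (hl : (a :: p2 :: p3 :: p4 :: (P ++ b :: U)).length ≤ 9) (hU : U.length ≤ 3)
    (h3 : (St act (a :: p2 :: p3 :: p4 :: (P ++ b :: U)) ∅).card = 3)
    (hmin : ∀ w' : List A, (St act w' ∅).card = 3 →
      (a :: p2 :: p3 :: p4 :: (P ++ b :: U)).length ≤ w'.length)
    (hdis : ∀ x y z : List A, p2 :: p3 :: p4 :: P = x ++ y ++ z → y ≠ [] →
      ∀ e, St act [a] ∅ = {e} → run act x e ≠ run act (x ++ y) e)
    (ha : (St act [a] ∅).card = 1)
    (hb : 2 ≤ (St act (a :: p2 :: p3 :: p4 :: (P ++ [b])) ∅).card)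
    (hletters : ∀ s ∈ a :: p2 :: p3 :: p4 :: (P ++ b :: U), (St act [s] ∅).card ≤ 1)
    (hP : ∀ p ∈ p2 :: p3 :: p4 :: P, St act [p] ∅ = ∅) : False := by
  obtain ⟨e, he⟩ := Finset.card_eq_one.1 ha
  have hdis' := fun x y z h1 h2 => hdis x y z h1 h2 e he
  have m2 : St act [p2] ∅ = ∅ := hP p2 (by simp)
  have m3 : St act [p3] ∅ = ∅ := hP p3 (by simp)
  have m4 : St act [p4] ∅ = ∅ := hP p4 (by simp)
  have hword : ∀ q : List A, (∀ p ∈ q, St act [p] ∅ = ∅) →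
      St act (a :: q) ∅ = {run act q e} := by
    intro q hq
    rw [St_cons, he, perm_word act q hq, Finset.image_singleton]
  have noshort : ∀ v : List A, v.length ≤ 3 → (St act v ∅).card ≠ 2 := by
    intro v hv h2
    obtain ⟨u, hu, -, h3'⟩ := frankl act (fun s => (St act [s] ∅).card ≤ 1) (fun s h => h)
      (St act v ∅) h2 ⟨_, hletters, by
        rw [← h3]; exact Finset.card_le_card (St_mono _ _ (Finset.empty_subset _))⟩
    refine H v u (by omega) (by omega) (by omega) ?_
    rw [St_append]; exact h3'
  have d12 : e ≠ act p2 e := hdis' [] [p2] (p3 :: p4 :: P) (by simp) (by simp)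
  have d13 : e ≠ act p3 (act p2 e) := hdis' [] [p2, p3] (p4 :: P) (by simp) (by simp)
  have d23 : act p2 e ≠ act p3 (act p2 e) := hdis' [p2] [p3] (p4 :: P) (by simp) (by simp)
  have d14 : e ≠ act p4 (act p3 (act p2 e)) := hdis' [] [p2, p3, p4] P (by simp) (by simp)
  have d24 : act p2 e ≠ act p4 (act p3 (act p2 e)) := hdis' [p2] [p3, p4] P (by simp) (by simp)
  have d34 : act p3 (act p2 e) ≠ act p4 (act p3 (act p2 e)) :=
    hdis' [p2, p3] [p4] P (by simp) (by simp)
  -- every letter of defect one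
  have hsim : ∀ c, (St act [c] ∅).card = 1 → Sim act e (act p2 e) c := by
    intro c hc
    obtain ⟨f, x, y, hxy, hr, hf, hf2, hin⟩ := simple_letter act c hc
    have k1 : e = x ∨ e = y := by
      by_contra hcon
      push Not at hcon
      apply noshort [a, c] (by simp)
      rw [St_cons, he]
      exact simple_single act c hxy hr hc hcon.1 hcon.2
    have k2 : act p2 e = x ∨ act p2 e = y := by
      by_contra hcon
      push Not at hcon
      apply noshort ([a, p2] ++ [c]) (by simp)
      rw [St_append, hword [p2] (by simp [m2])]
      exact simple_single act c hxy hr hc hcon.1 hcon.2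
    have kf : f = x ∨ f = y := by
      by_contra hcon
      push Not at hcon
      apply noshort [c, c] (by simp)
      rw [St_cons, hf]
      exact simple_single act c hxy hr hc hcon.1 hcon.2
    have kf3 : act p3 f = x ∨ act p3 f = y := by
      by_contra hcon
      push Not at hcon
      apply noshort [c, p3, c] (by simp)
      rw [St_cons, hf, St_cons, (perm_letter act p3 m3).2, Finset.image_singleton]
      exact simple_single act c hxy hr hc hcon.1 hcon.2
    have hfe : f = e := by grind
    refine ⟨by rw [hf, hfe], by rw [← hfe]; exact hf2, by grind, ?_⟩
    intro u v huv
    have := hin u v huv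
    grind
  have hperm1 : ∀ p, St act [p] ∅ = ∅ → act p e = e ∨ act p e = act p2 e := by
    intro p hp
    by_contra hcon
    push Not at hcon
    apply noshort ([a, p] ++ [a]) (by simp)
    rw [St_append, hword [p] (by simp [hp])]
    exact simple_single act a d12 (hsim a ha).2.2.1 ha hcon.1 hcon.2
  -- b
  have hei := hword _ hP
  have hb1 : (St act [b] ∅).card = 1 := by
    have h1 := hletters b (by simp)
    by_contra hcon
    have h0 : St act [b] ∅ = ∅ := by rw [← Finset.card_eq_zero]; omega
    have e1 : a :: p2 :: p3 :: p4 :: (P ++ [b]) = (a :: p2 :: p3 :: p4 :: P) ++ [b] := by simp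
    rw [e1, St_append, hei, (perm_letter act b h0).2, Finset.image_singleton] at hb
    simp at hb
  have sb := hsim b hb1
  have hi1 : run act (p2 :: p3 :: p4 :: P) e ≠ e :=
    (hdis' [] (p2 :: p3 :: p4 :: P) [] (by simp) (by simp)).symm
  have hi2 : run act (p2 :: p3 :: p4 :: P) e ≠ act p2 e :=
    (hdis' [p2] (p3 :: p4 :: P) [] (by simp) (by simp)).symm
  generalize hyi : run act (p2 :: p3 :: p4 :: P) e = ei at *
  have hDb : St act (a :: p2 :: p3 :: p4 :: (P ++ [b])) ∅ = {e, act b ei} := by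
    have e1 : a :: p2 :: p3 :: p4 :: (P ++ [b]) = (a :: p2 :: p3 :: p4 :: P) ++ [b] := by simp
    rw [e1, St_append, hei, sb.single hi1 hi2]
  have hw : St act (a :: p2 :: p3 :: p4 :: (P ++ b :: U)) ∅ = St act U {e, act b ei} := by
    rw [← hDb, ← St_append]; simp
  rw [hw] at h3
  have hkind : ∀ s ∈ U, St act [s] ∅ = ∅ ∨ Sim act e (act p2 e) s := by
    intro s hs
    have := hletters s (by simp [hs])
    rcases Nat.lt_or_ge (St act [s] ∅).card 1 with h | h
    · left; rw [← Finset.card_eq_zero]; omega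
    · right; exact hsim s (by omega)
  have hhit : ∀ s, (St act [s] ∅ = ∅ ∨ Sim act e (act p2 e) s) → ∀ x z,
      (x = e ∨ x = act p2 e) → x ≠ z → (St act [s] {x, z}).card ≠ 3 := by
    intro s hs x z hx hxz
    rcases hs with hs | hs
    · rw [perm_pair act s hs]
      have := Finset.card_le_two (a := act s x) (b := act s z)
      omega
    · rw [hs.pair d12 hx hxz]
      have := Finset.card_le_two (a := e) (b := act s z)
      omega
  have hnb : e ≠ act b ei := (sb.2.1 ei).symm
  have hinj : ∀ p, St act [p] ∅ = ∅ → Function.Injective (act p) := fun p hp =>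
    (perm_letter act p hp).1
  match U with
  | [] => rw [St_nil, Finset.card_pair hnb] at h3; omega
  | [c] => exact hhit c (hkind c (by simp)) _ _ (Or.inl rfl) hnb h3
  | [u1, c] =>
    rw [St_cons] at h3
    rcases hkind u1 (by simp) with h | h
    · rw [perm_pair act u1 h] at h3
      exact hhit c (hkind c (by simp)) _ _ (hperm1 u1 h) (fun hh => hnb (hinj u1 h hh)) h3
    · rw [h.pair d12 (Or.inl rfl) hnb] at h3
      exact hhit c (hkind c (by simp)) _ _ (Or.inl rfl) (h.2.1 _).symm h3
  | [u1, u2, c] =>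
    rw [St_cons, St_cons act u2] at h3
    rcases hkind u1 (by simp) with g1 | g1
    swap
    · rw [g1.pair d12 (Or.inl rfl) hnb] at h3
      rcases hkind u2 (by simp) with g2 | g2
      · rw [perm_pair act u2 g2] at h3
        exact hhit c (hkind c (by simp)) _ _ (hperm1 u2 g2)
          (fun hh => g1.2.1 _ (hinj u2 g2 hh).symm) h3
      · rw [g2.pair d12 (Or.inl rfl) (g1.2.1 _).symm] at h3
        exact hhit c (hkind c (by simp)) _ _ (Or.inl rfl) (g2.2.1 _).symm h3
    rw [perm_pair act u1 g1] at h3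
    have hne1 : act u1 e ≠ act u1 (act b ei) := fun hh => hnb (hinj u1 g1 hh)
    rcases hkind u2 (by simp) with g2 | g2
    swap
    · rw [g2.pair d12 (hperm1 u1 g1) hne1] at h3
      exact hhit c (hkind c (by simp)) _ _ (Or.inl rfl) (g2.2.1 _).symm h3
    rw [perm_pair act u2 g2] at h3
    have hne2 : act u2 (act u1 e) ≠ act u2 (act u1 (act b ei)) := fun hh => hne1 (hinj u2 g2 hh)
    have hg : ¬ (act u2 (act u1 e) = e ∨ act u2 (act u1 e) = act p2 e) := fun hh =>
      hhit c (hkind c (by simp)) _ _ hh hne2 h3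
    have hy : ¬ (act u2 (act u1 (act b ei)) = e ∨ act u2 (act u1 (act b ei)) = act p2 e) := by
      intro hh
      rw [Finset.pair_comm] at h3
      exact hhit c (hkind c (by simp)) _ _ hh hne2.symm h3
    push Not at hg hy
    have sc : Sim act e (act p2 e) c := by
      rcases hkind c (by simp) with h | h
      · exfalso
        rw [perm_pair act c h] at h3
        have := Finset.card_le_two (a := act c (act u2 (act u1 e)))
          (b := act c (act u2 (act u1 (act b ei))))
        omega
      · exact h
    have hu1 : act u1 e = act p2 e := by
      rcases hperm1 u1 g1 with h | h
      · exfalso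
        have := hperm1 u2 g2
        rw [h] at hg
        tauto
      · exact h
    let C : Core Q :=
      { PM := fun f => ∃ s, St act [s] ∅ = ∅ ∧ act s = f
        R := fun l x z => Reach act l {x, z}
        b := act b
        k1 := e
        k2 := act p2 e
        hk := d12
        inj := by
          rintro p ⟨s, hs, rfl⟩ x y hxy
          exact hinj s hs hxy
        hk1 := by
          rintro p ⟨s, hs, rfl⟩
          exact hperm1 s hs
        hb1 := sb.2.1
        hbk := sb.2.2.1
        binj := sb.2.2.2
        hp := by
          rintro l x z p ⟨s, hs, rfl⟩ hr
          rw [← perm_pair act s hs]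
          exact hr.step s
        hR := by
          intro l x z hx hxz hr
          rw [← sb.pair d12 hx hxz]
          exact hr.step b
        h8 := by
          intro l x z hl8 hxz hr
          by_contra hcon
          push Not at hcon
          obtain ⟨⟨a1, a2⟩, a3, a4⟩ := hcon
          exact (hr.step b).ne3 H (by omega) (sb.drop d12 a1 a2 a3 a4 hxz) }
    have hreach : ∀ q1 q2 : A, St act [q1] ∅ = ∅ → St act [q2] ∅ = ∅ →
        act q2 (act q1 e) ≠ e → act q2 (act q1 e) ≠ act p2 e →
        Reach act 4 {e, act b (act q2 (act q1 e))} := by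
      intro q1 q2 s1 s2 n1 n2
      have h1 : St act ([a, q1, q2] ++ [b]) ∅ = {e, act b (act q2 (act q1 e))} := by
        rw [St_append, hword [q1, q2] (by simp [s1, s2])]
        exact sb.single n1 n2
      refine ⟨[a, q1, q2] ++ [b], [], by simp, ?_, by simp, ?_⟩
      · rw [h1, Finset.card_pair (sb.2.1 _).symm]
      · rw [List.append_nil, h1]
    have hr3 := hreach p2 p3 m2 m3 d13.symm d23.symm
    have hrg := hreach u1 u2 g1 g2 hg.1 hg.2
    rw [hu1] at hrg hg
    match P with
    | [] =>
      have hyi' : act p4 (act p3 (act p2 e)) = ei := hyi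
      exact core4 C (act p3 (act p2 e)) ei (act u2 (act p2 e)) (act p4) (act u1) (act u2)
        ⟨p4, m4, rfl⟩ ⟨u1, g1, rfl⟩ ⟨u2, g2, rfl⟩ d13.symm d23.symm hi1 hi2
        (by rw [← hyi']; exact d34.symm) hyi' hu1 rfl hg.1 hg.2 hr3 hrg hy.1 hy.2
    | [p5] =>
      have m5 : St act [p5] ∅ = ∅ := hP p5 (by simp)
      have hyi' : act p5 (act p4 (act p3 (act p2 e))) = ei := hyi
      have d35 : act p3 (act p2 e) ≠ act p5 (act p4 (act p3 (act p2 e))) :=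
        hdis' [p2, p3] [p4, p5] [] (by simp) (by simp)
      have d45 : act p4 (act p3 (act p2 e)) ≠ act p5 (act p4 (act p3 (act p2 e))) :=
        hdis' [p2, p3, p4] [p5] [] (by simp) (by simp)
      rw [hyi'] at d35 d45
      have hy4 : act u2 (act u1 (act b (act p4 (act p3 (act p2 e))))) = e ∨
          act u2 (act u1 (act b (act p4 (act p3 (act p2 e))))) = act p2 e := by
        by_contra hcon
        push Not at hcon
        have h1 : St act ([a, p2, p3, p4] ++ [b]) ∅ =
            {e, act b (act p4 (act p3 (act p2 e)))} := by
          rw [St_append, hword [p2, p3, p4] (by simp [m2, m3, m4])]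
          exact sb.single d14.symm d24.symm
        have h2 : (St act (([a, p2, p3, p4] ++ [b]) ++ [u1, u2, c]) ∅).card = 3 := by
          rw [St_append, h1, St_cons, perm_pair act u1 g1, St_cons, perm_pair act u2 g2]
          apply sc.drop d12 _ _ hcon.1 hcon.2
          · intro hh
            exact sb.2.1 _ (hinj u1 g1 (hinj u2 g2 hh)).symm
          · rw [hu1]; exact hg.1
          · rw [hu1]; exact hg.2
        have := hmin _ h2
        simp at this
      exact core5 C (act p3 (act p2 e)) (act p4 (act p3 (act p2 e))) ei (act u2 (act p2 e))
        (act p5) (act u1) (act u2)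
        ⟨p5, m5, rfl⟩ ⟨u1, g1, rfl⟩ ⟨u2, g2, rfl⟩ d13.symm d23.symm d14.symm d24.symm d34.symm
        hi1 hi2 d35.symm d45.symm hyi' hu1 rfl hg.1 hg.2 hr3 hrg hy4 hy.1 hy.2
    | p5 :: p6 :: P' =>
      simp at hl
      omega
  | _ :: _ :: _ :: _ :: _ =>
    simp only [List.length_cons] at hU
    omega

theorem main (act : A → Q → Q) (H : HH act) (w : List A) (hl : w.length ≤ 9)
    (h3 : (St act w ∅).card = 3)
    (hmin : ∀ w' : List A, (St act w' ∅).card = 3 → w.length ≤ w'.length) :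
    ∃ a p2 p3 p4 b U, w = a :: p2 :: p3 :: p4 :: b :: U ∧ U.length = 4 ∧
      (St act [a] ∅).card = 1 ∧ (St act [a, p2, p3, p4] ∅).card = 1 ∧
      2 ≤ (St act [a, p2, p3, p4, b] ∅).card := by
  obtain ⟨a, p2, p3, p4, P, b, U, rfl, ha, h4, hb, hP⟩ := decomp act H w hl h3 hmin
  have hdis : ∀ x y z : List A, p2 :: p3 :: p4 :: P = x ++ y ++ z → y ≠ [] →
      ∀ e, St act [a] ∅ = {e} → run act x e ≠ run act (x ++ y) e := by
    intro x y z hxyz hy e he hcon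
    have hx : ∀ p ∈ x, St act [p] ∅ = ∅ := fun p hp => hP p (by rw [hxyz]; simp [hp])
    have hxy : ∀ p ∈ x ++ y, St act [p] ∅ = ∅ := fun p hp => hP p (by
      rw [hxyz, List.mem_append]; exact Or.inl hp)
    have h1 : St act (a :: x) ∅ = St act (a :: (x ++ y)) ∅ := by
      rw [St_cons, St_cons act a (x ++ y), he, perm_word act x hx, perm_word act _ hxy,
        Finset.image_singleton, Finset.image_singleton, hcon]
    have h2 : a :: p2 :: p3 :: p4 :: (P ++ b :: U) = (a :: (x ++ y)) ++ (z ++ b :: U) := by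
      have : a :: p2 :: p3 :: p4 :: (P ++ b :: U) = a :: ((p2 :: p3 :: p4 :: P) ++ b :: U) := by
        simp
      rw [this, hxyz]; simp
    have h5 := hmin ((a :: x) ++ (z ++ b :: U)) (by
      rw [← h3, h2, St_append, h1, ← St_append])
    rw [h2] at h5
    have := List.length_pos_iff.2 hy
    simp only [List.length_append, List.length_cons] at h5
    omega
  have hle2 : ∀ x s y, a :: p2 :: p3 :: p4 :: (P ++ b :: U) = x ++ s :: y →
      (St act [s] ∅).card ≤ 1 ∨ ((St act [s] ∅).card = 2 ∧ y = []) := by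
    intro x s y hw
    rw [hw] at h3 hmin hl
    have c1 : St act [s] ∅ ⊆ St act (x ++ [s]) ∅ := St_suffix act x [s] ∅
    have c1' := Finset.card_le_card c1
    have e1 : x ++ s :: y = (x ++ [s]) ++ y := by simp
    have c2 : (St act (x ++ [s]) ∅).card ≤ 3 := by
      rw [← h3, e1]; exact card_St_append _ _ _ _
    by_contra hcon
    push Not at hcon
    have c3 : (St act [s] ∅).card ≠ 3 := H [s] [] (by simp) (by omega) (by simp)
    have c4 : (St act [s] ∅).card = 2 := by omega
    have hy := hcon.2 c4
    by_cases c5 : (St act (x ++ [s]) ∅).card = 3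
    · have h6 := hmin _ c5
      have h7 := List.length_pos_iff.2 hy
      simp only [List.length_append, List.length_cons, List.length_nil] at h6
      omega
    · have c6 := Finset.eq_of_subset_of_card_le c1 (by omega)
      refine H [s] y (by simp) (by omega) (by simp at hl ⊢; omega) ?_
      rw [← h3, e1, St_append, c6, ← St_append]
  have key : 4 ≤ U.length := by
    by_contra hU
    push Not at hU
    rcases List.eq_nil_or_concat U with rfl | ⟨U', c, rfl⟩
    · -- `b` is last
      rcases hle2 (a :: p2 :: p3 :: p4 :: P) b [] (by simp) with h | h
      · have := card_St_compl act b (St act (a :: p2 :: p3 :: p4 :: P) ∅)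
        rw [← St_append, h4] at this
        simp only [List.cons_append] at this
        omega
      · exact caseB0 act H a p2 p3 p4 b P hl h3 hmin hdis ha h.1 hP
    · rw [List.concat_eq_append] at *
      have hpre : ∀ s ∈ a :: p2 :: p3 :: p4 :: (P ++ b :: U'), (St act [s] ∅).card ≤ 1 := by
        intro s hs
        obtain ⟨x, y, hxy⟩ := List.append_of_mem hs
        rcases hle2 x s (y ++ [c]) (by
          have : a :: p2 :: p3 :: p4 :: (P ++ b :: (U' ++ [c])) =
            (a :: p2 :: p3 :: p4 :: (P ++ b :: U')) ++ [c] := by simp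
          rw [this, hxy]; simp) with h | h
        · exact h
        · simp at h
      rcases hle2 (a :: p2 :: p3 :: p4 :: (P ++ b :: U')) c [] (by simp) with h | h
      · refine caseA act H a p2 p3 p4 b P (U' ++ [c]) hl (by omega) h3 hmin hdis ha hb ?_ hP
        intro s hs
        have hs' : s ∈ (a :: p2 :: p3 :: p4 :: (P ++ b :: U')) ∨ s = c := by
          simp at hs ⊢; tauto
        rcases hs' with hs' | rfl
        · exact hpre s hs'
        · exact h
      · exact caseB1 act H a p2 p3 p4 b c P U' hl (by simp at hU; omega) h3 hmin hdis ha h.1 hb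
          hpre hP
  have hP0 : P = [] := by
    rw [← List.length_eq_zero_iff]
    simp at hl
    omega
  subst hP0
  exact ⟨a, p2, p3, p4, b, U, rfl, by simp at hl; omega, ha, h4, hb⟩

end S14

theorem stmt_14 {Q A : Type*} [Fintype Q] [DecidableEq Q] (act : A → Q → Q)
    (h : ∃ w : List A, w.length ≤ 9 ∧
      (wordImage act Finset.univ w).card = Fintype.card Q - 3) :
    (∀ w : List A, w.length ≤ 9 →
      (wordImage act Finset.univ w).card = Fintype.card Q - 3 →
      4 ≤ w.length ∧
      Fintype.card Q - 2 < (wordImage act Finset.univ (w.take 4)).card) ↔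
    (∀ w : List A, w.length ≤ 9 →
      (wordImage act Finset.univ w).card = Fintype.card Q - 3 →
      w.length = 9 ∧
      (∀ i : ℕ, 1 ≤ i → i ≤ 4 →
        (wordImage act Finset.univ (w.take i)).card = Fintype.card Q - 1) ∧
      (∀ i : ℕ, 5 ≤ i → i ≤ 8 →
        (wordImage act Finset.univ (w.take i)).card = Fintype.card Q - 2)) := by
  have hc := S14.card_wordImage act
  rcases Nat.eq_zero_or_pos (Fintype.card Q) with h0 | hpos
  · have h1 := hc []
    constructor
    · intro hh
      have := (hh [] (by simp) (by omega)).1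
      simp at this
    · intro hh
      have := (hh [] (by simp) (by omega)).1
      simp at this
  have hne : ∀ w, 1 ≤ (wordImage act Finset.univ w).card := by
    intro w
    rw [S14.wordImage_eq]
    haveI : Nonempty Q := Fintype.card_pos_iff.1 hpos
    exact Finset.card_pos.2 (Finset.univ_nonempty.image _)
  have hn : 4 ≤ Fintype.card Q := by
    obtain ⟨w, -, hw⟩ := h
    have := hne w
    omega
  have h3iff : ∀ w, (wordImage act Finset.univ w).card = Fintype.card Q - 3 ↔
      (S14.St act w ∅).card = 3 := by
    intro w
    have := hc w
    omega
  constructor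
  · intro hh
    have H : S14.HH act := by
      intro w1 w2 hl1 h2 hl h3
      obtain ⟨a1, a2⟩ := hh (w1 ++ w2) (by simp; omega) ((h3iff _).2 h3)
      have e1 : (w1 ++ w2).take 4 = w1 ++ w2.take (4 - w1.length) := by
        rw [List.take_append, List.take_of_length_le hl1]
      rw [e1] at a2
      have a3 := S14.card_St_append act w1 (w2.take (4 - w1.length)) ∅
      have a4 := hc (w1 ++ w2.take (4 - w1.length))
      omega
    classical
    have hex : ∃ l, ∃ w : List A, w.length = l ∧ (S14.St act w ∅).card = 3 := by
      obtain ⟨w, -, hw⟩ := h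
      exact ⟨_, w, rfl, (h3iff w).1 hw⟩
    obtain ⟨w0, hw0, hw03⟩ := Nat.find_spec hex
    have hmin0 : ∀ w' : List A, (S14.St act w' ∅).card = 3 → w0.length ≤ w'.length := by
      intro w' hw'
      rw [hw0]
      exact Nat.find_min' hex ⟨w', rfl, hw'⟩
    have hlen0 : w0.length = 9 := by
      have hl0 : w0.length ≤ 9 := by
        obtain ⟨w, hw, hw'⟩ := h
        exact le_trans (hmin0 w ((h3iff w).1 hw')) hw
      obtain ⟨a, p2, p3, p4, b, U, rfl, hU, -⟩ := S14.main act H w0 hl0 hw03 hmin0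
      simp [hU]
    have hmin : ∀ w' : List A, (S14.St act w' ∅).card = 3 → 9 ≤ w'.length := by
      intro w' hw'
      rw [← hlen0]; exact hmin0 w' hw'
    intro w hl hw
    have hw3 := (h3iff w).1 hw
    have hl9 : w.length = 9 := le_antisymm hl (hmin w hw3)
    refine ⟨hl9, ?_⟩
    obtain ⟨a, p2, p3, p4, b, U, hwe, hU, b1, b4, b5⟩ :=
      S14.main act H w hl hw3 (by rw [hl9]; exact hmin)
    have hmono : ∀ i j, i ≤ j → (S14.St act (w.take i) ∅).card ≤ (S14.St act (w.take j) ∅).card := by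
      intro i j hij
      have e1 : w.take j = w.take i ++ (w.take j).drop i := by
        conv_lhs => rw [← List.take_append_drop i (w.take j)]
        rw [List.take_take, min_eq_left hij]
      rw [e1]
      exact S14.card_St_append _ _ _ _
    constructor
    · intro i hi1 hi4
      have c1 := hmono 1 i hi1
      have c2 := hmono i 4 hi4
      have e1 : w.take 1 = [a] := by rw [hwe]; simp
      have e4 : w.take 4 = [a, p2, p3, p4] := by rw [hwe]; simp
      rw [e1, b1] at c1
      rw [e4, b4] at c2
      have := hc (w.take i)
      omega
    · intro i hi5 hi8
      have c1 := hmono 5 i hi5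
      have e5 : w.take 5 = [a, p2, p3, p4, b] := by rw [hwe]; simp
      rw [e5] at c1
      have c2 := hmono i 9 (by omega)
      rw [List.take_of_length_le (i := 9) (l := w) (by omega), hw3] at c2
      have c3 : (S14.St act (w.take i) ∅).card ≠ 3 := by
        intro hcon
        have := hmin _ hcon
        simp at this
        omega
      have := hc (w.take i)
      omega
  · intro hh w hl hw
    obtain ⟨a1, a2, -⟩ := hh w hl hw
    have := a2 4 (by omega) (by omega)
    omega
end

section
/- Let (Q, Σ) be a DFA with n = |Q| satisfying hypothesis (H), and suppose there exists a word u over Σ with |Qu| ≤ n − 3. Let p₁ ≠ p₂ be states, b, a, d ∈ Σ letters, and q ∈ Q∖{p₁, p₂} a state such that: Qb = Q∖{p₁}, p₁b = p₂b, Qa = Q, p₁a = p₂, qb ≠ p₁, Q(bad) = Q∖{q}, Q(badb) = Q∖{p₁, qb}, and, writing X = {p₁, p₁a, p₁a², …} for the orbit of p₁ under a, either (|X| ≥ 3 and d = a) or (|X| = 2, Qd = Q, p₁d = p₁, and there exists p₃ ∈ Q∖{p₁, p₂} with p₃d = p₂). If there is no word v over Σ with |v| ≤ 5 and |Q(badb·v)|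 ≤ n − 3, then |Q(ba³ba³b)| = n − 3, where ba³ba³b denotes the word b,a,a,a,b,a,a,a,b. -/
set_option linter.all false

/-- A letter collapsing exactly the pair `p₁, p₂` and missing exactly `p₁`. -/
structure IsDef {Q : Type*} (p₁ p₂ : Q) (f : Q → Q) : Prop where
  coll : f p₁ = f p₂
  inj : ∀ x y, f x = f y → x ≠ y → (x = p₁ ∧ y = p₂) ∨ (x = p₂ ∧ y = p₁)
  miss : ∀ x, f x ≠ p₁
  surj : ∀ y, y ≠ p₁ → ∃ x, f x = y

/-- No word of length at most `k` brings the complement of `x, y` to size at most `n - 3`. -/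
def Safe {Q A : Type*} [Fintype Q] [DecidableEq Q] (act : A → Q → Q) (k : ℕ) (x y : Q) : Prop :=
  ∀ v : List A, v.length ≤ k →
    Fintype.card Q - 3 < (wordImage act (Finset.univ \ {x, y}) v).card

section
variable {Q A : Type*} [Fintype Q] [DecidableEq Q]

theorem image_perm1 (f : Q → Q) (hf : Function.Bijective f) (x : Q) :
    (Finset.univ \ {x}).image f = Finset.univ \ {f x} := by
  ext z
  obtain ⟨w, rfl⟩ := hf.2 z
  simp [hf.1.eq_iff]

theorem image_perm (f : Q → Q) (hf : Function.Bijective f) (x y : Q) :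
    (Finset.univ \ {x, y}).image f = Finset.univ \ {f x, f y} := by
  ext z
  obtain ⟨w, rfl⟩ := hf.2 z
  simp [hf.1.eq_iff]

theorem image_def {p₁ p₂ : Q} (hp : p₁ ≠ p₂) (f : Q → Q) (hf : IsDef p₁ p₂ f) (x y : Q)
    (hx : x = p₁ ∨ x = p₂) (hy : y ≠ x) :
    (Finset.univ \ {x, y}).image f = Finset.univ \ {p₁, f y} := by
  ext z
  have h1 := hf.coll
  have h2 := hf.inj
  have h3 := hf.miss
  have h4 := hf.surj z
  simp only [Finset.mem_image, Finset.mem_sdiff, Finset.mem_univ, true_and, Finset.mem_insert,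
    Finset.mem_singleton]
  constructor
  · rintro ⟨w, hw, rfl⟩
    grind
  · intro hz
    obtain ⟨w, hw⟩ := h4 (by tauto)
    by_cases hwx : w = x
    · rcases hx with rfl | rfl
      · exact ⟨p₂, by grind, by grind⟩
      · exact ⟨p₁, by grind, by grind⟩
    · exact ⟨w, by grind, hw⟩

theorem image_def1 {p₁ p₂ : Q} (hp : p₁ ≠ p₂) (f : Q → Q) (hf : IsDef p₁ p₂ f) (x : Q)
    (hx : x ≠ p₁) (hx' : x ≠ p₂) :
    (Finset.univ \ {x}).image f = Finset.univ \ {p₁, f x} := by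
  ext z
  have h2 := hf.inj
  have h3 := hf.miss
  have h4 := hf.surj z
  simp only [Finset.mem_image, Finset.mem_sdiff, Finset.mem_univ, true_and, Finset.mem_insert,
    Finset.mem_singleton]
  constructor
  · rintro ⟨w, hw, rfl⟩
    grind
  · intro hz
    obtain ⟨w, hw⟩ := h4 (by tauto)
    exact ⟨w, by grind, hw⟩

theorem image_def3 {p₁ p₂ : Q} (hp : p₁ ≠ p₂) (f : Q → Q) (hf : IsDef p₁ p₂ f) (x y : Q)
    (hx : x ≠ p₁) (hx' : x ≠ p₂) (hy : y ≠ p₁) (hy' : y ≠ p₂) (hxy : x ≠ y) :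
    ((Finset.univ \ {x, y}).image f).card = Fintype.card Q - 3 := by
  have h2 := hf.inj
  have h3 := hf.miss
  have e : (Finset.univ \ {x, y}).image f = Finset.univ \ {p₁, f x, f y} := by
    ext z
    have h4 := hf.surj z
    simp only [Finset.mem_image, Finset.mem_sdiff, Finset.mem_univ, true_and, Finset.mem_insert,
      Finset.mem_singleton]
    constructor
    · rintro ⟨w, hw, rfl⟩
      grind
    · intro hz
      obtain ⟨w, hw⟩ := h4 (by tauto)
      exact ⟨w, by grind, hw⟩
  rw [e, Finset.card_sdiff_of_subset (Finset.subset_univ _), Finset.card_univ,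
    Finset.card_eq_three.mpr ⟨p₁, f x, f y, (h3 x).symm, (h3 y).symm, by grind, rfl⟩]

theorem card_image_lt {R : Finset Q} {f : Q → Q} {x y : Q} (hx : x ∈ R) (hy : y ∈ R)
    (hxy : x ≠ y) (h : f x = f y) : (R.image f).card < R.card := by
  refine lt_of_le_of_ne Finset.card_image_le fun e => hxy ?_
  exact Finset.card_image_iff.mp e hx hy h

theorem card_compl1 (x : Q) : (Finset.univ \ {x} : Finset Q).card = Fintype.card Q - 1 := by
  rw [Finset.card_sdiff_of_subset (Finset.subset_univ _), Finset.card_univ, Finset.card_singleton]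

variable {act : A → Q → Q}

theorem Safe.symm {k : ℕ} {x y : Q} (h : Safe act k x y) : Safe act k y x := by
  intro v hv
  rw [Finset.pair_comm]
  exact h v hv

theorem Safe.mono {k l : ℕ} {x y : Q} (h : Safe act k x y) (hl : l ≤ k) : Safe act l x y :=
  fun v hv => h v (hv.trans hl)

theorem Safe.perm {k : ℕ} {x y : Q} (h : Safe act (k + 1) x y) (c : A)
    (hc : Function.Bijective (act c)) : Safe act k (act c x) (act c y) := by
  intro v hv
  have := h (c :: v) (by simpa using hv)
  rwa [wordImage, image_perm _ hc] at this

theorem Safe.defl {p₁ p₂ : Q} (hp : p₁ ≠ p₂) {k : ℕ} {x y : Q} (h : Safe act (k + 1) x y) (c : A)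
    (hc : IsDef p₁ p₂ (act c)) (hx : x = p₁ ∨ x = p₂) (hy : y ≠ x) :
    Safe act k p₁ (act c y) := by
  intro v hv
  have := h (c :: v) (by simpa using hv)
  rwa [wordImage, image_def hp _ hc x y hx hy] at this

theorem Safe.hit {p₁ p₂ : Q} (hp : p₁ ≠ p₂) {k : ℕ} {x y : Q} (h : Safe act (k + 1) x y) (b : A)
    (hb : IsDef p₁ p₂ (act b)) (hxy : x ≠ y) :
    x = p₁ ∨ x = p₂ ∨ y = p₁ ∨ y = p₂ := by
  by_contra hcon
  push Not at hcon
  have := h [b] (by simp)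
  rw [wordImage, wordImage, image_def3 hp _ hb x y hcon.1 hcon.2.1 hcon.2.2.1 hcon.2.2.2 hxy] at this
  exact lt_irrefl _ this

/-- An invariant three-element set containing everything that letters miss. -/
theorem invariant_bound (X : Finset Q) (hX : X.card ≤ 3) (hne : X.Nonempty)
    (h1 : ∀ c : A, ∀ x ∈ X, act c x ∈ X)
    (h2 : ∀ c : A, ∀ y, y ∉ X → ∃ x, act c x = y) (u : List A) :
    ∀ R : Finset Q, (∀ y, y ∉ X → y ∈ R) → (∃ x ∈ X, x ∈ R) →
      Fintype.card Q - 3 < (wordImage act R u).card := by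
  induction u with
  | nil =>
    rintro R hR ⟨x, hx, hxR⟩
    have hs : insert x (Finset.univ \ X) ⊆ R := by
      intro y hy
      simp only [Finset.mem_insert, Finset.mem_sdiff, Finset.mem_univ, true_and] at hy
      rcases hy with rfl | hy
      · exact hxR
      · exact hR y hy
    have := Finset.card_le_card hs
    rw [Finset.card_insert_of_notMem (by simp [hx]),
      Finset.card_sdiff_of_subset (Finset.subset_univ _), Finset.card_univ] at this
    rw [wordImage]
    omega
  | cons c u ih =>
    rintro R hR ⟨x, hx, hxR⟩
    rw [wordImage]
    refine ih _ ?_ ⟨act c x, h1 c x hx, Finset.mem_image_of_mem _ hxR⟩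
    intro y hy
    obtain ⟨z, rfl⟩ := h2 c y hy
    exact Finset.mem_image_of_mem _ (hR z fun hz => hy (h1 c z hz))
end

theorem stmt_15 {Q A : Type*} [Fintype Q] [DecidableEq Q] (act : A → Q → Q)
    (hH1 : ∃ w : List A, (wordImage act Finset.univ w).card ≤ Fintype.card Q - 2)
    (hH2 : ∀ w : List A, w.length ≤ 3 →
      Fintype.card Q - 2 < (wordImage act Finset.univ w).card)
    (hu : ∃ u : List A, (wordImage act Finset.univ u).card ≤ Fintype.card Q - 3)
    (p₁ p₂ : Q) (hp : p₁ ≠ p₂) (b a d : A) (q : Q) (hq₁ : q ≠ p₁) (hq₂ : q ≠ p₂)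
    (hb : Finset.univ.image (act b) = Finset.univ \ {p₁})
    (hb12 : act b p₁ = act b p₂)
    (ha : Finset.univ.image (act a) = Finset.univ)
    (ha1 : act a p₁ = p₂)
    (hqb : act b q ≠ p₁)
    (hbad : wordImage act Finset.univ [b, a, d] = Finset.univ \ {q})
    (hbadb : wordImage act Finset.univ [b, a, d, b] = Finset.univ \ {p₁, act b q})
    (hX : (3 ≤ Set.ncard {x : Q | ∃ k : ℕ, (act a)^[k] p₁ = x} ∧ d = a) ∨
      (Set.ncard {x : Q | ∃ k : ℕ, (act a)^[k] p₁ = x} = 2 ∧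
        Finset.univ.image (act d) = Finset.univ ∧ act d p₁ = p₁ ∧
        ∃ p₃ : Q, p₃ ≠ p₁ ∧ p₃ ≠ p₂ ∧ act d p₃ = p₂))
    (hno : ¬ ∃ v : List A, v.length ≤ 5 ∧
      (wordImage act Finset.univ ([b, a, d, b] ++ v)).card ≤ Fintype.card Q - 3) :
    (wordImage act Finset.univ [b, a, a, a, b, a, a, a, b]).card
      = Fintype.card Q - 3 := by
  classical
  have hn3 : 3 ≤ Fintype.card Q := by
    rw [← Finset.card_eq_three.mpr ⟨p₁, p₂, q, hp, hq₁.symm, hq₂.symm, rfl⟩]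
    exact Finset.card_le_univ _
  have bij : ∀ c, Finset.univ.image (act c) = Finset.univ → Function.Bijective (act c) := by
    intro c hc
    refine (Finite.injective_iff_bijective).mp (Finite.injective_iff_surjective.mpr ?_)
    intro y
    have : y ∈ Finset.univ.image (act c) := by rw [hc]; exact Finset.mem_univ y
    simpa using this
  have ba := bij a ha
  -- the letter b
  have Db : IsDef p₁ p₂ (act b) := by
    have hmem : ∀ y, (∃ x, act b x = y) ↔ y ≠ p₁ := by
      intro y
      have := Finset.ext_iff.mp hb y
      simpa using this
    have himg : (Finset.univ \ {p₁}).image (act b) = Finset.univ \ {p₁} := by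
      ext y
      simp only [Finset.mem_image, Finset.mem_sdiff, Finset.mem_univ, true_and,
        Finset.mem_singleton]
      rw [← ne_eq y p₁, ← hmem]
      constructor
      · rintro ⟨x, _, h⟩; exact ⟨x, h⟩
      · rintro ⟨x, h⟩
        by_cases hx : x = p₁
        · exact ⟨p₂, hp.symm, by rw [← hb12, ← hx, h]⟩
        · exact ⟨x, hx, h⟩
    have hinj : Set.InjOn (act b) ((Finset.univ \ {p₁} : Finset Q) : Set Q) :=
      Finset.card_image_iff.mp (by rw [himg])
    have hinj' : ∀ x y, x ≠ p₁ → y ≠ p₁ → act b x = act b y → x = y := by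
      intro x y hx hy h
      exact hinj (by simpa using hx) (by simpa using hy) h
    refine ⟨hb12, ?_, fun x => (hmem _).mp ⟨x, rfl⟩, fun y hy => (hmem y).mpr hy⟩
    intro x y h hxy
    by_cases hx : x = p₁
    · have := hinj' p₂ y hp.symm (by grind) (by grind)
      grind
    · by_cases hy : y = p₁
      · have := hinj' p₂ x hp.symm (by grind) (by grind)
        grind
      · exact absurd (hinj' x y hx hy h) hxy
  -- d
  have bd : Function.Bijective (act d) := by
    rcases hX with ⟨_, rfl⟩ | ⟨_, h, _⟩
    · exact ba
    · exact bij d h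
  have hd2 : act d p₂ = q := by
    rw [wordImage, wordImage, wordImage, wordImage, hb, image_perm1 _ ba, image_perm1 _ bd, ha1]
      at hbad
    have := Finset.ext_iff.mp hbad q
    simp at this
    exact this.symm
  -- permutation letters
  have perm1 : ∀ c, Function.Bijective (act c) → act c p₁ = p₁ ∨ act c p₁ = p₂ := by
    intro c hc
    by_contra hcon
    push Not at hcon
    have := hH2 [b, c, b] (by simp)
    rw [wordImage, wordImage, wordImage, wordImage, hb, image_perm1 _ hc] at this
    have h2 := card_image_lt (R := Finset.univ \ {act c p₁}) (f := act b) (x := p₁) (y := p₂)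
      (by simpa using hcon.1.symm) (by simpa using hcon.2.symm) hp hb12
    rw [card_compl1] at h2
    omega
  have dich : ∀ c, Function.Bijective (act c) ∨ IsDef p₁ p₂ (act c) := by
    intro c
    by_cases hc : Function.Bijective (act c)
    · exact Or.inl hc
    right
    have hinj : ¬ Function.Injective (act c) := fun h => hc (Finite.injective_iff_bijective.mp h)
    have hsur : ¬ Function.Surjective (act c) := fun h => hinj (Finite.injective_iff_surjective.mpr h)
    have hcollide : ∀ x y, act c x = act c y → x ≠ y →
        (x = p₁ ∧ y = p₂) ∨ (x = p₂ ∧ y = p₁) := by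
      intro x y h hxy
      have k1 : x = p₁ ∨ y = p₁ := by
        by_contra hcon
        push Not at hcon
        have := hH2 [b, c] (by simp)
        rw [wordImage, wordImage, wordImage, hb] at this
        have h2 := card_image_lt (R := Finset.univ \ {p₁}) (f := act c) (x := x) (y := y)
          (by simpa using hcon.1) (by simpa using hcon.2) hxy h
        rw [card_compl1] at h2
        omega
      have k2 : x = p₂ ∨ y = p₂ := by
        by_contra hcon
        push Not at hcon
        have := hH2 [b, a, c] (by simp)
        rw [wordImage, wordImage, wordImage, wordImage, hb, image_perm1 _ ba, ha1] at this
        have h2 := card_image_lt (R := Finset.univ \ {p₂}) (f := act c) (x := x) (y := y)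
          (by simpa using hcon.1) (by simpa using hcon.2) hxy h
        rw [card_compl1] at h2
        omega
      grind
    obtain ⟨m, hm⟩ : ∃ m, ∀ x, act c x ≠ m := by
      simpa [Function.Surjective] using hsur
    have hcimg : Finset.univ.image (act c) = Finset.univ \ {m} := by
      refine Finset.eq_of_subset_of_card_le ?_ ?_
      · intro y hy
        obtain ⟨x, _, rfl⟩ := Finset.mem_image.mp hy
        simpa using hm x
      · have := hH2 [c] (by simp)
        rw [wordImage, wordImage] at this
        rw [card_compl1]
        omega
    have hm12 : m = p₁ ∨ m = p₂ := by
      by_contra hcon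
      push Not at hcon
      have := hH2 [c, b] (by simp)
      rw [wordImage, wordImage, wordImage, hcimg] at this
      have h2 := card_image_lt (R := Finset.univ \ {m}) (f := act b) (x := p₁) (y := p₂)
        (by simpa using hcon.1.symm) (by simpa using hcon.2.symm) hp hb12
      rw [card_compl1] at h2
      omega
    have hm1 : m = p₁ := by
      rcases hm12 with h | h
      · exact h
      exfalso
      have := hH2 [c, d, b] (by simp)
      rw [wordImage, wordImage, wordImage, wordImage, hcimg, image_perm1 _ bd, h, hd2] at this
      have h2 := card_image_lt (R := Finset.univ \ {q}) (f := act b) (x := p₁) (y := p₂)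
        (by simpa using hq₁.symm) (by simpa using hq₂.symm) hp hb12
      rw [card_compl1] at h2
      omega
    subst hm1
    refine ⟨?_, hcollide, hm, ?_⟩
    · simp only [Function.Injective] at hinj
      push Not at hinj
      obtain ⟨x, y, h, hxy⟩ := hinj
      rcases hcollide x y h hxy with ⟨rfl, rfl⟩ | ⟨rfl, rfl⟩
      · exact h
      · exact h.symm
    · intro y hy
      have : y ∈ Finset.univ.image (act c) := by rw [hcimg]; simpa using hy
      simpa using this
  -- start
  obtain ⟨r, hr⟩ : ∃ r, r = act b q := ⟨_, rfl⟩
  have S0 : Safe act 5 p₁ r := by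
    intro v hv
    by_contra hcon
    refine hno ⟨v, hv, ?_⟩
    have e : wordImage act Finset.univ ([b, a, d, b] ++ v) =
        wordImage act (wordImage act Finset.univ [b, a, d, b]) v := by
      simp [wordImage]
    rw [e, hbadb, ← hr]
    omega
  rw [← hr] at hqb
  -- contradiction from an invariant set
  have final : (∀ c, act c p₁ ∈ ({p₁, p₂, q} : Finset Q) ∧ act c p₂ ∈ ({p₁, p₂, q} : Finset Q) ∧
      act c q ∈ ({p₁, p₂, q} : Finset Q)) → False := by
    intro h
    obtain ⟨u, hu⟩ := hu
    have := invariant_bound (act := act) {p₁, p₂, q} Finset.card_le_three ⟨p₁, by simp⟩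
      (by
        intro c x hx
        simp only [Finset.mem_insert, Finset.mem_singleton] at hx
        rcases hx with rfl | rfl | rfl
        · exact (h c).1
        · exact (h c).2.1
        · exact (h c).2.2)
      (by
        intro c y hy
        rcases dich c with hc | hc
        · exact hc.2 y
        · exact hc.surj y (by rintro rfl; simp at hy)) u Finset.univ (by simp) ⟨p₁, by simp⟩
    omega
  have hit : ∀ {k x y}, Safe act (k + 1) x y → x ≠ y → x = p₁ ∨ x = p₂ ∨ y = p₁ ∨ y = p₂ :=
    fun h hxy => h.hit hp b Db hxy
  have ia := ba.1
  have id' := bd.1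
  have ne_a : ∀ {x y}, x ≠ y → act a x ≠ act a y := fun h => ia.ne h
  have ne_d : ∀ {x y}, x ≠ y → act d x ≠ act d y := fun h => id'.ne h
  have Dbi := Db.inj
  -- the common end of the three contradictory cases
  have finish : (∀ x y, Safe act 3 x y → x ≠ y → (x = p₁ ∨ x = p₂ ∨ x = q) →
      (y = p₁ ∨ y = p₂ ∨ y = q)) → Safe act 4 p₁ p₂ → (Safe act 4 p₁ q ∨ Safe act 4 p₂ q) →
      False := by
    intro rot S12 Sq
    apply final
    intro c
    simp only [Finset.mem_insert, Finset.mem_singleton]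
    rcases dich c with hc | hc
    · have k1 : act c p₁ = p₁ ∨ act c p₁ = p₂ ∨ act c p₁ = q := by
        rcases perm1 c hc with h | h <;> simp [h]
      have k2 := rot _ _ (S12.perm c hc) (hc.1.ne hp) k1
      refine ⟨k1, k2, ?_⟩
      rcases Sq with h | h
      · exact rot _ _ (h.perm c hc) (hc.1.ne hq₁.symm) k1
      · exact rot _ _ (h.perm c hc) (hc.1.ne hq₂.symm) k2
    · have k2 := rot _ _ (S12.defl hp c hc (Or.inl rfl) hp.symm) (hc.miss _).symm (Or.inl rfl)
      refine ⟨by rw [hc.coll]; exact k2, k2, ?_⟩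
      rcases Sq with h | h
      · exact rot _ _ (h.defl hp c hc (Or.inl rfl) hq₁) (hc.miss _).symm (Or.inl rfl)
      · exact rot _ _ (h.defl hp c hc (Or.inr rfl) hq₂) (hc.miss _).symm (Or.inl rfl)
  rcases hX with ⟨_, rfl⟩ | ⟨hcard, _, hd1, p₃, h31, h32, hp3⟩
  · -- d = a
    have A1 := S0.perm d ba
    have A2 := A1.perm d ba
    have A3 := A2.perm d ba
    have A4 := A3.perm d ba
    have n0 := hqb.symm
    have n1 := ne_a n0
    have n2 := ne_a n1
    have n3 := ne_a n2
    have n4 := ne_a n3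
    have t2 := hit A2 n2
    have t3 := hit A3 n3
    have t4 := hit A4 n4
    rw [ha1, hd2] at t2 t3 t4
    have key : (act d q = p₁ ∧ (r = q ∨ r = p₂)) ∨
        (act d (act d q) = p₁ ∧ act d q ≠ p₁ ∧ r = q) := by
      grind [Function.Injective]
    rcases key with ⟨hq, hrr⟩ | ⟨hs, hs1, hrq⟩
    · -- three-cycle
      exfalso
      apply finish
      · intro x y h hxy hx
        rcases hx with rfl | rfl | rfl
        · have := hit ((h.perm d ba).perm d ba) (ne_a (ne_a hxy))
          grind [Function.Injective]
        · have := hit (h.perm d ba) (ne_a hxy)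
          grind [Function.Injective]
        · have := hit h hxy
          grind
      · rcases hrr with h | h
        · rw [ha1, h, hq] at A1
          exact A1.symm
        · rw [h] at S0
          exact S0.mono (by norm_num)
      · rcases hrr with h | h
        · rw [h] at S0
          exact Or.inl (S0.mono (by norm_num))
        · rw [ha1, h, hd2] at A1
          exact Or.inr A1
    · -- four-cycle
      subst hrq
      obtain ⟨s, hsdef⟩ : ∃ s, s = act d r := ⟨_, rfl⟩
      rw [← hsdef] at hs hs1
      have hs2 : s ≠ p₂ := by rw [hsdef, ← ha1]; exact fun h => hq₁ (ia h)
      have hsq : s ≠ r := by rw [hsdef]; nth_rw 2 [← hd2]; exact fun h => hq₂ (ia h)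
      have hsb2 : act b s ≠ p₂ := by
        intro h
        have B1 := A1.defl hp b Db (Or.inr ha1) (by rw [← hsdef, ha1]; exact hs2)
        rw [← hsdef, h] at B1
        have B3 := hit ((B1.perm d ba).perm d ba) (ne_a (ne_a hp))
        rw [ha1, hd2, ← hsdef] at B3
        grind
      have hsbr : act b s ≠ r := by
        intro h
        have := Dbi s r (by rw [h, ← hr]) hsq
        grind
      have a3 : act d (act d (act d p₁)) = s := by rw [ha1, hd2, hsdef]
      rw [wordImage, wordImage, wordImage, wordImage, wordImage, wordImage, wordImage, wordImage,
        wordImage, wordImage, hb, image_perm1 _ ba, image_perm1 _ ba, image_perm1 _ ba, a3,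
        image_def1 hp _ Db _ hs1 hs2, image_perm _ ba, image_perm _ ba, image_perm _ ba, a3]
      have hm := Db.miss s
      apply image_def3 hp _ Db _ _ hs1 hs2 <;> grind [Function.Injective]
  · -- |X| = 2
    exfalso
    have ha2 : act a p₂ = p₁ := by
      by_contra h
      have h' : act a p₂ ≠ p₂ := fun h' => hp (ia (ha1.trans h'.symm))
      have hsub : (({p₁, p₂, act a p₂} : Finset Q) : Set Q) ⊆
          {x : Q | ∃ k : ℕ, (act a)^[k] p₁ = x} := by
        intro x hx
        simp only [Finset.coe_insert, Finset.coe_singleton, Set.mem_insert_iff,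
          Set.mem_singleton_iff] at hx
        rcases hx with rfl | rfl | rfl
        · exact ⟨0, rfl⟩
        · exact ⟨1, ha1⟩
        · exact ⟨2, by simp [ha1]⟩
      have := Set.ncard_le_ncard hsub (Set.toFinite _)
      rw [Set.ncard_coe_finset, hcard,
        Finset.card_eq_three.mpr ⟨p₁, p₂, act a p₂, hp, Ne.symm h, h'.symm, rfl⟩] at this
      omega
    have rot : ∀ {k x}, Safe act (k + 3) p₁ x → x ≠ p₁ → x = p₂ ∨ act a x = p₃ := by
      intro k x h hx
      have := hit ((h.perm a ba).perm d bd) (ne_d (ne_a hx.symm))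
      grind [Function.Injective]
    have key : act a q = q ∧ act d q = p₂ ∧ (r = p₂ ∨ r = q) := by
      rcases rot S0 hqb with h | h
      · rw [h] at S0
        have B1 := S0.perm d bd
        rw [hd1, hd2] at B1
        have h1 := rot B1 hq₁
        have B2 := ((B1.perm a ba).perm d bd).perm d bd
        have h2 := hit B2 (ne_d (ne_d (ne_a hq₁.symm)))
        grind [Function.Injective]
      · have hq3 : act d q = p₂ := by
          have h2 := hit (((S0.perm a ba).perm d bd).perm d bd) (ne_d (ne_d (ne_a hqb.symm)))
          grind [Function.Injective]
        have hq3' : p₃ = q := id' (hp3.trans hq3.symm)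
        by_cases hrq : r = q
        · grind
        exfalso
        have hr2 : r ≠ p₂ := by grind
        have hrb : act b r = p₂ := by
          have := rot (S0.defl hp b Db (Or.inl rfl) hqb) (Db.miss _)
          grind [Function.Injective]
        have B := S0.defl hp b Db (Or.inl rfl) hqb
        rw [hrb] at B
        have B1 := B.perm d bd
        rw [hd1, hd2] at B1
        have := rot B1 hq₁
        grind [Function.Injective]
    obtain ⟨haq, hdq, hrr⟩ := key
    have C1 := S0.perm d bd
    apply finish
    · intro x y h hxy hx
      rcases hx with rfl | rfl | rfl
      · have := hit ((h.perm a ba).perm d bd) (ne_d (ne_a hxy))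
        grind [Function.Injective]
      · have := hit (h.perm d bd) (ne_d hxy)
        grind [Function.Injective]
      · have := hit h hxy
        grind
    · rcases hrr with h | h
      · rw [h] at S0
        exact S0.mono (by norm_num)
      · rwa [hd1, h, hdq] at C1
    · rcases hrr with h | h
      · rw [hd1, h, hd2] at C1
        exact Or.inl C1
      · rw [h] at S0
        exact Or.inl (S0.mono (by norm_num))
end

section
/- Let (Q, Σ) be a DFA with n = |Q| satisfying hypothesis (H). Let p₁ ≠ p₂ be states and b, a ∈ Σ letters such that Qb = Q∖{p₁}, p₁b = p₂b, Qa = Q, and p₁a = p₂. If the orbit X = {p₁, p₁a, p₁a², …} of p₁ under a satisfies |X| ≥ 4, then there exists a word w over Σ with |w| ≤ 9 and |Qw| ≤ n − 3. -/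
/-- Three distinct states missing from `R` bound its cardinality. -/
theorem card_le_of_three_missing {Q : Type*} [Fintype Q] [DecidableEq Q] (R : Finset Q)
    (x y z : Q) (hxy : x ≠ y) (hxz : x ≠ z) (hyz : y ≠ z)
    (hx : x ∉ R) (hy : y ∉ R) (hz : z ∉ R) : R.card ≤ Fintype.card Q - 3 := by
  have h3 : ({x, y, z} : Finset Q).card = 3 := Finset.card_eq_three.2 ⟨x, y, z, hxy, hxz, hyz, rfl⟩
  have hd : Disjoint R ({x, y, z} : Finset Q) := by
    rw [Finset.disjoint_right]
    intro t ht
    simp only [Finset.mem_insert, Finset.mem_singleton] at ht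
    rcases ht with rfl | rfl | rfl <;> assumption
  have := Finset.card_le_univ (R ∪ {x, y, z})
  rw [Finset.card_union_of_disjoint hd, h3] at this
  omega

theorem stmt_16 {Q A : Type*} [Fintype Q] [DecidableEq Q] (act : A → Q → Q)
    (hH1 : ∃ w : List A, (wordImage act Finset.univ w).card ≤ Fintype.card Q - 2)
    (hH2 : ∀ w : List A, w.length ≤ 3 →
      Fintype.card Q - 2 < (wordImage act Finset.univ w).card)
    (p₁ p₂ : Q) (hp : p₁ ≠ p₂) (b a : A)
    (hb : Finset.univ.image (act b) = Finset.univ \ {p₁})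
    (hb12 : act b p₁ = act b p₂)
    (ha : Finset.univ.image (act a) = Finset.univ)
    (ha1 : act a p₁ = p₂)
    (hX : 4 ≤ Set.ncard {x : Q | ∃ k : ℕ, (act a)^[k] p₁ = x}) :
    ∃ w : List A, w.length ≤ 9 ∧
      (wordImage act Finset.univ w).card ≤ Fintype.card Q - 3 := by
  set f := act b with hf
  set g := act a with hg
  have gsurj : Function.Surjective g := by
    intro y
    have : y ∈ Finset.univ.image g := by rw [ha]; exact Finset.mem_univ _
    simpa using this
  have ginj : Function.Injective g := Finite.injective_iff_surjective.2 gsurj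
  have fne : ∀ x, f x ≠ p₁ := by
    intro x hx
    have : f x ∈ Finset.univ.image f := Finset.mem_image_of_mem _ (Finset.mem_univ _)
    rw [hb] at this
    simp [hx] at this
  -- `f` is injective away from `p₁`
  have finj' : Set.InjOn f ((Finset.univ \ {p₁} : Finset Q) : Set Q) := by
    rw [← Finset.card_image_iff]
    congr 1
    rw [← hb]
    apply Finset.Subset.antisymm (Finset.image_subset_image (Finset.subset_univ _))
    intro y hy
    obtain ⟨x, -, rfl⟩ := Finset.mem_image.1 hy
    by_cases hx : x = p₁
    · rw [hx, hb12]
      refine Finset.mem_image_of_mem _ ?_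
      rw [hb]
      simpa using hp.symm
    · refine Finset.mem_image_of_mem _ ?_
      rw [hb]
      simpa using hx
  have finj : ∀ x y, f x = f y → x ≠ p₁ → x ≠ p₂ → x = y := by
    intro x y hxy h1 h2
    by_cases hy : y = p₁
    · exfalso
      apply h2
      apply finj' (by simpa using h1) (by simpa using hp.symm)
      rw [hxy, hy, hb12]
    · exact finj' (by simpa using h1) (by simpa using hy) hxy
  have gmiss : ∀ (R : Finset Q) x, x ∉ R → g x ∉ R.image g := by
    intro R x hx h
    obtain ⟨y, hy, e⟩ := Finset.mem_image.1 h
    exact hx (ginj e ▸ hy)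
  have fmiss : ∀ (R : Finset Q) x, x ∉ R → x ≠ p₁ → x ≠ p₂ → f x ∉ R.image f := by
    intro R x hx h1 h2 h
    obtain ⟨y, hy, e⟩ := Finset.mem_image.1 h
    exact hx ((finj x y e.symm h1 h2) ▸ hy)
  have pmiss : ∀ (R : Finset Q), p₁ ∉ R.image f := by
    intro R h
    obtain ⟨y, hy, e⟩ := Finset.mem_image.1 h
    exact fne y e
  have final : ∀ (R : Finset Q) u v, u ∉ R → v ∉ R → u ≠ v → u ≠ p₁ → u ≠ p₂ → v ≠ p₁ →
      v ≠ p₂ → (R.image f).card ≤ Fintype.card Q - 3 := by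
    intro R u v hu hv huv h1 h2 h3 h4
    exact card_le_of_three_missing _ p₁ (f u) (f v) (fne u).symm (fne v).symm
      (fun e => huv (finj u v e h1 h2)) (pmiss R) (fmiss R u hu h1 h2) (fmiss R v hv h3 h4)
  -- the orbit is contained in any set closed under `g`
  have orb : ∀ S : Finset Q, p₁ ∈ S → (∀ x ∈ S, g x ∈ S) → 4 ≤ S.card := by
    intro S h1 hS
    refine hX.trans ?_
    rw [← Set.ncard_coe_finset]
    refine Set.ncard_le_ncard ?_ (Finset.finite_toSet S)
    rintro x ⟨k, rfl⟩
    induction k with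
    | zero => simpa using h1
    | succ k ih =>
      rw [Function.iterate_succ_apply']
      exact hS _ ih
  obtain ⟨p₃, h3⟩ : ∃ p, g p₂ = p := ⟨_, rfl⟩
  obtain ⟨p₄, h4⟩ : ∃ p, g p₃ = p := ⟨_, rfl⟩
  have n13 : p₃ ≠ p₁ := by
    intro e
    have := orb {p₁, p₂} (by simp) (by simp [ha1, h3, e])
    have := Finset.card_le_two (a := p₁) (b := p₂)
    omega
  have n14 : p₄ ≠ p₁ := by
    intro e
    have := orb {p₁, p₂, p₃} (by simp) (by simp [ha1, h3, h4, e])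
    have := Finset.card_le_three (a := p₁) (b := p₂) (c := p₃)
    omega
  have n23 : p₃ ≠ p₂ := fun e => hp (ginj (by rw [ha1, h3, e])) 
  have n24 : p₄ ≠ p₂ := fun e => n13 (ginj (by rw [ha1, h4, e]))
  have n34 : p₄ ≠ p₃ := fun e => n23 (ginj (by rw [h3, h4, e]))
  -- states missing after `baab` and `baaab`
  have m0 : p₁ ∉ Finset.univ.image f := pmiss _
  have m1 := gmiss _ _ m0
  rw [ha1] at m1
  have m2 := gmiss _ _ m1
  rw [h3] at m2
  have m3 := gmiss _ _ m2
  rw [h4] at m3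
  have A1 := pmiss (((Finset.univ.image f).image g).image g)
  have A2 := fmiss _ _ m2 n13 n23
  have B1 := pmiss ((((Finset.univ.image f).image g).image g).image g)
  have B2 := fmiss _ _ m3 n14 n24
  have step2 : ∀ (R : Finset Q) y, p₁ ∉ R → y ∉ R → y ≠ p₁ → g (g y) ≠ p₁ → g (g y) ≠ p₂ →
      (((R.image g).image g).image f).card ≤ Fintype.card Q - 3 := by
    intro R y h1 hy hne e1 e2
    have q := gmiss _ _ (gmiss _ _ h1)
    rw [ha1, h3] at q
    refine final _ _ _ q (gmiss _ _ (gmiss _ _ hy)) ?_ n13 n23 e1 e2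
    intro e
    rw [← h3, ← ha1] at e
    exact hne (ginj (ginj e)).symm
  have step3 : ∀ (R : Finset Q) y, p₁ ∉ R → y ∉ R → y ≠ p₁ → g (g (g y)) ≠ p₁ →
      g (g (g y)) ≠ p₂ →
      ((((R.image g).image g).image g).image f).card ≤ Fintype.card Q - 3 := by
    intro R y h1 hy hne e1 e2
    have q := gmiss _ _ (gmiss _ _ (gmiss _ _ h1))
    rw [ha1, h3, h4] at q
    refine final _ _ _ q (gmiss _ _ (gmiss _ _ (gmiss _ _ hy))) ?_ n14 n24 e1 e2
    intro e
    rw [← h4, ← h3, ← ha1] at e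
    exact hne (ginj (ginj (ginj e))).symm
  -- if both continuations fail then `y a a = p₁`
  have bad : ∀ y, ¬ (g (g y) ≠ p₁ ∧ g (g y) ≠ p₂) →
      ¬ (g (g (g y)) ≠ p₁ ∧ g (g (g y)) ≠ p₂) → g (g y) = p₁ := by
    intro y c2 c3
    by_contra h
    have e : g (g y) = p₂ := by
      by_contra h'
      exact c2 ⟨h, h'⟩
    rw [e, h3] at c3
    exact c3 ⟨n13, n23⟩
  by_cases c2 : g (g (f p₃)) ≠ p₁ ∧ g (g (f p₃)) ≠ p₂
  · refine ⟨[b, a, a, b, a, a, b], by simp, ?_⟩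
    simp only [wordImage]
    exact step2 _ _ A1 A2 (fne _) c2.1 c2.2
  by_cases c3 : g (g (g (f p₃))) ≠ p₁ ∧ g (g (g (f p₃))) ≠ p₂
  · refine ⟨[b, a, a, b, a, a, a, b], by simp, ?_⟩
    simp only [wordImage]
    exact step3 _ _ A1 A2 (fne _) c3.1 c3.2
  have hy := bad _ c2 c3
  by_cases h5 : g p₄ = p₁
  · -- orbit of length four: `f p₃ = p₃`
    have e3 : f p₃ = p₃ := ginj (ginj (by rw [hy, h4, h5]))
    have ne : f p₄ ≠ p₃ := fun e => n34 (finj p₄ p₃ (by rw [e, e3]) n14 n24)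
    by_cases d2 : g (g (f p₄)) ≠ p₁ ∧ g (g (f p₄)) ≠ p₂
    · refine ⟨[b, a, a, a, b, a, a, b], by simp, ?_⟩
      simp only [wordImage]
      exact step2 _ _ B1 B2 (fne _) d2.1 d2.2
    by_cases d3 : g (g (g (f p₄))) ≠ p₁ ∧ g (g (g (f p₄))) ≠ p₂
    · refine ⟨[b, a, a, a, b, a, a, a, b], by simp, ?_⟩
      simp only [wordImage]
      exact step3 _ _ B1 B2 (fne _) d3.1 d3.2
    exact absurd (ginj (ginj (by rw [bad _ d2 d3, h4, h5]))) ne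
  · refine ⟨[b, a, a, b, a, a, a, a, b], by simp, ?_⟩
    simp only [wordImage]
    have q := gmiss _ _ (gmiss _ _ (gmiss _ _ (gmiss _ _ A1)))
    rw [ha1, h3, h4] at q
    have r := gmiss _ _ (gmiss _ _ (gmiss _ _ (gmiss _ _ A2)))
    rw [hy, ha1, h3] at r
    exact final _ _ _ q r (fun e => n24 (ginj (by rw [e, h3]))) h5
      (fun e => n14 (ginj (by rw [e, ha1]))) n13 n23
end

section
/- Let (Q, Σ) be a DFA with n = |Q| satisfying hypothesis (H). Let p₁, p₂, p₃ be pairwise distinct states, b, a, d ∈ Σ letters, and q ∈ Q∖{p₁, p₂} a state such that: Qb = Q∖{p₁}, p₁b = p₂b, Qa = Q, p₁a = p₂, p₂a = p₁, Qd = Q, p₁d = p₁, p₃d = p₂, p₂d ≠ p₃, qb ≠ p₁, Q(bad) = Q∖{q}, and Q(badb) = Q∖{p₁, qb}. Then there exists a word w over Σ with |w| ≤ 9 and |Qw| ≤ n − 3. -/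
theorem image_compl_pair {Q : Type*} [Fintype Q] [DecidableEq Q] (f : Q → Q)
    (hf : Function.Bijective f) (x y : Q) :
    (Finset.univ \ {x, y}).image f = Finset.univ \ {f x, f y} := by
  ext z
  obtain ⟨t, rfl⟩ := hf.2 z
  simp [hf.1.eq_iff]

theorem card_final {Q : Type*} [Fintype Q] [DecidableEq Q] (f : Q → Q) (p₁ p₂ x y : Q)
    (h : f p₁ = f p₂) (h12 : p₁ ≠ p₂) (hxy : x ≠ y) (hx1 : x ≠ p₁) (hx2 : x ≠ p₂)
    (hy1 : y ≠ p₁) (hy2 : y ≠ p₂) :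
    ((Finset.univ \ {x, y}).image f).card ≤ Fintype.card Q - 3 := by
  have hsub : (Finset.univ \ {x, y}).image f ⊆ (Finset.univ \ {x, y, p₁}).image f := by
    intro z hz
    simp only [Finset.mem_image, Finset.mem_sdiff, Finset.mem_univ, Finset.mem_insert,
      Finset.mem_singleton, true_and, not_or] at hz ⊢
    obtain ⟨t, ⟨h1, h2⟩, rfl⟩ := hz
    by_cases ht : t = p₁
    · exact ⟨p₂, ⟨hx2.symm, hy2.symm, h12.symm⟩, by rw [ht, h]⟩
    · exact ⟨t, ⟨h1, h2, ht⟩, rfl⟩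
  refine (Finset.card_le_card hsub).trans (Finset.card_image_le.trans ?_)
  rw [Finset.card_sdiff_of_subset (Finset.subset_univ _), Finset.card_univ,
    Finset.card_eq_three.mpr ⟨x, y, p₁, hxy, hx1, hy1, rfl⟩]

theorem stmt_17 {Q A : Type*} [Fintype Q] [DecidableEq Q] (act : A → Q → Q)
    (hH1 : ∃ w : List A, (wordImage act Finset.univ w).card ≤ Fintype.card Q - 2)
    (hH2 : ∀ w : List A, w.length ≤ 3 →
      Fintype.card Q - 2 < (wordImage act Finset.univ w).card)
    (p₁ p₂ p₃ : Q) (hp12 : p₁ ≠ p₂) (hp13 : p₁ ≠ p₃) (hp23 : p₂ ≠ p₃)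
    (b a d : A) (q : Q) (hq₁ : q ≠ p₁) (hq₂ : q ≠ p₂)
    (hb : Finset.univ.image (act b) = Finset.univ \ {p₁})
    (hb12 : act b p₁ = act b p₂)
    (ha : Finset.univ.image (act a) = Finset.univ)
    (ha1 : act a p₁ = p₂) (ha2 : act a p₂ = p₁)
    (hd : Finset.univ.image (act d) = Finset.univ)
    (hd1 : act d p₁ = p₁) (hd3 : act d p₃ = p₂) (hd2 : act d p₂ ≠ p₃)
    (hqb : act b q ≠ p₁)
    (hbad : wordImage act Finset.univ [b, a, d] = Finset.univ \ {q})
    (hbadb : wordImage act Finset.univ [b, a, d, b] = Finset.univ \ {p₁, act b q}) :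
    ∃ w : List A, w.length ≤ 9 ∧
      (wordImage act Finset.univ w).card ≤ Fintype.card Q - 3 := by
  have bij : ∀ c, Finset.univ.image (act c) = Finset.univ → Function.Bijective (act c) := by
    intro c hc
    have hs : Function.Surjective (act c) := by
      intro z
      have hz : z ∈ Finset.univ.image (act c) := by rw [hc]; exact Finset.mem_univ _
      simpa using hz
    exact Finite.surjective_iff_bijective.mp hs
  have bA := bij a ha
  have bD := bij d hd
  have eA : ∀ x y, act a x = act a y ↔ x = y := fun x y => bA.1.eq_iff
  have eD : ∀ x y, act d x = act d y ↔ x = y := fun x y => bD.1.eq_iff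
  have hq : act d p₂ = q := by
    have h1 : wordImage act Finset.univ [b, a, d] = Finset.univ \ {act d p₂} := by
      have e : (Finset.univ \ {p₁} : Finset Q) = Finset.univ \ {p₁, p₁} := by simp
      simp only [wordImage]
      rw [hb, e, image_compl_pair _ bA, image_compl_pair _ bD, ha1]
      simp
    rw [h1] at hbad
    have h2 : act d p₂ ∉ (Finset.univ \ {q} : Finset Q) := by rw [← hbad]; simp
    simpa using h2
  simp only [wordImage] at hbadb
  have hr1 := hqb
  generalize act b q = r at *
  have hqp3 : q ≠ p₃ := hq ▸ hd2
  have hqd1 : act d q ≠ p₁ := fun h => hq₁ ((eD _ _).1 (h.trans hd1.symm))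
  have hqd2 : act d q ≠ p₂ := fun h => hqp3 ((eD _ _).1 (h.trans hd3.symm))
  have hqdq : act d q ≠ q := fun h => hq₂ ((eD _ _).1 (h.trans hq.symm))
  -- from the missing pair `{p₁, x}`, the word `adb` succeeds generically
  have key : ∀ x, x ≠ p₁ → x ≠ p₂ → act a x ≠ p₃ →
      ((((Finset.univ \ {p₁, x}).image (act a)).image (act d)).image (act b)).card
        ≤ Fintype.card Q - 3 := by
    intro x h1 h2 h3
    rw [image_compl_pair _ bA, image_compl_pair _ bD, ha1, hq]
    refine card_final (act b) p₁ p₂ _ _ hb12 hp12 ?_ hq₁ hq₂ ?_ ?_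
    · intro h
      exact h1 ((eA _ _).1 (ha1.trans ((eD _ _).1 (hq.trans h)))).symm
    · intro h
      exact h2 ((eA _ _).1 (((eD _ _).1 (h.trans hd1.symm)).trans ha2.symm))
    · intro h
      exact h3 ((eD _ _).1 (h.trans hd3.symm))
  by_cases hr2 : r = p₂
  · subst hr2
    by_cases hqa : act a q = p₃
    · refine ⟨[b, a, d, b, d, d, a, d, b], by simp, ?_⟩
      simp only [wordImage]
      rw [hbadb, image_compl_pair _ bD, image_compl_pair _ bD, hd1, hd1, hq]
      exact key _ hqd1 hqd2 fun h => hqdq ((eA _ _).1 (h.trans hqa.symm))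
    · refine ⟨[b, a, d, b, d, a, d, b], by simp, ?_⟩
      simp only [wordImage]
      rw [hbadb, image_compl_pair _ bD, hd1, hq]
      exact key _ hq₁ hq₂ hqa
  · by_cases hra : act a r = p₃
    · refine ⟨[b, a, d, b, a, d, d, b], by simp, ?_⟩
      simp only [wordImage]
      rw [hbadb, image_compl_pair _ bA, image_compl_pair _ bD, image_compl_pair _ bD,
        ha1, hra, hd3, hq]
      exact card_final (act b) p₁ p₂ _ _ hb12 hp12 hqdq hqd1 hqd2 hq₁ hq₂
    · refine ⟨[b, a, d, b, a, d, b], by simp, ?_⟩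
      simp only [wordImage]
      rw [hbadb]
      exact key _ hr1 hr2 hra
end

section
/- Let (Q, Σ) be a DFA with n = |Q| satisfying hypothesis (H). Let p₁, p₂, p₃ be pairwise distinct states, b, a, d ∈ Σ letters, and q ∈ Q∖{p₁, p₂} a state such that: Qb = Q∖{p₁}, p₁b = p₂b, Qa = Q, p₁a = p₂, p₂a = p₁, Qd = Q, p₁d = p₁, p₃d = p₂, p₂d = p₃, p₃a ≠ p₃, qb ≠ p₁, Q(bad) = Q∖{q}, and Q(badb) = Q∖{p₁, qb}. Then there exists a word w over Σ with |w| ≤ 9 and |Qw| ≤ n − 3. -/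
theorem stmt_18 {Q A : Type*} [Fintype Q] [DecidableEq Q] (act : A → Q → Q)
    (hH1 : ∃ w : List A, (wordImage act Finset.univ w).card ≤ Fintype.card Q - 2)
    (hH2 : ∀ w : List A, w.length ≤ 3 →
      Fintype.card Q - 2 < (wordImage act Finset.univ w).card)
    (p₁ p₂ p₃ : Q) (hp12 : p₁ ≠ p₂) (hp13 : p₁ ≠ p₃) (hp23 : p₂ ≠ p₃)
    (b a d : A) (q : Q) (hq₁ : q ≠ p₁) (hq₂ : q ≠ p₂)
    (hb : Finset.univ.image (act b) = Finset.univ \ {p₁})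
    (hb12 : act b p₁ = act b p₂)
    (ha : Finset.univ.image (act a) = Finset.univ)
    (ha1 : act a p₁ = p₂) (ha2 : act a p₂ = p₁)
    (hd : Finset.univ.image (act d) = Finset.univ)
    (hd1 : act d p₁ = p₁) (hd3 : act d p₃ = p₂) (hd2 : act d p₂ = p₃)
    (ha3 : act a p₃ ≠ p₃)
    (hqb : act b q ≠ p₁)
    (hbad : wordImage act Finset.univ [b, a, d] = Finset.univ \ {q})
    (hbadb : wordImage act Finset.univ [b, a, d, b] = Finset.univ \ {p₁, act b q}) :
    ∃ w : List A, w.length ≤ 9 ∧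
      (wordImage act Finset.univ w).card ≤ Fintype.card Q - 3 := by
  classical
  have hai : Function.Injective (act a) := Finite.injective_iff_surjective.mpr (fun y => by
    have : y ∈ Finset.univ.image (act a) := by rw [ha]; exact Finset.mem_univ _
    simpa using this)
  have hdi : Function.Injective (act d) := Finite.injective_iff_surjective.mpr (fun y => by
    have : y ∈ Finset.univ.image (act d) := by rw [hd]; exact Finset.mem_univ _
    simpa using this)
  have hbn : ∀ x, act b x ≠ p₁ := by
    intro x hx
    have : act b x ∈ Finset.univ.image (act b) := Finset.mem_image_of_mem _ (Finset.mem_univ _)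
    rw [hb, hx] at this
    simp at this
  have hbi : ∀ x y, x ≠ p₁ → x ≠ p₂ → y ≠ x → act b y ≠ act b x := by
    intro x y h1 h2 hyx hxy
    have hsub : Finset.univ.image (act b) ⊆ (Finset.univ \ {p₁, x}).image (act b) := by
      intro z hz
      obtain ⟨t, -, rfl⟩ := Finset.mem_image.mp hz
      rw [Finset.mem_image]
      by_cases ht1 : t = p₁
      · exact ⟨p₂, by simp [hp12.symm, h2.symm], by rw [ht1, hb12]⟩
      by_cases htx : t = x
      · by_cases hy1 : y = p₁
        · exact ⟨p₂, by simp [hp12.symm, h2.symm], by rw [htx, ← hxy, hy1, hb12]⟩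
        · exact ⟨y, by simp [hy1, hyx], by rw [htx, hxy]⟩
      · exact ⟨t, by simp [ht1, htx], rfl⟩
    have h3 := (Finset.card_le_card hsub).trans Finset.card_image_le
    rw [hb, Finset.card_sdiff_of_subset (Finset.subset_univ _),
      Finset.card_sdiff_of_subset (Finset.subset_univ _), Finset.card_pair h1.symm,
      Finset.card_singleton, Finset.card_univ] at h3
    have h4 : 2 ≤ Fintype.card Q := by
      rw [← Finset.card_pair hp12, ← Finset.card_univ]
      exact Finset.card_le_card (Finset.subset_univ _)
    omega
  have sa : ∀ (R : Finset Q) u v, act a u = v → u ∉ R → v ∉ R.image (act a) := by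
    rintro R u v rfl hu h
    obtain ⟨t, ht, h⟩ := Finset.mem_image.mp h
    exact hu (hai h ▸ ht)
  have sd : ∀ (R : Finset Q) u v, act d u = v → u ∉ R → v ∉ R.image (act d) := by
    rintro R u v rfl hu h
    obtain ⟨t, ht, h⟩ := Finset.mem_image.mp h
    exact hu (hdi h ▸ ht)
  have sb1 : ∀ (R : Finset Q), p₁ ∉ R.image (act b) := by
    intro R h
    obtain ⟨t, ht, h⟩ := Finset.mem_image.mp h
    exact hbn t h
  have sb : ∀ (R : Finset Q) u v, u ≠ p₁ → u ≠ p₂ → act b u = v → u ∉ R →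
      v ∉ R.image (act b) := by
    rintro R u v h1 h2 rfl hu h
    obtain ⟨t, ht, h⟩ := Finset.mem_image.mp h
    exact hbi u t h1 h2 (fun e => hu (e ▸ ht)) h
  have fin : ∀ (R : Finset Q) u v, u ≠ v → u ≠ p₁ → u ≠ p₂ → v ≠ p₁ → v ≠ p₂ → u ∉ R → v ∉ R →
      (R.image (act b)).card ≤ Fintype.card Q - 3 := by
    intro R u v huv hu1 hu2 hv1 hv2 hu hv
    have hs : R.image (act b) ⊆ Finset.univ \ {p₁, act b u, act b v} := by
      intro z hz
      simp only [Finset.mem_sdiff, Finset.mem_univ, true_and, Finset.mem_insert,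
        Finset.mem_singleton, not_or]
      exact ⟨fun e => sb1 R (e ▸ hz), fun e => sb R u _ hu1 hu2 rfl hu (e ▸ hz),
        fun e => sb R v _ hv1 hv2 rfl hv (e ▸ hz)⟩
    have h := Finset.card_le_card hs
    rw [Finset.card_sdiff_of_subset (Finset.subset_univ _), Finset.card_univ,
      Finset.card_eq_three.mpr ⟨p₁, act b u, act b v, (hbn u).symm, (hbn v).symm,
        hbi v u hv1 hv2 huv, rfl⟩] at h
    exact h
  -- the fourth state
  obtain ⟨p₄, ha34⟩ : ∃ p₄, act a p₃ = p₄ := ⟨_, rfl⟩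
  have h43 : p₄ ≠ p₃ := ha34 ▸ ha3
  have h41 : p₄ ≠ p₁ := fun e => hp23.symm (hai (by rw [ha34, ha2, e]))
  have h42 : p₄ ≠ p₂ := fun e => hp13.symm (hai (by rw [ha34, ha1, e]))
  obtain ⟨r, hr⟩ : ∃ r, act b p₃ = r := ⟨_, rfl⟩
  have hr1 : r ≠ p₁ := hr ▸ hbn p₃
  -- after `b a d b` the states `p₁` and `r` are missing
  obtain ⟨R, hR⟩ : ∃ R, wordImage act Finset.univ [b, a, d, b] = R := ⟨_, rfl⟩
  have hR1 : p₁ ∉ R := hR ▸ sb1 _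
  have hRr : r ∉ R := hR ▸ sb _ p₃ r hp13.symm hp23.symm hr
    (sd _ p₂ _ hd2 (sa _ p₁ _ ha1 (sb1 _)))
  have key : ∀ w : List A, w.length ≤ 5 → (wordImage act R w).card ≤ Fintype.card Q - 3 →
      ∃ w : List A, w.length ≤ 9 ∧ (wordImage act Finset.univ w).card ≤ Fintype.card Q - 3 := by
    intro w hw h
    refine ⟨b :: a :: d :: b :: w, by simp only [List.length_cons]; omega, ?_⟩
    subst hR
    exact h
  have a1 : ∀ x, act a x = p₁ → x = p₂ := fun x h => hai (h.trans ha2.symm)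
  have a2 : ∀ x, act a x = p₂ → x = p₁ := fun x h => hai (h.trans ha1.symm)
  have a4 : ∀ x, act a x = p₄ → x = p₃ := fun x h => hai (h.trans ha34.symm)
  have d1 : ∀ x, act d x = p₁ → x = p₁ := fun x h => hdi (h.trans hd1.symm)
  have d2 : ∀ x, act d x = p₂ → x = p₃ := fun x h => hdi (h.trans hd3.symm)
  have d3 : ∀ x, act d x = p₃ → x = p₂ := fun x h => hdi (h.trans hd2.symm)
  have m_ad : ∀ S : Finset Q, p₁ ∉ S → p₃ ∉ (S.image (act a)).image (act d) := fun S h =>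
    sd _ p₂ _ hd2 (sa _ p₁ _ ha1 h)
  have tail_ad : ∀ (S : Finset Q) (x : Q), p₁ ∉ S → x ∉ S → x ≠ p₁ → x ≠ p₂ → act a x ≠ p₃ →
      (((S.image (act a)).image (act d)).image (act b)).card ≤ Fintype.card Q - 3 := by
    intro S x h1 hx hx1 hx2 hx3
    refine fin _ p₃ (act d (act a x)) ?_ hp13.symm hp23.symm ?_ ?_ (m_ad _ h1)
      (sd _ _ _ rfl (sa _ _ _ rfl hx))
    · exact fun e => hx1 (a2 _ (d3 _ e.symm))
    · exact fun e => hx2 (a1 _ (d1 _ e))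
    · exact fun e => hx3 (d2 _ e)
  by_cases hr2 : r = p₂
  · subst hr2
    refine key [a, d, a, d, b] (by simp) ?_
    refine fin _ p₃ (act d p₄) ?_ hp13.symm hp23.symm ?_ ?_
      (m_ad _ (sd _ p₁ _ hd1 (sa _ _ _ ha2 hRr)))
      (sd _ _ _ rfl (sa _ _ _ ha34 (m_ad _ hR1)))
    · exact fun e => h42 (d3 _ e.symm)
    · exact fun e => h41 (d1 _ e)
    · exact fun e => h43 (d2 _ e)
  by_cases hra : act a r = p₃
  swap
  · exact key [a, d, b] (by simp) (tail_ad R r hR1 hRr hr1 hr2 hra)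
  have hr3 : r ≠ p₃ := fun e => ha3 (e ▸ hra)
  by_cases hrd : act d r = r
  swap
  · refine key [d, a, d, b] (by simp) (tail_ad _ (act d r) (sd _ _ _ hd1 hR1)
      (sd _ _ _ rfl hRr) ?_ ?_ ?_)
    · exact fun e => hr1 (d1 _ e)
    · exact fun e => hr3 (d2 _ e)
    · exact fun e => hrd (hai (e.trans hra.symm))
  by_cases hr4 : r = p₄
  swap
  · refine key [a, a, a, d, b] (by simp) (tail_ad _ p₄ (sa _ _ _ ha2 (sa _ _ _ ha1 hR1))
      (sa _ _ _ ha34 (sa _ _ _ hra hRr)) h41 h42 ?_)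
    exact fun e => hr4 (hai (hra.trans e.symm))
  subst hr4
  obtain ⟨s, hs⟩ : ∃ s, act b r = s := ⟨_, rfl⟩
  have hs1 : s ≠ p₁ := hs ▸ hbn r
  have hs4 : s ≠ r := fun e => hbi r p₃ hr1 hr2 hr3.symm (by rw [hr, hs, e])
  have hT1 := sb1 R
  have hTs := sb R r s hr1 hr2 hs hRr
  by_cases hs2 : s = p₂
  · subst hs2
    exact key [b, d, a, d, b] (by simp) (tail_ad _ p₃ (sd _ _ _ hd1 hT1)
      (sd _ _ _ hd2 hTs) hp13.symm hp23.symm ha3)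
  · exact key [b, a, d, b] (by simp) (tail_ad _ s hT1 hTs hs1 hs2
      (fun e => hs4 (hai (e.trans hra.symm))))
end
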